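/- Let Γ = ℤ^4 ⋊ ℤ/4 where the generator of ℤ/4 acts on ℤ^4 by the matrix [[-1,0,0,0],[0,0,0,-1],[0,1,0,1],[0,0,-1,1]], and let G = ℤ/4, L = ℤ^4 with this action. Then H^4(Γ, ℤ) ≅ ℤ/4 ⊕ (ℤ/2)^3, while ⊕_{i+j=4} H^i(G, H^j(L, ℤ)) ≅ (ℤ/4)^2 ⊕ (ℤ/2)^2; in particular these two groups are not isomorphic. -/

import Mathlib

open Matrix

namespace Crystal

/-- The lattice `ℤ^n`, written multiplicatively so that it can be a factor of a semidirect
product of groups. -/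
abbrev Lat (n : ℕ) : Type := Multiplicative (Fin n → ℤ)

/-- The invertible integer matrix determined by `M` with `M ^ (m + 1) = 1`. -/
def matUnit {n : ℕ} (M : Matrix (Fin n) (Fin n) ℤ) (m : ℕ) (hm : M ^ (m + 1) = 1) :
    (Matrix (Fin n) (Fin n) ℤ)ˣ :=
  ⟨M, M ^ m, by rw [← pow_succ']; exact hm, by rw [← pow_succ]; exact hm⟩

/-- Linear automorphisms of `ℤ^n` as multiplicative automorphisms of the multiplicative
version of `ℤ^n`. -/
def linToAut (n : ℕ) : ((Fin n → ℤ) ≃ₗ[ℤ] (Fin n → ℤ)) →* MulAut (Lat n) :=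
  MonoidHom.mk' (fun e => AddEquiv.toMultiplicative e.toAddEquiv) (fun _ _ => rfl)

/-- An invertible integer matrix acts on the (multiplicative) lattice `ℤ^n` by (left)
matrix-vector multiplication. -/
def glToAut (n : ℕ) : (Matrix (Fin n) (Fin n) ℤ)ˣ →* MulAut (Lat n) :=
  (linToAut n).comp
    ((LinearMap.GeneralLinearGroup.generalLinearEquiv ℤ (Fin n → ℤ)).toMonoidHom.comp
      (Matrix.GeneralLinearGroup.toLin).toMonoidHom)

/-- The homomorphism from `ℤ/m` (written multiplicatively) to a group `G` sending the
generator `1` to a chosen element `α` satisfying `α ^ m = 1`. -/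
def zmodHom {G : Type*} [Group G] (m : ℕ) [NeZero m] (α : G) (hα : α ^ m = 1) :
    Multiplicative (ZMod m) →* G :=
  MonoidHom.mk' (fun g => α ^ (g.toAdd.val)) (by
    intro a b
    show α ^ (ZMod.val (a.toAdd + b.toAdd)) = α ^ (ZMod.val a.toAdd) * α ^ (ZMod.val b.toAdd)
    rw [ZMod.val_add, ← pow_eq_pow_mod _ hα, pow_add])

/-- The action of `ℤ/q` on the lattice `ℤ^n` in which the generator `1` of `ℤ/q` acts by left
multiplication by the integer matrix `M`; `M` is required to satisfy `M ^ q = 1`. -/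
def matAction {n : ℕ} (q : ℕ) [NeZero q] (M : Matrix (Fin n) (Fin n) ℤ)
    (hq : M ^ q = 1) : Multiplicative (ZMod q) →* MulAut (Lat n) :=
  zmodHom q (glToAut n (matUnit M (q - 1) (by
      rwa [Nat.sub_add_cancel (Nat.one_le_iff_ne_zero.2 (NeZero.ne q))])))
    (by
      rw [← map_pow]
      convert map_one (glToAut n)
      ext i j
      rw [Units.val_pow_eq_pow_val]
      simp [matUnit, hq])

/-- The crystallographic group `ℤ^n ⋊ ℤ/q` in which the generator `1` of `ℤ/q` acts on the
lattice `ℤ^n` by left multiplication by the integer matrix `M` (with `M ^ q = 1`). -/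
abbrev Crys {n : ℕ} (q : ℕ) [NeZero q] (M : Matrix (Fin n) (Fin n) ℤ) (hq : M ^ q = 1) : Type :=
  SemidirectProduct (Lat n) (Multiplicative (ZMod q)) (matAction q M hq)


open CategoryTheory groupCohomology

variable {k : Type} [CommRing k]

lemma comp_contractNth {G H : Type*} [Monoid G] [Monoid H] (f : G →* H) {n : ℕ}
    (j : Fin (n + 1)) (g : Fin (n + 1) → G) (i : Fin n) :
    f (Fin.contractNth j (· * ·) g i) = Fin.contractNth j (· * ·) (fun l => f (g l)) i := by
  rcases lt_trichotomy (i : ℕ) j with h | h | h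
  · rw [Fin.contractNth_apply_of_lt _ _ _ _ h, Fin.contractNth_apply_of_lt _ _ _ _ h]
  · rw [Fin.contractNth_apply_of_eq _ _ _ _ h, Fin.contractNth_apply_of_eq _ _ _ _ h,
      _root_.map_mul]
  · rw [Fin.contractNth_apply_of_gt _ _ _ _ h, Fin.contractNth_apply_of_gt _ _ _ _ h]

/-- The map of inhomogeneous cochain complexes induced (contravariantly in the group,
covariantly in the coefficients) by a group homomorphism `f : H →* G` together with a
compatible linear map `τ : A → B` of coefficients. -/
def cochainsMap {G H : Type} [Group G] [Group H] (A : Rep k G) (B : Rep k H)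
    (f : H →* G) (τ : A →ₗ[k] B)
    (hcomp : ∀ (h : H) (a : A), τ (A.ρ (f h) a) = B.ρ h (τ a)) :
    inhomogeneousCochains A ⟶ inhomogeneousCochains B where
  f n := ModuleCat.ofHom
    { toFun := fun F v => τ (F (fun i => f (v i)))
      map_add' := fun x y => by funext v; simp
      map_smul' := fun r x => by funext v; simp }
  comm' i j hij := by
    have hij' : i + 1 = j := hij
    subst hij'
    rw [inhomogeneousCochains.d_def, inhomogeneousCochains.d_def]
    ext F v
    show (inhomogeneousCochains.d B i).hom (fun w => τ (F (fun l => f (w l)))) v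
      = τ ((inhomogeneousCochains.d A i).hom F (fun l => f (v l)))
    simp only [inhomogeneousCochains.d_hom_apply, map_add, map_sum, _root_.map_smul]
    congr 1
    · exact (hcomp (v 0) _).symm
    · refine Finset.sum_congr rfl fun j' _ => ?_
      have hc : (fun l => f (j'.contractNth (· * ·) v l))
          = j'.contractNth (· * ·) (fun l => f (v l)) := by
        funext l
        exact comp_contractNth f j' v l
      rw [hc]

lemma cochainsMap_eq_id {G : Type} [Group G] (A : Rep k G) (f : G →* G) (τ : A →ₗ[k] A)
    (hcomp : ∀ (h : G) (a : A), τ (A.ρ (f h) a) = A.ρ h (τ a))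
    (hf : ∀ x, f x = x) (hτ : ∀ a, τ a = a) :
    cochainsMap A A f τ hcomp = 𝟙 _ := by
  apply HomologicalComplex.Hom.ext
  funext n
  ext F v
  show τ (F (fun i => f (v i))) = F v
  simp only [hf, hτ]

lemma cochainsMap_comp {G H K : Type} [Group G] [Group H] [Group K]
    (A : Rep k G) (B : Rep k H) (C : Rep k K)
    (f₁ : H →* G) (τ₁ : A →ₗ[k] B) (h₁ : ∀ (h : H) (a : A), τ₁ (A.ρ (f₁ h) a) = B.ρ h (τ₁ a))
    (f₂ : K →* H) (τ₂ : B →ₗ[k] C) (h₂ : ∀ (h : K) (a : B), τ₂ (B.ρ (f₂ h) a) = C.ρ h (τ₂ a))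
    (f₃ : K →* G) (τ₃ : A →ₗ[k] C) (h₃ : ∀ (h : K) (a : A), τ₃ (A.ρ (f₃ h) a) = C.ρ h (τ₃ a))
    (hf : ∀ x, f₁ (f₂ x) = f₃ x) (hτ : ∀ a, τ₂ (τ₁ a) = τ₃ a) :
    cochainsMap A B f₁ τ₁ h₁ ≫ cochainsMap B C f₂ τ₂ h₂ = cochainsMap A C f₃ τ₃ h₃ := by
  apply HomologicalComplex.Hom.ext
  funext n
  ext F v
  show τ₂ (τ₁ (F (fun i => f₁ (f₂ (v i))))) = τ₃ (F (fun i => f₃ (v i)))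
  simp only [hf]
  exact hτ _

/-- Given an action `φ` of a group `G` on a group `L` and a representation `ψ` of `G` on a
`k`-module `V`, this is `H^j(L, V)` (with `L` acting trivially on the coefficients `V`),
endowed with the `G`-action functorially induced by the action of `G` on `L` and on `V`:
`g` acts via the conjugation automorphism `φ g⁻¹` of `L` and via `ψ g` on `V`. -/
noncomputable def cohRep {G L V : Type} [Group G] [Group L] [AddCommGroup V] [Module k V]
    (φ : G →* MulAut L) (ψ : Representation k G V) (j : ℕ) : Rep k G :=
  Rep.of (X := groupCohomology (Rep.trivial k L V) j)
    { toFun := fun g => (HomologicalComplex.homologyMap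
        (cochainsMap (Rep.trivial k L V) (Rep.trivial k L V) (φ g⁻¹).toMonoidHom (ψ g)
          (fun _ _ => rfl)) j).hom
      map_one' := by
        have h := cochainsMap_eq_id (Rep.trivial k L V) (φ (1 : G)⁻¹).toMonoidHom (ψ 1)
          (fun _ _ => rfl) (fun x => by simp) (fun a => by simp)
        rw [h]
        exact congrArg ModuleCat.Hom.hom (HomologicalComplex.homologyMap_id _ j)
      map_mul' := fun g₁ g₂ => by
        have h := cochainsMap_comp (Rep.trivial k L V) (Rep.trivial k L V) (Rep.trivial k L V)
          (φ g₂⁻¹).toMonoidHom (ψ g₂) (fun _ _ => rfl)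
          (φ g₁⁻¹).toMonoidHom (ψ g₁) (fun _ _ => rfl)
          (φ (g₁ * g₂)⁻¹).toMonoidHom (ψ (g₁ * g₂)) (fun _ _ => rfl)
          (fun x => by simp [_root_.mul_inv_rev]) (fun a => by simp)
        rw [← h, HomologicalComplex.homologyMap_comp]
        rfl }


/-- `H^i(G, H^j(L, ℤ))`: the `i`-th cohomology of the cyclic group `ℤ/q` with coefficients in
the `j`-th cohomology of the lattice `ℤ^n` (with trivial `ℤ` coefficients), where the
`ℤ/q`-action on `H^j(ℤ^n, ℤ)` is the one functorially induced by the matrix action on the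
lattice. -/
noncomputable abbrev cohOfCoh {n : ℕ} (q : ℕ) [NeZero q] (M : Matrix (Fin n) (Fin n) ℤ)
    (hq : M ^ q = 1) (i j : ℕ) : ModuleCat ℤ :=
  groupCohomology
    (cohRep (matAction q M hq) (1 : Representation ℤ (Multiplicative (ZMod q)) ℤ) j) i

/-- `H^k(Γ, ℤ)` for `Γ = ℤ^n ⋊ ℤ/q`, with trivial coefficients `ℤ`. -/
noncomputable abbrev cohCrys {n : ℕ} (q : ℕ) [NeZero q] (M : Matrix (Fin n) (Fin n) ℤ)
    (hq : M ^ q = 1) (k : ℕ) : ModuleCat ℤ :=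
  groupCohomology (Rep.trivial ℤ (Crys q M hq) ℤ) k

end Crystal

/-- The holonomy matrix. -/
def holM : Matrix (Fin 4) (Fin 4) ℤ := !![-1, 0, 0, 0; 0, 0, 0, -1; 0, 1, 0, 1; 0, 0, -1, 1]

lemma holM_pow : holM ^ 4 = 1 := by decide

/-- `H^k(ℤ^4 ⋊ ℤ/4, ℤ)`, where the generator of `ℤ/4` acts on `ℤ^4` by left
multiplication by the matrix `holM`. -/
noncomputable abbrev H (k : ℕ) : ModuleCat ℤ := Crystal.cohCrys 4 holM holM_pow k

/-- `H^i(ℤ/4, H^j(ℤ^4, ℤ))`, with the functorially induced action on coefficients. -/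
noncomputable abbrev Hc (i j : ℕ) : ModuleCat ℤ := Crystal.cohOfCoh 4 holM holM_pow i j

/-!
The lattice of `Γ` embeds with index two into a lattice on which the generator acts by a quarter
turn of a plane, the identity on a line and a reflection of another line. Hence `Γ` is the kernel of
a sign character of `Γ' = ℤ^4 ⋊ ℤ/4` with this simpler action, and Shapiro's lemma turns `H^4(Γ, ℤ)`
into the cohomology of `Γ'` with coefficients in `ℤ × ℤ`, where group elements of sign `-1` exchange
the factors. For `Γ'` a free resolution of small rank is available: the Koszul complex of the
lattice admits a lift of the quarter turn whose fourth power is the identity, so it combines with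
the two-periodic resolution of `ℤ/4` to a double complex. In degree four its cohomology is read off
from explicit cocycles.

On the other side, `H^j(ℤ^n, ℤ)` is free of rank `n.choose j` by the Koszul complex. Alternating a
cocycle over the symmetric group gives a pairing with `j`-tuples of lattice vectors, under which
products of coordinate functions have determinants as values. This identifies the action of `ℤ/4` on
`H^j(ℤ^4, ℤ)` with a compound matrix, and the cohomology of a cyclic group with coefficients in a
lattice is a quotient of kernel by image of integer matrices. The two groups have orders 32 and 64.
-/

namespace CrystalCohomology

section MatrixComplexes

/-- A sequence of matrices `d n` over a ring `Λ`, read as the boundary maps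
`v ↦ v ᵥ* d n : Λ^(ι (n + 1)) → Λ^(ι n)` between free left `Λ`-modules. The condition `d ∘ d = 0` is
part of `Resolves`, so that complexes can be built by recursion without carrying proofs. -/
structure MatrixComplex (Λ : Type*) where
  ι : ℕ → Type
  [fintype : ∀ n, Fintype (ι n)]
  [decEq : ∀ n, DecidableEq (ι n)]
  d : ∀ n, Matrix (ι (n + 1)) (ι n) Λ

attribute [instance] MatrixComplex.fintype MatrixComplex.decEq

namespace MatrixComplex

variable {Λ : Type*} [Ring Λ]

/-- `C` is a free resolution of the left module `(Λ ⧸ I) ^ (C.ι 0)`. -/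
structure Resolves (C : MatrixComplex Λ) (I : Ideal Λ) : Prop where
  d_mul_d : ∀ n, C.d (n + 1) * C.d n = 0
  mem_iff : ∀ v : C.ι 0 → Λ, (∀ i, v i ∈ I) ↔ ∃ w, w ᵥ* C.d 0 = v
  exact : ∀ n (v : C.ι (n + 1) → Λ), v ᵥ* C.d n = 0 → ∃ w, w ᵥ* C.d (n + 1) = v

/-- The free module `Λ` placed in degree zero. -/
abbrev point (Λ : Type*) [Zero Λ] : MatrixComplex Λ where
  ι
    | 0 => Unit
    | _ + 1 => Empty
  fintype
    | 0 => inferInstanceAs (Fintype Unit)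
    | _ + 1 => inferInstanceAs (Fintype Empty)
  decEq
    | 0 => inferInstanceAs (DecidableEq Unit)
    | _ + 1 => inferInstanceAs (DecidableEq Empty)
  d _ := 0

lemma point_resolves : (point Λ).Resolves ⊥ where
  d_mul_d n := Matrix.zero_mul (M := (0 : Matrix ((point Λ).ι (n + 1)) ((point Λ).ι n) Λ))
  mem_iff v := by
    refine ⟨fun hv => ⟨0, ?_⟩, ?_⟩
    · exact funext fun i => by simpa [point] using (hv i).symm
    · rintro ⟨w, rfl⟩ i
      simp [point]
  exact n v _ := ⟨0, funext fun i => i.elim⟩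

/-- The index set of the mapping cone of an endomorphism of `C`. -/
abbrev coneι (C : MatrixComplex Λ) : ℕ → Type
  | 0 => C.ι 0
  | n + 1 => C.ι (n + 1) ⊕ C.ι n

instance coneFintype {C : MatrixComplex Λ} : ∀ n, Fintype (C.coneι n)
  | 0 => C.fintype 0
  | n + 1 => inferInstanceAs (Fintype (C.ι (n + 1) ⊕ C.ι n))

instance coneDecEq {C : MatrixComplex Λ} : ∀ n, DecidableEq (C.coneι n)
  | 0 => C.decEq 0
  | n + 1 => inferInstanceAs (DecidableEq (C.ι (n + 1) ⊕ C.ι n))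

/-- The boundary of the mapping cone of right multiplication by `y` on `C`. -/
def coneD (C : MatrixComplex Λ) (y : Λ) : ∀ n, Matrix (C.coneι (n + 1)) (C.coneι n) Λ
  | 0 => fromRows (C.d 0) (diagonal fun _ => y)
  | n + 1 => fromBlocks (C.d (n + 1)) 0 (diagonal fun _ => y) (-C.d n)

/-- The mapping cone of right multiplication by `y` on `C`. -/
abbrev cone (C : MatrixComplex Λ) (y : Λ) : MatrixComplex Λ where
  ι := C.coneι
  d := C.coneD y

lemma diagonal_mul_comm {m n : Type*} [Fintype m] [Fintype n] [DecidableEq m] [DecidableEq n]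
    {A : Matrix m n Λ} {y : Λ} (h : ∀ i j, Commute (A i j) y) :
    (diagonal (fun _ => y) : Matrix m m Λ) * A = A * (diagonal (fun _ => y) : Matrix n n Λ) := by
  ext i j
  rw [diagonal_mul, mul_diagonal, (h i j).eq]

lemma vecMul_diagonal_const {n : Type*} [Fintype n] [DecidableEq n] (v : n → Λ) (y : Λ) :
    v ᵥ* diagonal (fun _ => y) = fun i => v i * y :=
  funext fun i => vecMul_diagonal v (fun _ => y) i

/-- The second component of a cycle of a mapping cone can be removed when it is a boundary. -/
lemma exists_vecMul_fromBlocks_eq {c₀ c₁ c₂ e₀ e₁ : Type*} [Fintype c₁] [Fintype c₂]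
    [Fintype e₀] [Fintype e₁] {d₁ : Matrix c₁ c₀ Λ} {d₂ : Matrix c₂ c₁ Λ} {e : Matrix e₁ e₀ Λ}
    {f₀ : Matrix e₀ c₀ Λ} {f₁ : Matrix e₁ c₁ Λ}
    (hexact : ∀ v, v ᵥ* d₁ = 0 → ∃ w, w ᵥ* d₂ = v) (hf : e * f₀ = f₁ * d₁)
    {u : c₁ → Λ} {v : e₀ → Λ} (hv : ∃ b, b ᵥ* e = v) (huv : u ᵥ* d₁ + v ᵥ* f₀ = 0) :
    ∃ w, w ᵥ* fromBlocks d₂ 0 f₁ (-e) = Sum.elim u v := by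
  obtain ⟨b, rfl⟩ := hv
  obtain ⟨w, hw⟩ := hexact (u + b ᵥ* f₁) (by
    rw [add_vecMul, vecMul_vecMul, ← hf, ← vecMul_vecMul, huv])
  refine ⟨Sum.elim w (-b), (vecMul_fromBlocks _ _ _ _ _).trans ?_⟩
  simp [hw, neg_vecMul, vecMul_neg]

lemma sumElim_vecMul_fromRows_diagonal {m n : Type*} [Fintype m] [Fintype n] [DecidableEq n]
    (d : Matrix m n Λ) (y : Λ) (u : m → Λ) (v : n → Λ) :
    Sum.elim u v ᵥ* fromRows d (diagonal fun _ => y) = u ᵥ* d + fun i => v i * y := by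
  rw [sumElim_vecMul_fromRows, vecMul_diagonal_const]

lemma forall_mem_sup_span_singleton_iff {m n : Type*} [Fintype m] [Fintype n] [DecidableEq n]
    {d : Matrix m n Λ} {I : Ideal Λ} (hd : ∀ v : n → Λ, (∀ i, v i ∈ I) ↔ ∃ w, w ᵥ* d = v) (y : Λ)
    (v : n → Λ) : (∀ i, v i ∈ I ⊔ Ideal.span {y}) ↔
      ∃ w, w ᵥ* fromRows d (diagonal fun _ => y) = v := by
  simp only [Submodule.mem_sup, Ideal.mem_span_singleton']
  constructor
  · intro hv
    choose u hu z hz huv using hv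
    choose a ha using hz
    obtain ⟨w, rfl⟩ := (hd u).1 hu
    exact ⟨Sum.elim w a, by
      rw [sumElim_vecMul_fromRows_diagonal]; funext i; simp [ha, ← huv]⟩
  · rintro ⟨w, rfl⟩ i
    obtain ⟨w, a, rfl⟩ : ∃ u a, w = Sum.elim u a := ⟨_, _, (Sum.elim_comp_inl_inr w).symm⟩
    rw [sumElim_vecMul_fromRows_diagonal]
    exact ⟨_, (hd _).2 ⟨w, rfl⟩ i, _, ⟨a i, rfl⟩, rfl⟩

section Cone

variable {C : MatrixComplex Λ} {y : Λ}

lemma vecMul_cone_d_succ (n : ℕ) (v : C.ι (n + 2) → Λ) (w : C.ι (n + 1) → Λ) :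
    (Sum.elim v w : (C.cone y).ι (n + 2) → Λ) ᵥ* (C.cone y).d (n + 1) =
      Sum.elim (v ᵥ* C.d (n + 1) + fun i => w i * y) (-(w ᵥ* C.d n)) := by
  rw [← vecMul_diagonal_const]
  refine (vecMul_fromBlocks _ _ _ _ _).trans ?_
  simp [vecMul_neg]

lemma Resolves.cone_d_mul_d {I : Ideal Λ} (hC : C.Resolves I)
    (hy : ∀ n i j, Commute (C.d n i j) y) (n : ℕ) :
    (C.cone y).d (n + 1) * (C.cone y).d n = 0 := by
  cases n with
  | zero =>
    refine (fromBlocks_mul_fromRows _ _ _ _ _ _).trans ?_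
    rw [diagonal_mul_comm (hy 0)]
    ext (i | i) j <;> simp [hC.d_mul_d]
  | succ n =>
    refine (fromBlocks_multiply _ _ _ _ _ _ _ _).trans ?_
    rw [diagonal_mul_comm (hy (n + 1))]
    simp [hC.d_mul_d]

theorem Resolves.cone {I : Ideal Λ} (hC : C.Resolves I) (hy : ∀ n i j, Commute (C.d n i j) y)
    (hreg : ∀ a, a * y ∈ I → a ∈ I) : (C.cone y).Resolves (I ⊔ Ideal.span {y}) where
  d_mul_d := hC.cone_d_mul_d hy
  mem_iff := forall_mem_sup_span_singleton_iff hC.mem_iff y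
  exact n v hv := by
    obtain ⟨u, a, rfl⟩ : ∃ u a, v = Sum.elim u a := ⟨_, _, (Sum.elim_comp_inl_inr v).symm⟩
    refine exists_vecMul_fromBlocks_eq (hC.exact n) (diagonal_mul_comm (hy n)).symm ?_ ?_
    · cases n with
      | zero =>
        replace hv := (sumElim_vecMul_fromRows_diagonal _ _ _ _).symm.trans hv
        refine (hC.mem_iff a).1 fun i => hreg _ ?_
        have hu := (hC.mem_iff _).2 ⟨-u, rfl⟩ i
        rwa [neg_vecMul, ← eq_neg_of_add_eq_zero_right hv] at hu
      | succ n =>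
        rw [vecMul_cone_d_succ] at hv
        exact hC.exact n a (neg_eq_zero.1 (congrArg (· ∘ Sum.inr) hv))
    · rw [vecMul_diagonal_const]
      cases n with
      | zero => exact (sumElim_vecMul_fromRows_diagonal _ _ _ _).symm.trans hv
      | succ n =>
        rw [vecMul_cone_d_succ] at hv
        exact congrArg (· ∘ Sum.inl) hv

end Cone

/-- The Koszul complex of the right multiplications by a commuting sequence. -/
def koszul : ∀ {n : ℕ}, (Fin n → Λ) → MatrixComplex Λ
  | 0, _ => point Λ
  | _ + 1, y => (koszul (Fin.init y)).cone (y (Fin.last _))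

lemma cone_d_mem {C : MatrixComplex Λ} {y : Λ} {S : AddSubgroup Λ} (hC : ∀ n i j, C.d n i j ∈ S)
    (hy : y ∈ S) : ∀ n i j, (C.cone y).d n i j ∈ S := by
  have hdiag {m : Type} [DecidableEq m] (i j : m) : diagonal (fun _ => y) i j ∈ S := by
    rw [diagonal_apply]
    split_ifs
    exacts [hy, S.zero_mem]
  rintro (_ | n) i j
  · rcases i with i | i
    exacts [hC 0 i j, hdiag i j]
  · rcases i with i | i <;> rcases j with j | j
    exacts [hC _ i j, S.zero_mem, hdiag i j, S.neg_mem (hC _ i j)]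

lemma koszul_d_mem {S : AddSubgroup Λ} : ∀ {n : ℕ} {y : Fin n → Λ}, (∀ k, y k ∈ S) →
    ∀ m i j, (koszul y).d m i j ∈ S
  | 0, _, _ => fun _ _ _ => S.zero_mem
  | _ + 1, _, hy => cone_d_mem (koszul_d_mem fun k => hy k.castSucc) (hy _)

lemma commute_cone_d {C : MatrixComplex Λ} {y z : Λ} (hC : ∀ n i j, Commute (C.d n i j) z)
    (hy : Commute y z) (n : ℕ) (i : C.coneι (n + 1)) (j : C.coneι n) :
    Commute ((C.cone y).d n i j) z :=
  sub_eq_zero.1 <| cone_d_mem (S := (AddMonoidHom.mulRight z - AddMonoidHom.mulLeft z).ker)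
    (fun n i j => sub_eq_zero.2 (hC n i j)) (sub_eq_zero.2 hy) n i j

lemma commute_koszul_d {z : Λ} : ∀ {n : ℕ} {y : Fin n → Λ}, (∀ k, Commute (y k) z) →
    ∀ m i j, Commute ((koszul y).d m i j) z
  | 0, _, _ => fun _ _ _ => Commute.zero_left z
  | _ + 1, _, hy => commute_cone_d (commute_koszul_d fun k => hy k.castSucc) (hy _)

theorem koszul_resolves : ∀ {n : ℕ} {y : Fin n → Λ}, (∀ i j, Commute (y i) (y j)) →
    (∀ k a, a * y k ∈ Ideal.span (y '' Set.Iio k) → a ∈ Ideal.span (y '' Set.Iio k)) →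
    (koszul y).Resolves (Ideal.span (Set.range y))
  | 0, y, _, _ => by simpa [Set.range_eq_empty, koszul] using point_resolves (Λ := Λ)
  | n + 1, y, hcomm, hreg => by
    have hinit (k : Fin n) : Fin.init y '' Set.Iio k = y '' Set.Iio k.castSucc := by
      rw [← Fin.image_castSucc_Iio, Set.image_image]
      rfl
    have hlast : Set.range (Fin.init y) = y '' Set.Iio (Fin.last n) := by
      change Set.range (y ∘ Fin.castSucc) = _
      rw [Set.range_comp, Fin.range_castSucc]
      rfl
    have hspan : Ideal.span (Set.range y) =
        Ideal.span (Set.range (Fin.init y)) ⊔ Ideal.span {y (Fin.last n)} := by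
      rw [← Ideal.span_union, ← Fin.snoc_init_self y, Fin.range_snoc]
      simp
    rw [hspan]
    refine (koszul_resolves (y := Fin.init y) (fun i j => hcomm _ _) fun k a ha => ?_).cone
      (commute_koszul_d fun k => hcomm _ _) ?_
    · rw [hinit] at ha ⊢
      exact hreg _ a ha
    · rw [hlast]
      exact hreg (Fin.last n)

section Tot

/-- A pair of endomorphisms of `K` composing to zero in both orders; alternating them gives a double
complex with rows `K`, periodic in the other direction. -/
structure IsPeriodicPair (K : MatrixComplex Λ) (α β : ∀ n, Matrix (K.ι n) (K.ι n) Λ) : Prop where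
  left_comm : ∀ n, K.d n * α n = α (n + 1) * K.d n
  right_comm : ∀ n, K.d n * β n = β (n + 1) * K.d n
  left_mul_right : ∀ n, α n * β n = 0
  right_mul_left : ∀ n, β n * α n = 0

variable {K : MatrixComplex Λ} {α β : ∀ n, Matrix (K.ι n) (K.ι n) Λ}

lemma IsPeriodicPair.symm (h : K.IsPeriodicPair α β) : K.IsPeriodicPair β α :=
  ⟨h.right_comm, h.left_comm, h.right_mul_left, h.left_mul_right⟩

lemma mul_pow_eq_pow_mul {m n : Type*} [Fintype m] [Fintype n] [DecidableEq m] [DecidableEq n]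
    {A : Matrix m n Λ} {R : Matrix n n Λ} {S : Matrix m m Λ} (h : A * R = S * A) :
    ∀ i : ℕ, A * R ^ i = S ^ i * A
  | 0 => by simp only [pow_zero, Matrix.mul_one, Matrix.one_mul]
  | i + 1 => by
    rw [pow_succ, ← Matrix.mul_assoc, mul_pow_eq_pow_mul h i, Matrix.mul_assoc, h,
      ← Matrix.mul_assoc, ← pow_succ]

/-- An endomorphism whose `m`-th power is the identity yields the pair (`R - 1`, norm of `R`), as
for the standard resolution of a cyclic group. -/
lemma IsPeriodicPair.of_pow_eq_one {R : ∀ n, Matrix (K.ι n) (K.ι n) Λ} {m : ℕ}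
    (hR : ∀ n, K.d n * R n = R (n + 1) * K.d n) (hm : ∀ n, R n ^ m = 1) :
    K.IsPeriodicPair (fun n => R n - 1) (fun n => ∑ i ∈ Finset.range m, R n ^ i) where
  left_comm n := by
    rw [Matrix.mul_sub, Matrix.sub_mul, hR, Matrix.mul_one, Matrix.one_mul]
  right_comm n := by
    rw [Matrix.mul_sum, Matrix.sum_mul]
    exact Finset.sum_congr rfl fun i _ => mul_pow_eq_pow_mul (hR n) i
  left_mul_right n := by rw [mul_geom_sum, hm, sub_self]
  right_mul_left n := by rw [geom_sum_mul, hm, sub_self]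

variable (K) in
/-- The index set of the total complex of a double complex with rows `K`. -/
abbrev totι : ℕ → Type
  | 0 => K.ι 0
  | n + 1 => K.ι (n + 1) ⊕ totι n

instance totFintype : ∀ n, Fintype (K.totι n)
  | 0 => K.fintype 0
  | n + 1 => have := totFintype n; inferInstanceAs (Fintype (K.ι (n + 1) ⊕ K.totι n))

instance totDecEq : ∀ n, DecidableEq (K.totι n)
  | 0 => K.decEq 0
  | n + 1 => have := totDecEq n; inferInstanceAs (DecidableEq (K.ι (n + 1) ⊕ K.totι n))

/-- The component of the boundary of the total complex that leads from the second row to the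
first. -/
def totProj (α : ∀ n, Matrix (K.ι n) (K.ι n) Λ) : ∀ n, Matrix (K.totι n) (K.ι n) Λ
  | 0 => α 0
  | n + 1 => fromRows (α (n + 1)) 0

/-- The boundary of the total complex. Removing the first row exchanges `α` and `β`. -/
def totD : ∀ (_ _ : ∀ n, Matrix (K.ι n) (K.ι n) Λ) (n : ℕ), Matrix (K.totι (n + 1)) (K.totι n) Λ
  | α, _, 0 => fromRows (K.d 0) (totProj α 0)
  | α, β, n + 1 => fromBlocks (K.d (n + 1)) 0 (totProj α (n + 1)) (-totD β α n)

variable (K) in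
/-- The total complex of the double complex with rows `K` and columns alternating `α` and `β`. -/
abbrev tot (α β : ∀ n, Matrix (K.ι n) (K.ι n) Λ) : MatrixComplex Λ where
  ι := K.totι
  d := totD α β

lemma totProj_mul_right (h : K.IsPeriodicPair α β) (n : ℕ) : totProj β n * α n = 0 := by
  cases n with
  | zero => exact h.right_mul_left 0
  | succ n =>
    refine (fromRows_mul _ _ _).trans ?_
    rw [h.right_mul_left, Matrix.zero_mul, fromRows_zero]

lemma totD_mul_totProj (h : K.IsPeriodicPair α β) (n : ℕ) :
    totD β α n * totProj α n = totProj α (n + 1) * K.d n := by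
  have hrhs : totProj α (n + 1) * K.d n = fromRows (K.d n * α n) 0 := by
    refine (fromRows_mul _ _ _).trans ?_
    rw [h.left_comm, Matrix.zero_mul]
  rw [hrhs]
  cases n with
  | zero =>
    refine (fromRows_mul _ _ _).trans ?_
    rw [← h.right_mul_left 0]
    rfl
  | succ n =>
    refine (fromBlocks_mul_fromRows _ _ _ _ _ _).trans ?_
    rw [totProj_mul_right h, Matrix.mul_zero, Matrix.mul_zero, add_zero, add_zero]

lemma totD_mul_totD (hK : ∀ n, K.d (n + 1) * K.d n = 0) :
    ∀ {α β : ∀ n, Matrix (K.ι n) (K.ι n) Λ} (_ : K.IsPeriodicPair α β) (n : ℕ),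
      totD α β (n + 1) * totD α β n = 0
  | α, β, h, 0 => by
    refine (fromBlocks_mul_fromRows _ _ _ _ _ _).trans ?_
    rw [hK, Matrix.zero_mul, add_zero, Matrix.neg_mul, totD_mul_totProj h, add_neg_cancel,
      fromRows_zero]
  | α, β, h, n + 1 => by
    refine (fromBlocks_multiply _ _ _ _ _ _ _ _).trans ?_
    simp only [hK, Matrix.neg_mul, Matrix.mul_neg, totD_mul_totProj h, totD_mul_totD hK h.symm n,
      Matrix.zero_mul, Matrix.mul_zero, add_zero, add_neg_cancel, neg_neg, fromBlocks_zero]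

variable {I : Ideal Λ} {a : Λ}

lemma totD_zero_eq (hα : α 0 = diagonal fun _ => a) :
    totD α β 0 = fromRows (K.d 0) (diagonal fun _ => a) :=
  congrArg (fromRows (K.d 0)) hα

lemma vecMul_totD_succ (n : ℕ) (u : K.ι (n + 2) → Λ) (v : K.totι (n + 1) → Λ) :
    (Sum.elim u v : K.totι (n + 2) → Λ) ᵥ* totD α β (n + 1) =
      Sum.elim (u ᵥ* K.d (n + 1) + v ᵥ* totProj α (n + 1)) (-(v ᵥ* totD β α n)) := by
  refine (vecMul_fromBlocks _ _ _ _ _).trans ?_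
  simp [vecMul_neg]

lemma Resolves.tot_mem_iff (hK : K.Resolves I) (hα : α 0 = diagonal fun _ => a)
    (v : K.ι 0 → Λ) :
    (∀ i, v i ∈ I ⊔ Ideal.span {a}) ↔ ∃ w : K.totι 1 → Λ, w ᵥ* totD α β 0 = v := by
  rw [totD_zero_eq hα]
  exact forall_mem_sup_span_singleton_iff hK.mem_iff a v

lemma Resolves.tot_exact (hK : K.Resolves I) (n : ℕ) :
    ∀ {α β : ∀ n, Matrix (K.ι n) (K.ι n) Λ} {a b : Λ} (_ : K.IsPeriodicPair α β)
      (_ : α 0 = diagonal fun _ => a) (_ : β 0 = diagonal fun _ => b)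
      (_ : ∀ v, v * a ∈ I → v ∈ I ⊔ Ideal.span {b}) (_ : ∀ v, v * b ∈ I → v ∈ I ⊔ Ideal.span {a})
      (v : K.totι (n + 1) → Λ) (_ : v ᵥ* totD α β n = 0), ∃ w, w ᵥ* totD α β (n + 1) = v := by
  induction n with
  | zero =>
    intro α β a b h hα hβ ha _ v hv
    obtain ⟨u, v, rfl⟩ : ∃ u c, v = Sum.elim u c := ⟨_, _, (Sum.elim_comp_inl_inr v).symm⟩
    rw [totD_zero_eq hα, sumElim_vecMul_fromRows_diagonal] at hv
    refine exists_vecMul_fromBlocks_eq (hK.exact 0) (totD_mul_totProj h 0) ?_ ?_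
    · refine (hK.tot_mem_iff hβ v).1 fun i => ha _ ?_
      have hu := (hK.mem_iff _).2 ⟨-u, rfl⟩ i
      rwa [neg_vecMul, ← eq_neg_of_add_eq_zero_right hv] at hu
    · rwa [show totProj α 0 = diagonal fun _ => a from hα, vecMul_diagonal_const]
  | succ n ih =>
    intro α β a b h hα hβ ha hb v hv
    obtain ⟨u, v, rfl⟩ : ∃ u c, v = Sum.elim u c := ⟨_, _, (Sum.elim_comp_inl_inr v).symm⟩
    rw [vecMul_totD_succ] at hv
    exact exists_vecMul_fromBlocks_eq (hK.exact (n + 1)) (totD_mul_totProj h (n + 1))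
      (ih h.symm hβ hα hb ha v (neg_eq_zero.1 (congrArg (· ∘ Sum.inr) hv)))
      (congrArg (· ∘ Sum.inl) hv)

theorem Resolves.tot {b : Λ} (hK : K.Resolves I) (h : K.IsPeriodicPair α β)
    (hα : α 0 = diagonal fun _ => a) (hβ : β 0 = diagonal fun _ => b)
    (ha : ∀ v, v * a ∈ I → v ∈ I ⊔ Ideal.span {b}) (hb : ∀ v, v * b ∈ I → v ∈ I ⊔ Ideal.span {a}) :
    (K.tot α β).Resolves (I ⊔ Ideal.span {a}) where
  d_mul_d := totD_mul_totD hK.d_mul_d h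
  mem_iff := hK.tot_mem_iff (β := β) hα
  exact n := hK.tot_exact n h hα hβ ha hb

end Tot

section ConeEnd

variable {C : MatrixComplex Λ} {y : Λ}

variable (y) in
/-- The endomorphism of `C.cone y` acting as `R` on `C` and as `S` on the shifted copy of `C`. -/
abbrev coneEnd (R S : ∀ n, Matrix (C.ι n) (C.ι n) Λ) :
    ∀ n, Matrix ((C.cone y).ι n) ((C.cone y).ι n) Λ
  | 0 => R 0
  | n + 1 => fromBlocks (R (n + 1)) 0 0 (S n)

lemma cone_d_mul_coneEnd {R S : ∀ n, Matrix (C.ι n) (C.ι n) Λ}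
    (hR : ∀ n, C.d n * R n = R (n + 1) * C.d n) (hS : ∀ n, C.d n * S n = S (n + 1) * C.d n)
    (hRS : ∀ n, diagonal (fun _ => y) * R n = S n * diagonal (fun _ => y)) (n : ℕ) :
    (C.cone y).d n * coneEnd y R S n = coneEnd y R S (n + 1) * (C.cone y).d n := by
  cases n with
  | zero =>
    refine (fromRows_mul _ _ _).trans (.trans ?_ (fromBlocks_mul_fromRows _ _ _ _ _ _).symm)
    simp only [hR, hRS, Matrix.zero_mul, add_zero, zero_add]
  | succ n =>
    refine (fromBlocks_multiply _ _ _ _ _ _ _ _).trans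
      (.trans ?_ (fromBlocks_multiply _ _ _ _ _ _ _ _).symm)
    simp only [hR, hS, hRS, Matrix.mul_zero, Matrix.zero_mul, add_zero, zero_add, Matrix.neg_mul,
      Matrix.mul_neg, neg_zero]

lemma coneEnd_pow_eq_one {R S : ∀ n, Matrix (C.ι n) (C.ι n) Λ} {m : ℕ} (hR : ∀ n, R n ^ m = 1)
    (hS : ∀ n, S n ^ m = 1) (n : ℕ) : coneEnd y R S n ^ m = 1 := by
  cases n with
  | zero => exact hR 0
  | succ n =>
    refine (fromBlocks_diagonal_pow _ _ _).trans ?_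
    rw [hR, hS, fromBlocks_one]

end ConeEnd

end MatrixComplex
end MatrixComplexes

section RelativeAugmentationIdeal

open MonoidAlgebra

variable {k G : Type*} [Ring k] [Group G] {s : Set G}

variable (k) in
/-- The left ideal of the group ring generated by the elements `g - 1` for `g ∈ s`; the quotient
by it is the permutation module on the cosets of the subgroup generated by `s`. -/
noncomputable def augIdeal (s : Set G) : Ideal (MonoidAlgebra k G) :=
  Ideal.span ((fun g => MonoidAlgebra.of k G g - 1) '' s)

lemma augIdeal_insert (g : G) (s : Set G) :
    augIdeal k (insert g s) = augIdeal k s ⊔ Ideal.span {MonoidAlgebra.of k G g - 1} := by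
  rw [augIdeal, Set.image_insert_eq, Ideal.span_insert, sup_comm]
  rfl

lemma of_sub_one_mem_augIdeal {g : G} (hg : g ∈ Subgroup.closure s) :
    MonoidAlgebra.of k G g - 1 ∈ augIdeal k s := by
  induction hg using Subgroup.closure_induction with
  | mem g hg => exact Ideal.subset_span ⟨g, hg, rfl⟩
  | one => simp only [map_one, sub_self, zero_mem]
  | mul g h _ _ hg hh =>
    have : MonoidAlgebra.of k G (g * h) - 1 =
        MonoidAlgebra.of k G g * (MonoidAlgebra.of k G h - 1) + (MonoidAlgebra.of k G g - 1) := by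
      rw [map_mul]; noncomm_ring
    exact this ▸ add_mem (Ideal.mul_mem_left _ _ hh) hg
  | inv g _ hg =>
    have : MonoidAlgebra.of k G g⁻¹ - 1 =
        -MonoidAlgebra.of k G g⁻¹ * (MonoidAlgebra.of k G g - 1) := by
      rw [neg_mul, mul_sub, ← map_mul, inv_mul_cancel, map_one]; noncomm_ring
    exact this ▸ Ideal.mul_mem_left _ _ hg

lemma single_sub_single_mem_augIdeal {g h : G} (hgh : g⁻¹ * h ∈ Subgroup.closure s) (c : k) :
    single h c - single g c ∈ augIdeal k s := by
  have : single h c - single g c = single g c * (MonoidAlgebra.of k G (g⁻¹ * h) - 1) := by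
    simp [mul_sub, single_mul_single]
  exact this ▸ Ideal.mul_mem_left _ _ (of_sub_one_mem_augIdeal hgh)

lemma mapDomain_sub {X : Type*} (f : G → X) (u v : MonoidAlgebra k G) :
    mapDomain f (u - v) = mapDomain f u - mapDomain f v := by
  rw [eq_sub_iff_add_eq, ← mapDomain_add, sub_add_cancel]

theorem mem_augIdeal_iff {X : Type*} {f : G → X}
    (hf : ∀ g h, f g = f h ↔ g⁻¹ * h ∈ Subgroup.closure s) {v : MonoidAlgebra k G} :
    v ∈ augIdeal k s ↔ mapDomain f v = 0 := by
  constructor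
  · intro hv
    induction hv using Submodule.closure_induction with
    | zero => exact mapDomain_zero f
    | add u v _ _ hu hv => rw [mapDomain_add, hu, hv, add_zero]
    | smul_mem a v hv =>
      obtain ⟨n, hn, rfl⟩ := hv
      have hfn (g : G) : f (g * n) = f g :=
        ((hf g (g * n)).2 (by simpa using Subgroup.subset_closure hn)).symm
      induction a using MonoidAlgebra.induction_linear with
      | zero => rw [zero_smul, mapDomain_zero]
      | add a b ha hb => rw [add_smul, mapDomain_add, ha, hb, add_zero]
      | single g c =>
        simp [mul_sub, single_mul_single, mapDomain_sub, hfn]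
  · intro hv
    let σ : X → G := Function.invFun f
    have hσ (g : G) : f (σ (f g)) = f g := Function.invFun_eq ⟨g, rfl⟩
    have hsub : v - mapDomain (σ ∘ f) v ∈ augIdeal k s := by
      clear hv
      induction v using MonoidAlgebra.induction_linear with
      | zero => simp
      | add u v hu hv =>
        rw [mapDomain_add, add_sub_add_comm]
        exact add_mem hu hv
      | single g c =>
        rw [mapDomain_single]
        exact single_sub_single_mem_augIdeal ((hf _ _).1 (hσ g)) c
    have hcomp : mapDomain (σ ∘ f) v = mapDomain σ (mapDomain f v) :=
      coeff_injective Finsupp.mapDomain_comp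
    rwa [hcomp, hv, mapDomain_zero, sub_zero] at hsub

lemma eq_zero_of_mapDomain_eq_self {X : Type*} {σ : X → X} (hσ : σ.Injective)
    (hper : ∀ x (n : ℕ), σ^[n] x = x → n = 0) {v : X →₀ k} (hv : v.mapDomain σ = v) : v = 0 := by
  have hinv (x : X) (n : ℕ) : v (σ^[n] x) = v x := by
    induction n with
    | zero => rfl
    | succ n ih =>
      rw [Function.iterate_succ_apply', ← ih]
      conv_lhs => rw [← hv]
      exact Finsupp.mapDomain_apply hσ _ _
  by_contra hne
  obtain ⟨x, hx⟩ := Finsupp.support_nonempty_iff.2 hne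
  refine Set.infinite_of_injective_forall_mem (f := fun n : ℕ => σ^[n] x) (fun m n hmn => ?_)
    (fun n => ?_) v.support.finite_toSet
  · have h₁ := hper x _ (Function.iterate_cancel hσ hmn)
    have h₂ := hper x _ (Function.iterate_cancel hσ hmn.symm)
    lia
  · simpa [hinv] using hx

lemma mapDomain_mul_of {X : Type*} {f : G → X} {σ : X → X} {x : G} (hσ : ∀ g, f (g * x) = σ (f g))
    (v : MonoidAlgebra k G) :
    mapDomain f (v * MonoidAlgebra.of k G x) = mapDomain σ (mapDomain f v) := by
  induction v using MonoidAlgebra.induction_linear with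
  | zero => simp
  | add u v hu hv => rw [add_mul, mapDomain_add, mapDomain_add, mapDomain_add, hu, hv]
  | single g c => simp [hσ]

/-- A nonzero finitely supported function on cosets is not invariant under an element acting with
infinite orbits. -/
lemma mem_augIdeal_of_mul_of_sub_one_mem {x : G}
    (hnorm : x ∈ Subgroup.normalizer (Subgroup.closure s : Set G))
    (hx : ∀ n : ℕ, x ^ n ∈ Subgroup.closure s → n = 0) {v : MonoidAlgebra k G}
    (hv : v * (MonoidAlgebra.of k G x - 1) ∈ augIdeal k s) : v ∈ augIdeal k s := by
  let N := Subgroup.closure s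
  have hmk (g h : G) : (g : G ⧸ N) = h ↔ g⁻¹ * h ∈ N := QuotientGroup.eq
  have hconj (g h : G) : (g * x)⁻¹ * (h * x) ∈ N ↔ g⁻¹ * h ∈ N := by
    rw [show (g * x)⁻¹ * (h * x) = x⁻¹ * (g⁻¹ * h) * x by group]
    exact (Subgroup.mem_normalizer_iff''.1 hnorm _).symm
  let σ : G ⧸ N → G ⧸ N := Quotient.map' (· * x) fun g h hgh =>
    QuotientGroup.leftRel_apply.2 ((hconj g h).2 (QuotientGroup.leftRel_apply.1 hgh))
  have hσ : σ.Injective := by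
    rintro ⟨g⟩ ⟨h⟩ hgh
    exact (hmk g h).2 ((hconj g h).1 ((hmk _ _).1 hgh))
  have hiter (g : G) (n : ℕ) : σ^[n] g = ((g * x ^ n : G) : G ⧸ N) := by
    induction n with
    | zero => simp
    | succ n ih => rw [Function.iterate_succ_apply', ih, pow_succ, ← mul_assoc]; rfl
  rw [mem_augIdeal_iff hmk, mul_sub, mul_one, mapDomain_sub, mapDomain_mul_of (σ := σ) fun _ => rfl,
    sub_eq_zero] at hv
  rw [mem_augIdeal_iff hmk, ← coeff_inj]
  refine eq_zero_of_mapDomain_eq_self hσ ?_ (congrArg coeff hv)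
  rintro ⟨g⟩ n hn
  exact hx n (by simpa using (hmk _ _).1 ((hiter g n).symm.trans hn).symm)

section FiniteCyclicQuotient

variable {Q : Type*} [Group Q]

lemma mem_sup_span_singleton_of_map {Λ Λ' : Type*} [Ring Λ] [Ring Λ'] {φ : Λ →+* Λ'}
    (hφ : Function.Surjective φ) {I : Ideal Λ} (hI : ∀ v, v ∈ I ↔ φ v = 0) {a b : Λ}
    (hab : ∀ w, w * φ a = 0 → ∃ c, c * φ b = w) {v : Λ} (hv : v * a ∈ I) :
    v ∈ I ⊔ Ideal.span {b} := by
  obtain ⟨c, hc⟩ := hab (φ v) (by rw [← map_mul, ← hI]; exact hv)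
  obtain ⟨c, rfl⟩ := hφ c
  refine Submodule.mem_sup.2 ⟨v - c * b, ?_, c * b, Ideal.mem_span_singleton'.2 ⟨c, rfl⟩,
    sub_add_cancel _ _⟩
  rw [hI, map_sub, map_mul, hc, sub_self]

variable {f : G →* Q}

lemma mapDomainRingHom_surjective (hf : Function.Surjective f) :
    Function.Surjective (mapDomainRingHom k f) := fun w => by
  obtain ⟨v, hv⟩ := Finsupp.mapDomain_surjective hf w.coeff
  exact ⟨ofCoeff v, coeff_injective hv⟩

lemma mem_augIdeal_iff_mapDomainRingHom (hker : f.ker = Subgroup.closure s)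
    (v : MonoidAlgebra k G) :
    v ∈ augIdeal k s ↔ mapDomainRingHom k f v = 0 :=
  mem_augIdeal_iff fun g h => by rw [← hker, MonoidHom.mem_ker, map_mul, map_inv, inv_mul_eq_one]

variable {r : Q} {ρ : G}

lemma sum_range_orderOf_of_pow [Fintype Q] (hr : ∀ q, q ∈ Subgroup.zpowers r) :
    ∑ i ∈ Finset.range (orderOf r), MonoidAlgebra.of k Q r ^ i = ∑ q, MonoidAlgebra.of k Q q := by
  classical
  rw [← IsCyclic.image_range_orderOf hr, Finset.sum_image]
  · simp only [map_pow]
  · exact fun i hi j hj hij => pow_injOn_Iio_orderOf (by simpa using hi) (by simpa using hj) hij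

lemma exists_eq_mul_sum_of [Fintype Q] {w : MonoidAlgebra k Q} (hr : ∀ q, q ∈ Subgroup.zpowers r)
    (hw : w * (MonoidAlgebra.of k Q r - 1) = 0) : ∃ c, c * ∑ q, MonoidAlgebra.of k Q q = w := by
  have hconst (q : Q) : w.coeff q = w.coeff 1 := by
    obtain ⟨n, rfl⟩ := (mem_powers_iff_mem_zpowers.2 (hr q))
    induction n with
    | zero => simp
    | succ n ih =>
      rw [← ih]
      rw [mul_sub, mul_one, sub_eq_zero] at hw
      conv_lhs => rw [← hw]
      simp [pow_succ]
  refine ⟨single 1 (w.coeff 1), coeff_injective (Finsupp.ext fun q => ?_)⟩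
  classical
  simp [Finset.mul_sum, hconst q, Finsupp.single_apply]

lemma coeff_mul_sum_of [Fintype Q] (w : MonoidAlgebra k Q) (q : Q) :
    (w * ∑ q, MonoidAlgebra.of k Q q).coeff q = (mapDomain (fun _ => ()) w).coeff () := by
  classical
  induction w using MonoidAlgebra.induction_linear with
  | zero => simp
  | add u v hu hv => rw [add_mul, mapDomain_add, coeff_add, coeff_add, Finsupp.add_apply,
      Finsupp.add_apply, hu, hv]
  | single g c => simp [Finset.mul_sum, Finsupp.single_apply, ← eq_inv_mul_iff_mul_eq]

lemma exists_eq_mul_of_sub_one [Fintype Q] {w : MonoidAlgebra k Q}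
    (hr : ∀ q, q ∈ Subgroup.zpowers r) (hw : w * ∑ q, MonoidAlgebra.of k Q q = 0) :
    ∃ c, c * (MonoidAlgebra.of k Q r - 1) = w := by
  have hmem : w ∈ augIdeal k {r} := by
    refine (mem_augIdeal_iff (f := fun _ => ()) fun g h => ?_).2
      (coeff_injective (Finsupp.ext fun _ => ?_))
    · simpa [← Subgroup.zpowers_eq_closure] using hr _
    · rw [← coeff_mul_sum_of w 1, hw]
      simp
  rwa [augIdeal, Set.image_singleton, Ideal.mem_span_singleton'] at hmem

lemma map_sum_range_of_pow [Fintype Q] (hρ : ∀ q, q ∈ Subgroup.zpowers (f ρ)) :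
    mapDomainRingHom k f (∑ i ∈ Finset.range (orderOf (f ρ)), MonoidAlgebra.of k G ρ ^ i) =
      ∑ q, MonoidAlgebra.of k Q q := by
  rw [← sum_range_orderOf_of_pow hρ]
  simp

theorem mem_augIdeal_sup_span_sum [Finite Q] (hf : Function.Surjective f)
    (hker : f.ker = Subgroup.closure s) (hρ : ∀ q, q ∈ Subgroup.zpowers (f ρ))
    {v : MonoidAlgebra k G}
    (hv : v * (MonoidAlgebra.of k G ρ - 1) ∈ augIdeal k s) :
    v ∈ augIdeal k s ⊔
      Ideal.span {∑ i ∈ Finset.range (orderOf (f ρ)), MonoidAlgebra.of k G ρ ^ i} := by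
  cases nonempty_fintype Q
  refine mem_sup_span_singleton_of_map (mapDomainRingHom_surjective hf)
    (mem_augIdeal_iff_mapDomainRingHom hker) (fun w hw => ?_) hv
  rw [map_sum_range_of_pow hρ]
  exact exists_eq_mul_sum_of hρ (by simpa [mapDomain_sub] using hw)

theorem mem_augIdeal_sup_span_of_sub_one [Finite Q] (hf : Function.Surjective f)
    (hker : f.ker = Subgroup.closure s) (hρ : ∀ q, q ∈ Subgroup.zpowers (f ρ))
    {v : MonoidAlgebra k G}
    (hv : v * ∑ i ∈ Finset.range (orderOf (f ρ)), MonoidAlgebra.of k G ρ ^ i ∈ augIdeal k s) :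
    v ∈ augIdeal k s ⊔ Ideal.span {MonoidAlgebra.of k G ρ - 1} := by
  cases nonempty_fintype Q
  refine mem_sup_span_singleton_of_map (mapDomainRingHom_surjective hf)
    (mem_augIdeal_iff_mapDomainRingHom hker) (fun w hw => ?_) hv
  rw [map_sum_range_of_pow hρ] at hw
  simpa [mapDomain_sub] using exists_eq_mul_of_sub_one hρ hw

end FiniteCyclicQuotient

end RelativeAugmentationIdeal

section CohomologyFromResolution

open CategoryTheory MonoidAlgebra

variable {k G : Type} [CommRing k] [Group G]

section FreeRep

variable {ι κ : Type} {A B : Rep.{0} k G}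

variable (k G ι) in
/-- The representation `k[G]^ι`, free when `ι` is finite. -/
noncomputable abbrev freeRep : Rep.{0} k G :=
  Rep.of (Representation.ofModule' (k := k) (G := G) (ι → MonoidAlgebra k G))

lemma ofModule'_apply (g : G) (v : ι → MonoidAlgebra k G) :
    Representation.ofModule' (k := k) (ι → MonoidAlgebra k G) g v =
      MonoidAlgebra.of k G g • v := rfl

lemma freeRep_hom_ext {f g : freeRep k G ι ⟶ A}
    (h : ∀ v : ι → MonoidAlgebra k G, f.hom v = g.hom v) : f = g :=
  Rep.hom_ext (Representation.IntertwiningMap.ext (LinearMap.ext h))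

lemma hom_asAlgebraHom (f : A ⟶ B) (x : MonoidAlgebra k G) (a : A) :
    f.hom (A.ρ.asAlgebraHom x a) = B.ρ.asAlgebraHom x (f.hom a) := by
  induction x using MonoidAlgebra.induction_linear with
  | zero => simp
  | add x y hx hy => simp only [map_add, LinearMap.add_apply, hx, hy]
  | single g c => simp [Rep.hom_comm_apply f]

lemma freeRep_asAlgebraHom (x : MonoidAlgebra k G) (v : ι → MonoidAlgebra k G) :
    (freeRep k G ι).ρ.asAlgebraHom x v = x • v := by
  induction x using MonoidAlgebra.induction_linear with
  | zero => simp
  | add x y hx hy => simp only [map_add, LinearMap.add_apply, hx, hy, add_smul]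
  | single g c =>
    rw [Representation.asAlgebraHom_single, LinearMap.smul_apply, ofModule'_apply, ← smul_assoc]
    simp

variable [Fintype ι]

variable (A) in
/-- The morphism `k[G]^ι ⟶ A` that sends the basis vectors to the vectors `a i`. -/
noncomputable def freeLift (a : ι → A) : freeRep k G ι ⟶ A :=
  Rep.ofHom ⟨∑ i, (LinearMap.applyₗ (a i) ∘ₗ A.ρ.asAlgebraHom.toLinearMap) ∘ₗ LinearMap.proj i,
    fun g => LinearMap.ext fun v => by
      simp [ofModule'_apply]⟩

lemma freeLift_apply (a : ι → A) (v : ι → MonoidAlgebra k G) :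
    (freeLift A a).hom v = ∑ i, A.ρ.asAlgebraHom (v i) (a i) := by
  simp [freeLift]

lemma freeLift_hom_single [DecidableEq ι] (f : freeRep k G ι ⟶ A) :
    freeLift A (fun i => f.hom (Pi.single i 1 : ι → MonoidAlgebra k G)) = f := by
  refine freeRep_hom_ext fun v => ?_
  have hv : v = ∑ i, v i • (Pi.single i 1 : ι → MonoidAlgebra k G) := by
    ext j : 1
    simp [Finset.sum_apply, Pi.single_apply]
  rw [freeLift_apply]
  conv_rhs => rw [hv, map_sum]
  exact Finset.sum_congr rfl fun i _ => by rw [← freeRep_asAlgebraHom, hom_asAlgebraHom]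

variable (A ι) in
/-- Morphisms out of `k[G]^ι` are families of vectors. -/
noncomputable def freeLiftEquiv [DecidableEq ι] : (ι → A) ≃+ (freeRep k G ι ⟶ A) where
  toFun := freeLift A
  invFun f i := f.hom (Pi.single i 1 : ι → MonoidAlgebra k G)
  left_inv a := by
    ext i
    refine (freeLift_apply a _).trans ?_
    rw [Finset.sum_eq_single i] <;> simp +contextual
  right_inv := freeLift_hom_single
  map_add' a b := freeRep_hom_ext fun v => by
    change _ = (freeLift A a).hom v + (freeLift A b).hom v
    rw [freeLift_apply, freeLift_apply, freeLift_apply, ← Finset.sum_add_distrib]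
    simp only [Pi.add_apply, map_add]

instance freeRep_projective {ι : Type} [Finite ι] : Projective (freeRep k G ι) where
  factors {A B} f p hp := by
    classical
    cases nonempty_fintype ι
    choose a ha using fun i => (Rep.epi_iff_surjective p).1 hp
      (f.hom (Pi.single i 1 : ι → MonoidAlgebra k G))
    refine ⟨freeLift A a, ?_⟩
    rw [← freeLift_hom_single f]
    refine freeRep_hom_ext fun v => ?_
    change p.hom ((freeLift A a).hom v) = _
    rw [freeLift_apply, freeLift_apply, map_sum]
    simp only [hom_asAlgebraHom, ha]

/-- Right multiplication by a matrix, as a morphism of free representations. -/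
noncomputable def vecMulHom (D : Matrix ι κ (MonoidAlgebra k G)) : freeRep k G ι ⟶ freeRep k G κ :=
  Rep.ofHom ⟨D.vecMulLinear.restrictScalars k, fun g => by
    refine LinearMap.ext fun v => ?_
    exact Matrix.smul_vecMul (MonoidAlgebra.of k G g) v D⟩

variable (A) in
/-- The map on families of vectors of `A` dual to `vecMulHom D`. -/
noncomputable def matrixAct [Fintype κ] (D : Matrix ι κ (MonoidAlgebra k G)) :
    (κ → A) →+ (ι → A) where
  toFun a i := ∑ j, A.ρ.asAlgebraHom (D i j) (a j)
  map_zero' := by ext; simp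
  map_add' a b := by ext; simp [Finset.sum_add_distrib]

lemma freeLift_matrixAct [Fintype κ] (D : Matrix ι κ (MonoidAlgebra k G)) (a : κ → A) :
    freeLift A (matrixAct A D a) = vecMulHom D ≫ freeLift A a := by
  refine freeRep_hom_ext fun v => ?_
  have hcomp : (vecMulHom D ≫ freeLift A a).hom v = (freeLift A a).hom (v ᵥ* D) := rfl
  rw [hcomp, freeLift_apply, freeLift_apply]
  simp only [matrixAct, AddMonoidHom.coe_mk, ZeroHom.coe_mk, vecMul, dotProduct, map_sum, map_mul,
    LinearMap.sum_apply, Module.End.mul_apply]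
  exact Finset.sum_comm

end FreeRep

/-- `Φ` restricted to the zeros of `g` is surjective and vanishes exactly on the image of `f`; for
homomorphisms `f` and `g`, the group `T` is thus the homology of `X ⟶ Y ⟶ Z` at `Y`. -/
structure IsHomologyMap {X Y Z T : Type*} [AddCommGroup Y] [Zero Z] [AddCommGroup T]
    (f : X → Y) (g : Y → Z) (Φ : Y →+ T) : Prop where
  map_boundary : ∀ x, Φ (f x) = 0
  surjective : ∀ t, ∃ y, g y = 0 ∧ Φ y = t
  exact : ∀ y, g y = 0 → Φ y = 0 → ∃ x, f x = y

lemma IsHomologyMap.congr {X Y Z X' Y' Z' T : Type*} [AddCommGroup Y] [AddCommGroup Z]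
    [AddCommGroup Y'] [AddCommGroup Z'] [AddCommGroup T] {f : X → Y} {g : Y → Z} {Φ : Y →+ T}
    (h : IsHomologyMap f g Φ) {f' : X' → Y'} {g' : Y' → Z'} (eX : X ≃ X') (eY : Y ≃+ Y')
    (eZ : Z ≃+ Z') (hf : ∀ x, f' (eX x) = eY (f x)) (hg : ∀ y, g' (eY y) = eZ (g y)) :
    IsHomologyMap f' g' (Φ.comp eY.symm.toAddMonoidHom) where
  map_boundary x := by
    obtain ⟨x, rfl⟩ := eX.surjective x
    simp [hf, h.map_boundary]
  surjective t := by
    obtain ⟨y, hy, rfl⟩ := h.surjective t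
    exact ⟨eY y, by simp [hg, hy]⟩
  exact y hy hΦ := by
    obtain ⟨y, rfl⟩ := eY.surjective y
    obtain ⟨x, rfl⟩ := h.exact y (by simpa [hg] using hy) (by simpa using hΦ)
    exact ⟨eX x, hf x⟩

theorem IsHomologyMap.nonempty_homology_addEquiv (S : ShortComplex (ModuleCat.{0} k)) {T : Type*}
    [AddCommGroup T] {Φ : S.X₂ →+ T}
    (hΦ : IsHomologyMap S.f.hom S.g.hom Φ) :
    Nonempty (S.homology ≃+ T) := by
  let Ψ : S.g.hom.ker →+ T := Φ.comp S.g.hom.ker.subtype.toAddMonoidHom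
  have hΨ : Function.Surjective Ψ := fun t => by
    obtain ⟨y, hy, rfl⟩ := hΦ.surjective t
    exact ⟨⟨y, hy⟩, rfl⟩
  have hker : S.moduleCatToCycles.range.toAddSubgroup = Ψ.ker := by
    ext ⟨y, hy⟩
    constructor
    · rintro ⟨x, hx⟩
      exact (congrArg (fun z => Φ z.1) hx).symm.trans (hΦ.map_boundary x)
    · intro hy₀
      obtain ⟨x, hx⟩ := hΦ.exact y hy hy₀
      exact ⟨x, Subtype.ext hx⟩
  exact ⟨S.moduleCatHomologyIso.toLinearEquiv.toAddEquiv.trans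
    ((QuotientAddGroup.quotientAddEquivOfEq hker).trans
      (QuotientAddGroup.quotientKerEquivOfSurjective Ψ hΨ))⟩

lemma rep_shortComplex_exact {A B D : Rep.{0} k G} {f : A ⟶ B} {g : B ⟶ D} (w : f ≫ g = 0)
    (h : ∀ x, g.hom x = 0 → ∃ y, f.hom y = x) : (ShortComplex.mk f g w).Exact := by
  apply (forget₂ (Rep.{0} k G) (ModuleCat.{0} k)).reflects_exact_of_faithful
  rw [ShortComplex.moduleCat_exact_iff]
  exact h

variable (k G) in
/-- The ring homomorphism `k[G] → k` that sums the coefficients. -/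
noncomputable def augmentation : MonoidAlgebra k G →ₐ[k] k := MonoidAlgebra.lift k k G 1

lemma asAlgebraHom_trivial (x : MonoidAlgebra k G) (c : k) :
    (Rep.trivial k G k).ρ.asAlgebraHom x c = augmentation k G x * c := by
  induction x using MonoidAlgebra.induction_linear with
  | zero => simp
  | add x y hx hy => simp only [map_add, LinearMap.add_apply, hx, hy, add_mul]
  | single g r => simp [augmentation]

lemma augIdeal_eq_ker_augmentation {s : Set G} (hs : Subgroup.closure s = ⊤) :
    augIdeal k s = RingHom.ker (augmentation k G) := by
  ext v
  have hmap : augmentation k G v = (mapDomain (fun _ => ()) v).coeff () := by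
    induction v using MonoidAlgebra.induction_linear with
    | zero => simp
    | add x y hx hy => rw [map_add, hx, hy, mapDomain_add, coeff_add, Finsupp.add_apply]
    | single g r => simp [augmentation]
  rw [mem_augIdeal_iff (f := fun _ => ()) fun _ _ => by simp [hs], RingHom.mem_ker, hmap,
    ← coeff_inj, Finsupp.ext_iff]
  exact ⟨fun h => h (), fun h _ => h⟩

namespace MatrixComplex

variable (C : MatrixComplex (MonoidAlgebra k G))

/-- The chain complex of free representations with boundary maps `v ↦ v ᵥ* C.d n`. -/
noncomputable def chainComplex (hC : ∀ n, C.d (n + 1) * C.d n = 0) : ChainComplex (Rep.{0} k G) ℕ :=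
  ChainComplex.of (fun n => freeRep k G (C.ι n)) (fun n => vecMulHom (C.d n)) fun n =>
    freeRep_hom_ext fun v => by
      change v ᵥ* C.d (n + 1) ᵥ* C.d n = 0
      rw [vecMul_vecMul, hC, vecMul_zero]

lemma chainComplex_d (hC : ∀ n, C.d (n + 1) * C.d n = 0) (n : ℕ) :
    (C.chainComplex hC).d (n + 1) n = vecMulHom (C.d n) :=
  ChainComplex.of_d (fun n => freeRep k G (C.ι n)) (fun n => vecMulHom (C.d n)) n

/-- The augmentation `k[G] ⟶ k` of a complex that is `k[G]` in degree zero. -/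
noncomputable def augHom : freeRep k G (C.ι 0) ⟶ Rep.trivial k G k :=
  freeLift (Rep.trivial k G k) fun _ => (1 : k)

variable {C} [Unique (C.ι 0)]

lemma augHom_apply (v : C.ι 0 → MonoidAlgebra k G) :
    C.augHom.hom v = augmentation k G (v default) := by
  refine (freeLift_apply _ _).trans ?_
  rw [Fintype.sum_unique, asAlgebraHom_trivial, mul_one]

lemma Resolves.augHom_eq_zero_iff (hC : C.Resolves (RingHom.ker (augmentation k G)))
    (v : C.ι 0 → MonoidAlgebra k G) : C.augHom.hom v = 0 ↔ ∃ w, w ᵥ* C.d 0 = v := by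
  rw [augHom_apply, ← RingHom.mem_ker, ← hC.mem_iff, Unique.forall_iff]

lemma Resolves.vecMulHom_comp_augHom (hC : C.Resolves (RingHom.ker (augmentation k G))) :
    vecMulHom (C.d 0) ≫ C.augHom = 0 :=
  freeRep_hom_ext fun w => (hC.augHom_eq_zero_iff _).2 ⟨w, rfl⟩

/-- The augmentation as a map of chain complexes. -/
noncomputable def Resolves.π (hC : C.Resolves (RingHom.ker (augmentation k G))) :
    C.chainComplex hC.d_mul_d ⟶ (ChainComplex.single₀ (Rep.{0} k G)).obj (Rep.trivial k G k) :=
  ((C.chainComplex hC.d_mul_d).toSingle₀Equiv _).symm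
    ⟨C.augHom, by rw [chainComplex_d]; exact hC.vecMulHom_comp_augHom⟩

lemma Resolves.π_f_zero (hC : C.Resolves (RingHom.ker (augmentation k G))) :
    hC.π.f 0 = C.augHom :=
  congrArg Subtype.val
    (((C.chainComplex hC.d_mul_d).toSingle₀Equiv (Rep.trivial k G k)).apply_symm_apply _)

lemma Resolves.quasiIso_π (hC : C.Resolves (RingHom.ker (augmentation k G))) : QuasiIso hC.π where
  quasiIsoAt n := by
    cases n with
    | zero =>
      rw [ChainComplex.quasiIsoAt₀_iff, ShortComplex.quasiIso_iff_of_zeros' _ rfl rfl rfl]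
      constructor
      · refine rep_shortComplex_exact _ fun v hv => ?_
        change ∃ w, ((C.chainComplex hC.d_mul_d).d 1 0).hom w = v
        rw [chainComplex_d]
        refine (hC.augHom_eq_zero_iff v).1 ?_
        rw [← hC.π_f_zero]
        exact hv
      · rw [Rep.epi_iff_surjective]
        change Function.Surjective (hC.π.f 0).hom
        rw [hC.π_f_zero]
        exact fun c => ⟨fun _ => algebraMap k _ c, (augHom_apply _).trans
          ((augmentation k G).commutes c)⟩
    | succ n =>
      rw [quasiIsoAt_iff_exactAt' (hL := ChainComplex.exactAt_succ_single_obj ..),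
        HomologicalComplex.exactAt_iff' _ (n + 2) (n + 1) n (by simp) (by simp)]
      refine rep_shortComplex_exact _ fun v hv => ?_
      rw [chainComplex_d] at hv ⊢
      exact hC.exact n v hv

/-- A free resolution of the trivial module, as a projective resolution. -/
noncomputable def Resolves.projectiveResolution (hC : C.Resolves (RingHom.ker (augmentation k G))) :
    ProjectiveResolution (Rep.trivial k G k) where
  complex := C.chainComplex hC.d_mul_d
  projective _ := freeRep_projective
  π := hC.π
  quasiIso := hC.quasiIso_π

theorem Resolves.nonempty_groupCohomology_addEquiv
    (hC : C.Resolves (RingHom.ker (augmentation k G))) (A : Rep.{0} k G) (n : ℕ) {T : Type*}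
    [AddCommGroup T] {Φ : (C.ι (n + 1) → A) →+ T}
    (hΦ : IsHomologyMap (matrixAct A (C.d n)) (matrixAct A (C.d (n + 1))) Φ) :
    Nonempty (groupCohomology A (n + 1) ≃+ T) := by
  let K := hC.projectiveResolution.complex.linearYonedaObj k A
  have hd (m : ℕ) (a : C.ι m → A) : (K.d m (m + 1)).hom (freeLiftEquiv (C.ι m) A a) =
      freeLiftEquiv (C.ι (m + 1)) A (matrixAct A (C.d m) a) := by
    change (C.chainComplex hC.d_mul_d).d (m + 1) m ≫ freeLift A a = freeLift A _
    rw [chainComplex_d]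
    exact (freeLift_matrixAct _ a).symm
  have hK := hΦ.congr (f' := (K.sc' n (n + 1) (n + 2)).f.hom)
    (g' := (K.sc' n (n + 1) (n + 2)).g.hom) (freeLiftEquiv (C.ι n) A).toEquiv
    (freeLiftEquiv (C.ι (n + 1)) A) (freeLiftEquiv (C.ι (n + 2)) A) (hd n) (hd (n + 1))
  obtain ⟨e⟩ := hK.nonempty_homology_addEquiv
  exact ⟨(groupCohomologyIso A (n + 1) hC.projectiveResolution ≪≫ ShortComplex.homologyMapIso
    (K.isoSc' n (n + 1) (n + 2) (by simp) (by simp))).toLinearEquiv.toAddEquiv.trans e⟩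

end MatrixComplex

end CohomologyFromResolution

section TwistedCone

namespace MatrixComplex

variable {Λ : Type*} [Ring Λ] {C : MatrixComplex Λ} {R : ∀ n, Matrix (C.ι n) (C.ι n) Λ}

/-- The lift of an endomorphism `R` to the shifted copy of `C` in the cone of `X - 1`, when `R`
conjugates `X` to its inverse: `(X - 1) R = -R X⁻¹ (X - 1)`. -/
abbrev invTwist (X : Λˣ) (R : ∀ n, Matrix (C.ι n) (C.ι n) Λ) (n : ℕ) :
    Matrix (C.ι n) (C.ι n) Λ :=
  -(R n * (diagonal fun _ => (↑X⁻¹ : Λ)))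

variable {X : Λˣ}

lemma diagonal_mul_of_semiconjBy {n : Type*} [Fintype n] [DecidableEq n] {M : Matrix n n Λ}
    {a b : Λ} (h : ∀ i j, SemiconjBy (M i j) a b) :
    (diagonal (fun _ => b) : Matrix n n Λ) * M = M * (diagonal (fun _ => a) : Matrix n n Λ) := by
  ext i j
  simpa [diagonal_mul, mul_diagonal] using (h i j).symm

lemma d_mul_invTwist (hR : ∀ n, C.d n * R n = R (n + 1) * C.d n)
    (hX : ∀ n i j, Commute (C.d n i j) X) (n : ℕ) :
    C.d n * invTwist X R n = invTwist X R (n + 1) * C.d n := by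
  have hcomm := diagonal_mul_comm fun i j => (hX n i j).units_inv_right
  rw [invTwist, invTwist, Matrix.mul_neg, Matrix.neg_mul, ← Matrix.mul_assoc, hR, Matrix.mul_assoc,
    Matrix.mul_assoc, hcomm]

lemma diagonal_sub_one_mul_eq_invTwist (hXR : ∀ n i j, SemiconjBy (R n i j) (↑X⁻¹ : Λ) X) (n : ℕ) :
    (diagonal (fun _ => (X : Λ) - 1) : Matrix (C.ι n) (C.ι n) Λ) * R n =
      invTwist X R n * (diagonal (fun _ => (X : Λ) - 1) : Matrix (C.ι n) (C.ι n) Λ) := by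
  ext i j
  simp only [diagonal_mul, mul_diagonal, sub_mul, one_mul, (hXR n i j).eq.symm]
  rw [invTwist, Matrix.neg_apply, mul_diagonal, neg_mul, mul_sub, mul_assoc, Units.inv_mul, mul_one,
    mul_one, neg_sub]

lemma invTwist_pow_four (hXR : ∀ n i j, SemiconjBy (R n i j) (↑X⁻¹ : Λ) X)
    (hR : ∀ n, R n ^ 4 = 1) (n : ℕ) : invTwist X R n ^ 4 = 1 := by
  have hinv : (diagonal (fun _ => (↑X⁻¹ : Λ)) : Matrix (C.ι n) (C.ι n) Λ) * R n =
      R n * (diagonal fun _ => (X : Λ)) :=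
    diagonal_mul_of_semiconjBy fun i j => by
      simpa only [inv_inv] using (hXR n i j).units_inv_right
  have hsq : invTwist X R n ^ 2 = R n ^ 2 := by
    rw [invTwist, neg_sq, sq, sq, Matrix.mul_assoc, ← Matrix.mul_assoc _ (R n), hinv,
      Matrix.mul_assoc, diagonal_mul_diagonal]
    simp
  rw [show 4 = 2 * 2 from rfl, pow_mul, hsq, ← pow_mul, hR]

end MatrixComplex

end TwistedCone

section QuarterTurn

namespace MatrixComplex

variable {Λ : Type*} [Ring Λ]

/-- The Koszul complex of `X - 1` and `Y - 1`. -/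
def planeKoszul (X Y : Λˣ) : MatrixComplex Λ :=
  ((point Λ).cone ((X : Λ) - 1)).cone ((Y : Λ) - 1)

/-- The lift to `planeKoszul X Y` of right multiplication by `ρ`, where conjugation by `ρ` turns the
lattice spanned by `X` and `Y` by a right angle: `ρ X ρ⁻¹ = Y` and `ρ Y ρ⁻¹ = X⁻¹`. -/
def quarterTurn (X Y ρ : Λˣ) :
    ∀ n, Matrix ((planeKoszul X Y).ι n) ((planeKoszul X Y).ι n) Λ
  | 0 => diagonal fun _ => (ρ : Λ)
  | 1 => fromBlocks 0 (of fun _ _ => -(↑(ρ * Y⁻¹) : Λ)) (of fun _ _ => (ρ : Λ)) 0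
  | _ + 2 => diagonal fun _ => (↑(ρ * Y⁻¹) : Λ)

variable {X Y ρ : Λˣ}

lemma semiconjBy_quarterTurn {a b : Λ} (hρ : SemiconjBy (ρ : Λ) a b)
    (hρY : SemiconjBy (↑(ρ * Y⁻¹) : Λ) a b) :
    ∀ n i j, SemiconjBy (quarterTurn X Y ρ n i j) a b := by
  have hdiag {m : Type} [DecidableEq m] {r : Λ} (hr : SemiconjBy r a b) (i j : m) :
      SemiconjBy (diagonal (fun _ => r) i j) a b := by
    rw [diagonal_apply]
    split_ifs
    exacts [hr, SemiconjBy.zero_left a b]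
  rintro (_ | _ | n) i j
  · exact hdiag hρ i j
  · rcases i with i | i <;> rcases j with _ | _
    exacts [SemiconjBy.zero_left a b, hρY.neg_left, hρ, SemiconjBy.zero_left a b]
  · exact hdiag hρY i j

section Sums

variable {β : Type*} [AddCommMonoid β]

lemma sum_planeKoszul_zero (f : (planeKoszul X Y).ι 0 → β) : ∑ l, f l = f () :=
  Fintype.sum_unique (ι := Unit) f

lemma sum_planeKoszul_one (f : (planeKoszul X Y).ι 1 → β) :
    ∑ l, f l = f (Sum.inl (Sum.inr ())) + f (Sum.inr ()) := by
  have hsum (g : (Empty ⊕ Unit) ⊕ Unit → β) : ∑ l, g l = g (.inl (.inr ())) + g (.inr ()) := by simp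
  exact hsum f

lemma sum_planeKoszul_two (f : (planeKoszul X Y).ι 2 → β) :
    ∑ l, f l = f (Sum.inr (Sum.inr ())) := by
  have hsum (g : (Empty ⊕ Empty) ⊕ (Empty ⊕ Unit) → β) : ∑ l, g l = g (.inr (.inr ())) := by simp
  exact hsum f

end Sums

lemma planeKoszul_d_mul_quarterTurn (hXY : Commute X Y) (hX : SemiconjBy ρ X Y)
    (hY : SemiconjBy ρ Y X⁻¹) (n : ℕ) :
    (planeKoszul X Y).d n * quarterTurn X Y ρ n =
      quarterTurn X Y ρ (n + 1) * (planeKoszul X Y).d n := by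
  have hYρ : ((Y : Λ) - 1) * ρ = ρ * (X - 1) := by
    rw [sub_mul, mul_sub, one_mul, mul_one, ← Units.val_mul, ← Units.val_mul, hX.eq]
  have hXρ : ((X : Λ) - 1) * ρ = -(↑(ρ * Y⁻¹) * (Y - 1)) := by
    have : X * ρ = ρ * Y⁻¹ := by simpa using hY.inv_right.eq.symm
    rw [sub_mul, one_mul, mul_sub, ← Units.val_mul, ← Units.val_mul, this, inv_mul_cancel_right,
      mul_one, neg_sub]
  have hYX : ((Y : Λ) - 1) * ↑(ρ * Y⁻¹) = ↑(ρ * Y⁻¹) * (X - 1) := by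
    have : Y * (ρ * Y⁻¹) = ρ * Y⁻¹ * X := by
      rw [← mul_assoc, ← hX.eq, mul_assoc, mul_assoc, hXY.inv_right.eq]
    rw [sub_mul, one_mul, mul_sub, ← Units.val_mul, ← Units.val_mul, this, mul_one]
  rcases n with _ | _ | n
  · ext ((i | i) | i) j
    · exact i.elim
    · refine (mul_apply.trans (sum_planeKoszul_zero _)).trans
        (.trans ?_ (mul_apply.trans (sum_planeKoszul_one _)).symm)
      change ((X : Λ) - 1) * ρ = 0 * _ + -(↑(ρ * Y⁻¹) : Λ) * (Y - 1)
      rw [hXρ, zero_mul, zero_add, neg_mul]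
    · refine (mul_apply.trans (sum_planeKoszul_zero _)).trans
        (.trans ?_ (mul_apply.trans (sum_planeKoszul_one _)).symm)
      change ((Y : Λ) - 1) * ρ = (ρ : Λ) * (X - 1) + 0 * _
      rw [hYρ, zero_mul, add_zero]
  · ext ((i | i) | (i | i)) ((j | j) | j)
    all_goals first | exact i.elim | exact j.elim | skip
    all_goals refine (mul_apply.trans (sum_planeKoszul_one _)).trans
                (.trans ?_ (mul_apply.trans (sum_planeKoszul_two _)).symm)
    · change ((Y : Λ) - 1) * 0 + -(X - 1) * ρ = (↑(ρ * Y⁻¹) : Λ) * (Y - 1)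
      rw [mul_zero, zero_add, neg_mul, hXρ, neg_neg]
    · change ((Y : Λ) - 1) * -(↑(ρ * Y⁻¹) : Λ) + -(X - 1) * 0 = (↑(ρ * Y⁻¹) : Λ) * -(X - 1)
      rw [mul_zero, add_zero, mul_neg, mul_neg, hYX]
  · ext ((i | i) | (i | i)) j <;> exact i.elim

lemma fromBlocks_antidiagonal_pow_four {b c : Λ} (hbc : b * c * (b * c) = 1)
    (hcb : c * b * (c * b) = 1) :
    (fromBlocks 0 (of fun _ _ => b) (of fun _ _ => c) 0 :
      Matrix ((Empty ⊕ Unit) ⊕ Unit) ((Empty ⊕ Unit) ⊕ Unit) Λ) ^ 4 = 1 := by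
  rw [show 4 = 2 * 2 from rfl, pow_mul, sq, sq, fromBlocks_multiply, fromBlocks_multiply,
    ← fromBlocks_one]
  congr 1
  · ext (i | i) (j | j)
    · exact i.elim
    · exact i.elim
    · exact j.elim
    · simp [mul_apply, hbc]
  · simp
  · simp
  · ext
    simp [mul_apply, hcb]

lemma quarterTurn_pow_four (hXY : Commute X Y) (hX : SemiconjBy ρ X Y)
    (hY : SemiconjBy ρ Y X⁻¹) (hρ : ρ ^ 4 = 1) (n : ℕ) : quarterTurn X Y ρ n ^ 4 = 1 := by
  have hXX : SemiconjBy (ρ * ρ) X X⁻¹ := hY.mul_left hX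
  have hYY : SemiconjBy (ρ * ρ) Y Y⁻¹ := hX.inv_right.mul_left hY
  have hρρ : ρ * ρ * (ρ * ρ) = 1 := by rw [← hρ, pow_mul ρ 2 2, sq, sq]
  have hρY : ρ * Y⁻¹ = X * ρ := by simpa using hY.inv_right.eq
  have hdiag {m : Type} [Fintype m] [DecidableEq m] {r : Λˣ} (hr : r ^ 4 = 1) :
      (diagonal fun _ => (r : Λ) : Matrix m m Λ) ^ 4 = 1 := by
    rw [diagonal_pow, ← diagonal_one]
    exact congrArg _ (funext fun _ => by simp [← Units.val_pow_eq_pow_val, hr])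
  have hsq {Z : Λˣ} (hZ : SemiconjBy (ρ * ρ) Z Z⁻¹) : Z * (ρ * ρ) * (Z * (ρ * ρ)) = 1 := by
    rw [mul_assoc, ← mul_assoc _ Z, hZ.eq, mul_assoc, hρρ, mul_one, mul_inv_cancel]
  rcases n with _ | _ | n
  · exact hdiag hρ
  · refine fromBlocks_antidiagonal_pow_four ?_ ?_
    · rw [neg_mul, neg_mul_neg, ← Units.val_mul, ← Units.val_mul, hρY, mul_assoc X, hsq hXX,
        Units.val_one]
    · rw [mul_neg, neg_mul_neg, ← Units.val_mul, ← Units.val_mul, hρY, ← mul_assoc ρ X, hX.eq,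
        mul_assoc Y, hsq hYY, Units.val_one]
  · refine hdiag ?_
    have hρY₂ : (ρ * Y⁻¹) ^ 2 = X * Y * (ρ * ρ) := by
      rw [sq, hρY, mul_assoc, ← mul_assoc ρ, hX.eq]
      group
    rw [show 4 = 2 * 2 from rfl, pow_mul, hρY₂, sq]
    exact hsq (by rw [hXY.mul_inv]; exact hXX.mul_right hYY)

end MatrixComplex

end QuarterTurn

section LatticeExtension

open MonoidAlgebra MatrixComplex

variable {k G : Type*} [Ring k] [Group G]

/-- The group elements `x i` are a basis of a free abelian subgroup, in triangular form: they
commute and no proper power of one lies in the subgroup generated by its predecessors. -/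
structure IsLatticeBasis {n : ℕ} (x : Fin n → G) : Prop where
  commute : ∀ i j, Commute (x i) (x j)
  eq_zero_of_pow_mem : ∀ i (m : ℕ), x i ^ m ∈ Subgroup.closure (x '' Set.Iio i) → m = 0

theorem IsLatticeBasis.koszul_resolves {n : ℕ} {x : Fin n → G} (hx : IsLatticeBasis x) :
    (koszul fun i => MonoidAlgebra.of k G (x i) - 1).Resolves (augIdeal k (Set.range x)) := by
  have hspan (s : Set (Fin n)) :
      Ideal.span ((fun i => MonoidAlgebra.of k G (x i) - 1) '' s) = augIdeal k (x '' s) := by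
    rw [augIdeal, Set.image_image]
  rw [← Set.image_univ, ← hspan, Set.image_univ]
  refine MatrixComplex.koszul_resolves (fun i j => ?_) fun i v hv => ?_
  · exact (((hx.commute i j).map (MonoidAlgebra.of k G)).sub_left (Commute.one_left _)).sub_right
      (Commute.one_right _)
  · rw [hspan] at hv ⊢
    refine mem_augIdeal_of_mul_of_sub_one_mem ?_ (hx.eq_zero_of_pow_mem i) hv
    refine Subgroup.centralizer_le_normalizer _ ?_
    rw [Subgroup.centralizer_closure, Subgroup.mem_centralizer_iff]
    rintro _ ⟨j, _, rfl⟩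
    exact (hx.commute j i).eq

/-- `G` is the extension of a cyclic group of order four by the lattice with basis `x`, split by
`ρ`; conjugation by `ρ` turns the plane of `x 0` and `x 1` by a right angle, fixes `x 2` and inverts
`x 3`. -/
structure IsQuarterTurnExtension (x : Fin 4 → G) (ρ : G) (f : G →* Multiplicative (ZMod 4)) :
    Prop extends IsLatticeBasis x where
  ker_eq : f.ker = Subgroup.closure (Set.range x)
  map_eq : f ρ = Multiplicative.ofAdd 1
  pow_four : ρ ^ 4 = 1
  semiconjBy_zero : SemiconjBy ρ (x 0) (x 1)
  semiconjBy_one : SemiconjBy ρ (x 1) (x 0)⁻¹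
  commute_two : Commute ρ (x 2)
  semiconjBy_three : SemiconjBy ρ (x 3) (x 3)⁻¹

variable (k) in
/-- A group element as a unit of the group ring. -/
noncomputable abbrev ofUnit : G →* (MonoidAlgebra k G)ˣ :=
  (Units.map (MonoidAlgebra.of k G)).comp toUnits.toMonoidHom

section Turn

variable (k) (x : Fin 4 → G) (ρ : G)

/-- The Koszul complex of `x 0` and `x 1`. -/
noncomputable abbrev plane : MatrixComplex (MonoidAlgebra k G) :=
  planeKoszul (ofUnit k (x 0)) (ofUnit k (x 1))

/-- The lift of right multiplication by `ρ` to `plane k x`. -/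
noncomputable abbrev planeTurn :
    ∀ n, Matrix ((plane k x).ι n) ((plane k x).ι n) (MonoidAlgebra k G) :=
  quarterTurn (ofUnit k (x 0)) (ofUnit k (x 1)) (ofUnit k ρ)

/-- The Koszul complex of `x 0`, `x 1` and `x 2`. -/
noncomputable abbrev space : MatrixComplex (MonoidAlgebra k G) :=
  (plane k x).cone (ofUnit k (x 2) - 1 : MonoidAlgebra k G)

/-- The lift of right multiplication by `ρ` to `space k x`. -/
noncomputable abbrev spaceTurn :
    ∀ n, Matrix ((space k x).ι n) ((space k x).ι n) (MonoidAlgebra k G) :=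
  coneEnd (ofUnit k (x 2) - 1 : MonoidAlgebra k G) (planeTurn k x ρ) (planeTurn k x ρ)

/-- The Koszul complex of `x 0`, `x 1`, `x 2` and `x 3`. -/
noncomputable abbrev lattice : MatrixComplex (MonoidAlgebra k G) :=
  (space k x).cone (ofUnit k (x 3) - 1 : MonoidAlgebra k G)

/-- The lift of right multiplication by `ρ` to `lattice k x`. -/
noncomputable abbrev latticeTurn :
    ∀ n, Matrix ((lattice k x).ι n) ((lattice k x).ι n) (MonoidAlgebra k G) :=
  coneEnd (ofUnit k (x 3) - 1 : MonoidAlgebra k G) (spaceTurn k x ρ)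
    (invTwist (ofUnit k (x 3)) (spaceTurn k x ρ))

/-- The total complex of `lattice k x` and the two-periodic complex of the powers of `ρ`. -/
noncomputable abbrev turnComplex : MatrixComplex (MonoidAlgebra k G) :=
  (lattice k x).tot (fun n => latticeTurn k x ρ n - 1)
    fun n => ∑ i ∈ Finset.range 4, latticeTurn k x ρ n ^ i

instance : Unique ((turnComplex k x ρ).ι 0) := inferInstanceAs (Unique Unit)

end Turn

lemma IsLatticeBasis.lattice_resolves {x : Fin 4 → G} (hx : IsLatticeBasis x) :
    (lattice k x).Resolves (augIdeal k (Set.range x)) :=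
  hx.koszul_resolves

lemma semiconjBy_coneEnd {Λ : Type*} [Ring Λ] {C : MatrixComplex Λ} {y a b : Λ}
    {R S : ∀ n, Matrix (C.ι n) (C.ι n) Λ} (hR : ∀ n i j, SemiconjBy (R n i j) a b)
    (hS : ∀ n i j, SemiconjBy (S n i j) a b) :
    ∀ n i j, SemiconjBy (coneEnd y R S n i j) a b := by
  rintro (_ | n) i j
  · exact hR 0 i j
  · rcases i with i | i <;> rcases j with j | j
    exacts [hR _ i j, SemiconjBy.zero_left a b, SemiconjBy.zero_left a b, hS _ i j]

lemma commute_planeKoszul_d {Λ : Type*} [Ring Λ] {X Y : Λˣ} {z : Λ} (hX : Commute (X : Λ) z)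
    (hY : Commute (Y : Λ) z) (n i j) : Commute ((planeKoszul X Y).d n i j) z :=
  commute_cone_d (commute_cone_d (fun _ _ _ => Commute.zero_left z)
    (hX.sub_left (Commute.one_left z))) (hY.sub_left (Commute.one_left z)) n i j

lemma semiconjBy_ofUnit {g a b : G} (h : SemiconjBy g a b) :
    SemiconjBy (ofUnit k g : MonoidAlgebra k G) (ofUnit k a) (ofUnit k b) :=
  h.map (MonoidAlgebra.of k G)

variable {x : Fin 4 → G} {ρ : G}

lemma semiconjBy_planeTurn {a b : G} (hρ : SemiconjBy ρ a b) (hx : Commute (x 1) a)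
    (n : ℕ) (i j) :
    SemiconjBy (planeTurn k x ρ n i j) (ofUnit k a : MonoidAlgebra k G) (ofUnit k b) := by
  refine semiconjBy_quarterTurn (semiconjBy_ofUnit hρ) ?_ n i j
  rw [← map_inv, ← map_mul]
  exact semiconjBy_ofUnit (hρ.mul_left hx.inv_left)

lemma commute_space_d {z : G} (h₀ : Commute (x 0) z) (h₁ : Commute (x 1) z)
    (h₂ : Commute (x 2) z) (n : ℕ) (i j) :
    Commute ((space k x).d n i j) (ofUnit k z : MonoidAlgebra k G) :=
  commute_cone_d
    (commute_planeKoszul_d (X := ofUnit k (x 0)) (Y := ofUnit k (x 1)) (semiconjBy_ofUnit h₀)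
      (semiconjBy_ofUnit h₁))
    ((show Commute (ofUnit k (x 2) : MonoidAlgebra k G) _ from semiconjBy_ofUnit h₂).sub_left
      (Commute.one_left _)) n i j

namespace IsQuarterTurnExtension

variable {f : G →* Multiplicative (ZMod 4)}

lemma plane_d_mul_planeTurn (h : IsQuarterTurnExtension x ρ f) (n : ℕ) :
    (plane k x).d n * planeTurn k x ρ n = planeTurn k x ρ (n + 1) * (plane k x).d n :=
  planeKoszul_d_mul_quarterTurn ((h.commute 0 1).map _) (h.semiconjBy_zero.map _)
    (by simpa only [map_inv] using h.semiconjBy_one.map (ofUnit k)) n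

lemma planeTurn_pow_four (h : IsQuarterTurnExtension x ρ f) (n : ℕ) :
    planeTurn k x ρ n ^ 4 = 1 :=
  quarterTurn_pow_four ((h.commute 0 1).map _) (h.semiconjBy_zero.map _)
    (by simpa only [map_inv] using h.semiconjBy_one.map (ofUnit k))
    (by rw [← map_pow, h.pow_four, map_one]) n

lemma space_d_mul_spaceTurn (h : IsQuarterTurnExtension x ρ f) (n : ℕ) :
    (space k x).d n * spaceTurn k x ρ n = spaceTurn k x ρ (n + 1) * (space k x).d n := by
  refine cone_d_mul_coneEnd h.plane_d_mul_planeTurn h.plane_d_mul_planeTurn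
    (fun n => diagonal_mul_comm fun i j => ?_) n
  exact (semiconjBy_planeTurn h.commute_two (h.commute 1 2) n i j : Commute _ _).sub_right
    (Commute.one_right _)

lemma semiconjBy_spaceTurn (h : IsQuarterTurnExtension x ρ f) (n : ℕ) (i j) :
    SemiconjBy (spaceTurn k x ρ n i j) (↑(ofUnit k (x 3))⁻¹ : MonoidAlgebra k G)
      (ofUnit k (x 3)) := by
  have hx : SemiconjBy ρ (x 3)⁻¹ (x 3) := by simpa using h.semiconjBy_three.inv_right
  have hturn := semiconjBy_planeTurn (k := k) hx (h.commute 1 3).inv_right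
  rw [← map_inv]
  exact semiconjBy_coneEnd hturn hturn n i j

lemma lattice_d_mul_latticeTurn (h : IsQuarterTurnExtension x ρ f) (n : ℕ) :
    (lattice k x).d n * latticeTurn k x ρ n = latticeTurn k x ρ (n + 1) * (lattice k x).d n :=
  cone_d_mul_coneEnd h.space_d_mul_spaceTurn
    (d_mul_invTwist h.space_d_mul_spaceTurn
      (commute_space_d (h.commute 0 3) (h.commute 1 3) (h.commute 2 3)))
    (diagonal_sub_one_mul_eq_invTwist h.semiconjBy_spaceTurn) n

lemma latticeTurn_pow_four (h : IsQuarterTurnExtension x ρ f) (n : ℕ) :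
    latticeTurn k x ρ n ^ 4 = 1 :=
  have hspace := coneEnd_pow_eq_one (y := (ofUnit k (x 2) - 1 : MonoidAlgebra k G))
    h.planeTurn_pow_four h.planeTurn_pow_four
  coneEnd_pow_eq_one hspace (invTwist_pow_four h.semiconjBy_spaceTurn hspace) n

lemma mem_zpowers_map (h : IsQuarterTurnExtension x ρ f) (q : Multiplicative (ZMod 4)) :
    q ∈ Subgroup.zpowers (f ρ) :=
  Subgroup.mem_zpowers_iff.2 ⟨q.toAdd.val, by
    rw [h.map_eq, zpow_natCast, ← ofAdd_nsmul, nsmul_one, ZMod.natCast_zmod_val, ofAdd_toAdd]⟩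

lemma map_surjective (h : IsQuarterTurnExtension x ρ f) : Function.Surjective f := fun q => by
  obtain ⟨n, rfl⟩ := h.mem_zpowers_map q
  exact ⟨ρ ^ n, map_zpow f ρ n⟩

lemma closure_eq_top (h : IsQuarterTurnExtension x ρ f) :
    Subgroup.closure (insert ρ (Set.range x)) = ⊤ := by
  refine (Subgroup.eq_top_iff' _).2 fun g => ?_
  obtain ⟨n, hn⟩ := h.mem_zpowers_map (f g)
  have hker : g * (ρ ^ n)⁻¹ ∈ f.ker := by
    rw [MonoidHom.mem_ker, map_mul, map_inv, map_zpow, mul_inv_eq_one]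
    exact hn.symm
  rw [h.ker_eq] at hker
  rw [← inv_mul_cancel_right g (ρ ^ n)]
  exact mul_mem (Subgroup.closure_mono (Set.subset_insert _ _) hker)
    (zpow_mem (Subgroup.subset_closure (Set.mem_insert _ _)) n)

theorem turnComplex_resolves (h : IsQuarterTurnExtension x ρ f) :
    (turnComplex k x ρ).Resolves (augIdeal k (insert ρ (Set.range x))) := by
  have horder : orderOf (f ρ) = 4 := by
    rw [h.map_eq, orderOf_ofAdd_eq_addOrderOf, ZMod.addOrderOf_one]
  have hturn : latticeTurn k x ρ 0 = scalar _ (MonoidAlgebra.of k G ρ) := rfl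
  rw [augIdeal_insert]
  refine h.lattice_resolves.tot
    (IsPeriodicPair.of_pow_eq_one h.lattice_d_mul_latticeTurn h.latticeTurn_pow_four)
    (b := ∑ i ∈ Finset.range 4, MonoidAlgebra.of k G ρ ^ i) ?_ ?_ (fun v hv => ?_) fun v hv => ?_
  · rw [hturn, ← map_one (scalar _), ← map_sub, scalar_apply]
  · simp only [hturn, ← map_pow (scalar _)]
    rw [← map_sum, scalar_apply]
  · simpa only [horder] using
      mem_augIdeal_sup_span_sum h.map_surjective h.ker_eq h.mem_zpowers_map hv
  · refine mem_augIdeal_sup_span_of_sub_one h.map_surjective h.ker_eq h.mem_zpowers_map ?_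
    simpa only [horder] using hv

end IsQuarterTurnExtension

end LatticeExtension

section Coordinates

variable {k G : Type} [CommRing k] [Group G] {A : Rep.{0} k G}
variable {ι κ ι' κ' X Y X' Y' : Type} [Fintype κ] [Fintype κ']
variable [AddCommGroup X] [AddCommGroup Y] [AddCommGroup X'] [AddCommGroup Y']

lemma matrixAct_apply (D : Matrix ι κ (MonoidAlgebra k G)) (a : κ → A) (i : ι) :
    matrixAct A D a i = ∑ j, A.ρ.asAlgebraHom (D i j) (a j) := rfl

/-- Coordinates on the families of vectors indexed by a sum. -/
def sumCoord (e : X ≃+ (ι → A)) (e' : X' ≃+ (ι' → A)) : X × X' ≃+ (ι ⊕ ι' → A) :=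
  (e.prodCongr e').trans (LinearEquiv.sumArrowLequivProdArrow ι ι' ℕ A).symm.toAddEquiv

/-- Coordinates on the families of vectors indexed by a sum with empty first summand. -/
def emptySumCoord [IsEmpty ι] (e' : X' ≃+ (ι' → A)) : X' ≃+ (ι ⊕ ι' → A) :=
  e'.trans (LinearEquiv.funCongrLeft ℕ A (Equiv.emptySum ι ι')).toAddEquiv

lemma sumCoord_apply (e : X ≃+ (ι → A)) (e' : X' ≃+ (ι' → A)) (x : X) (x' : X') :
    sumCoord e e' (x, x') = Sum.elim (e x) (e' x') := rfl

lemma emptySumCoord_apply [IsEmpty ι] (e' : X' ≃+ (ι' → A)) (x' : X') :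
    emptySumCoord e' x' = Sum.elim (fun i : ι => isEmptyElim i) (e' x') := by
  funext i
  rcases i with i | i
  exacts [isEmptyElim i, rfl]

/-- In the coordinates `e` and `e'`, the map dual to right multiplication by `D` is `F`. -/
def Represents (e : X ≃+ (κ → A)) (e' : Y ≃+ (ι → A)) (D : Matrix ι κ (MonoidAlgebra k G))
    (F : X → Y) : Prop :=
  ∀ x, matrixAct A D (e x) = e' (F x)

/-- In the coordinates `e`, the element `y` of the group ring acts by `u`. -/
def ActsBy (e : X ≃+ (ι → A)) (y : MonoidAlgebra k G) (u : X → X) : Prop :=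
  ∀ x i, A.ρ.asAlgebraHom y (e x i) = e (u x) i

lemma ActsBy.sumCoord {e : X ≃+ (ι → A)} {e' : X' ≃+ (ι' → A)} {y : MonoidAlgebra k G}
    {u : X → X} {u' : X' → X'} (h : ActsBy e y u) (h' : ActsBy e' y u') :
    ActsBy (sumCoord e e') y (Prod.map u u') := by
  rintro ⟨x, x'⟩ (i | i)
  exacts [h x i, h' x' i]

lemma ActsBy.emptySumCoord [IsEmpty ι] {e' : X' ≃+ (ι' → A)} {y : MonoidAlgebra k G}
    {u' : X' → X'} (h' : ActsBy e' y u') : ActsBy (emptySumCoord (ι := ι) e') y u' := by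
  rintro x' (i | i)
  exacts [isEmptyElim i, h' x' i]

lemma ActsBy.zero {e : X ≃+ (ι → A)} {y : MonoidAlgebra k G}
    (h : A.ρ.asAlgebraHom y = 0) : ActsBy e y 0 := fun x i => by
  rw [h, Pi.zero_apply, map_zero]
  rfl

lemma ActsBy.one {e : X ≃+ (ι → A)} {y : MonoidAlgebra k G}
    (h : A.ρ.asAlgebraHom y = 1) : ActsBy e y id := fun x i => by
  rw [h]
  rfl

namespace Represents

variable {e : X ≃+ (κ → A)} {e' : Y ≃+ (ι → A)} {f : X' ≃+ (κ' → A)} {f' : Y' ≃+ (ι' → A)}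

lemma zero : Represents e e' 0 0 := fun x => by
  funext i
  simp [matrixAct_apply]

lemma neg {D : Matrix ι κ (MonoidAlgebra k G)} {F : X → Y} (h : Represents e e' D F) :
    Represents e e' (-D) (-F) := fun x => by
  rw [Pi.neg_apply, map_neg, ← h x]
  funext i
  simp [matrixAct_apply]

lemma sub {D D' : Matrix ι κ (MonoidAlgebra k G)} {F F' : X → Y} (h : Represents e e' D F)
    (h' : Represents e e' D' F') : Represents e e' (D - D') (F - F') := fun x => by
  rw [Pi.sub_apply, map_sub, ← h x, ← h' x]
  funext i
  simp [matrixAct_apply]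

lemma one [DecidableEq κ] : Represents e e 1 id := fun x => by
  funext i
  simp [matrixAct_apply, one_apply, apply_ite, ite_apply]

lemma mul [Fintype ι] {e'' : X' ≃+ (ι' → A)} {D : Matrix ι κ (MonoidAlgebra k G)}
    {D' : Matrix ι' ι (MonoidAlgebra k G)} {F : X → Y} {F' : Y → X'} (h' : Represents e' e'' D' F')
    (h : Represents e e' D F) : Represents e e'' (D' * D) (F' ∘ F) := fun x => by
  rw [Function.comp_apply, ← h', ← h]
  funext i
  simp only [matrixAct_apply, mul_apply, map_sum, map_mul, LinearMap.sum_apply,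
    Module.End.mul_apply]
  exact Finset.sum_comm

lemma pow [DecidableEq κ] {D : Matrix κ κ (MonoidAlgebra k G)} {F : X → X}
    (h : Represents e e D F) : ∀ n, Represents e e (D ^ n) F^[n]
  | 0 => by rw [pow_zero]; exact one
  | n + 1 => by rw [pow_succ]; exact (h.pow n).mul h

lemma sum_pow [DecidableEq κ] {D : Matrix κ κ (MonoidAlgebra k G)} {F : X → X}
    (h : Represents e e D F) (n : ℕ) :
    Represents e e (∑ i ∈ Finset.range n, D ^ i) fun x => ∑ i ∈ Finset.range n, F^[i] x :=
  fun x => by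
    rw [map_sum, ← Finset.sum_congr rfl fun i _ => h.pow i x]
    funext i
    simp only [matrixAct_apply, Finset.sum_apply, Matrix.sum_apply, map_sum, LinearMap.sum_apply]
    exact Finset.sum_comm

lemma diagonal [DecidableEq κ] {y : MonoidAlgebra k G} {u : X → X} (h : ActsBy e y u) :
    Represents e e (diagonal fun _ => y) u := fun x => by
  funext i
  simp [matrixAct_apply, diagonal_apply, apply_ite, ite_apply, h x i]

lemma fromRows_of_isEmpty [IsEmpty ι] {D : Matrix ι κ (MonoidAlgebra k G)}
    {D' : Matrix ι' κ (MonoidAlgebra k G)} {F' : X → Y'} (h' : Represents e f' D' F') :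
    Represents e (emptySumCoord f') (fromRows D D') F' := fun x => by
  rw [emptySumCoord_apply, ← h']
  funext i
  rcases i with i | i
  exacts [isEmptyElim i, rfl]

lemma fromRows {D : Matrix ι κ (MonoidAlgebra k G)} {D' : Matrix ι' κ (MonoidAlgebra k G)}
    {F : X → Y} {F' : X → Y'} (h : Represents e e' D F) (h' : Represents e f' D' F') :
    Represents e (sumCoord e' f') (fromRows D D') fun x => (F x, F' x) := fun x => by
  rw [sumCoord_apply, ← h, ← h']
  funext i
  rcases i with i | i <;> rfl

lemma fromBlocks {D₁₁ : Matrix ι κ (MonoidAlgebra k G)} {D₂₁ : Matrix ι' κ (MonoidAlgebra k G)}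
    {D₁₂ : Matrix ι κ' (MonoidAlgebra k G)} {D₂₂ : Matrix ι' κ' (MonoidAlgebra k G)}
    {F₁₁ : X → Y} {F₁₂ : X' → Y} {F₂₁ : X → Y'} {F₂₂ : X' → Y'}
    (h₁₁ : Represents e e' D₁₁ F₁₁) (h₁₂ : Represents f e' D₁₂ F₁₂)
    (h₂₁ : Represents e f' D₂₁ F₂₁) (h₂₂ : Represents f f' D₂₂ F₂₂) :
    Represents (sumCoord e f) (sumCoord e' f') (fromBlocks D₁₁ D₁₂ D₂₁ D₂₂)
      fun x => (F₁₁ x.1 + F₁₂ x.2, F₂₁ x.1 + F₂₂ x.2) := by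
  rintro ⟨x, x'⟩
  rw [sumCoord_apply, sumCoord_apply, map_add, map_add, ← h₁₁, ← h₁₂, ← h₂₁, ← h₂₂]
  funext i
  rcases i with i | i <;> exact Fintype.sum_sum_type _

lemma fromBlocks_of_isEmpty [IsEmpty ι] {D₁₁ : Matrix ι κ (MonoidAlgebra k G)}
    {D₂₁ : Matrix ι' κ (MonoidAlgebra k G)}
    {D₁₂ : Matrix ι κ' (MonoidAlgebra k G)} {D₂₂ : Matrix ι' κ' (MonoidAlgebra k G)}
    {F₂₁ : X → Y'} {F₂₂ : X' → Y'}
    (h₂₁ : Represents e f' D₂₁ F₂₁) (h₂₂ : Represents f f' D₂₂ F₂₂) :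
    Represents (sumCoord e f) (emptySumCoord f') (Matrix.fromBlocks D₁₁ D₁₂ D₂₁ D₂₂)
      fun x => F₂₁ x.1 + F₂₂ x.2 := by
  rintro ⟨x, x'⟩
  rw [sumCoord_apply, emptySumCoord_apply, map_add, ← h₂₁, ← h₂₂]
  funext i
  rcases i with i | i
  exacts [isEmptyElim i, Fintype.sum_sum_type _]

lemma fromBlocks_of_isEmpty_of_isEmpty [IsEmpty ι] [IsEmpty κ]
    {D₁₁ : Matrix ι κ (MonoidAlgebra k G)} {D₂₁ : Matrix ι' κ (MonoidAlgebra k G)}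
    {D₁₂ : Matrix ι κ' (MonoidAlgebra k G)} {D₂₂ : Matrix ι' κ' (MonoidAlgebra k G)}
    {F₂₂ : X' → Y'} (h₂₂ : Represents f f' D₂₂ F₂₂) :
    Represents (emptySumCoord f) (emptySumCoord f') (Matrix.fromBlocks D₁₁ D₁₂ D₂₁ D₂₂) F₂₂ := by
  intro x
  rw [emptySumCoord_apply, emptySumCoord_apply, ← h₂₂]
  funext i
  rcases i with i | i
  exacts [isEmptyElim i, (Fintype.sum_sum_type _).trans (by simp; rfl)]

end Represents

end Coordinates

section TurnCoordinates

open MatrixComplex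

variable {k G : Type} [CommRing k] [Group G] {A : Rep.{0} k G} {W : Type} [AddCommGroup W]
variable {X Y ρ : (MonoidAlgebra k G)ˣ} (ε : W ≃+ A)

/-- A vector as a family of one vector. -/
def pointCoord : W ≃+ (Unit → A) :=
  ε.trans (LinearEquiv.funUnique Unit ℕ A).symm.toAddEquiv

/-- Coordinates on the cochains of degree one of the Koszul complex of a single element. -/
def lineCoord : W ≃+ (Empty ⊕ Unit → A) := emptySumCoord (pointCoord ε)

/-- Coordinates on the cochains of `planeKoszul` of degree zero. -/
def planeCoord₀ : W ≃+ ((planeKoszul X Y).ι 0 → A) := pointCoord ε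

/-- Coordinates on the cochains of `planeKoszul` of degree one. -/
def planeCoord₁ : W × W ≃+ ((planeKoszul X Y).ι 1 → A) := sumCoord (lineCoord ε) (pointCoord ε)

/-- Coordinates on the cochains of `planeKoszul` of degree two. -/
def planeCoord₂ : W ≃+ ((planeKoszul X Y).ι 2 → A) :=
  emptySumCoord (ι := Empty ⊕ Empty) (lineCoord ε)

variable {ε} {u v : W → W}

lemma planeKoszul_d_zero_represents
    (hX : ActsBy (pointCoord ε) ((X : MonoidAlgebra k G) - 1) u)
    (hY : ActsBy (pointCoord ε) ((Y : MonoidAlgebra k G) - 1) v) :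
    Represents (planeCoord₀ ε) (planeCoord₁ ε) ((planeKoszul X Y).d 0) fun w => (u w, v w) :=
  .fromRows (.fromRows_of_isEmpty (.diagonal hX)) (.diagonal hY)

lemma planeKoszul_d_one_represents
    (hX : ActsBy (pointCoord ε) ((X : MonoidAlgebra k G) - 1) u)
    (hY : ActsBy (pointCoord ε) ((Y : MonoidAlgebra k G) - 1) v) :
    Represents (planeCoord₁ ε) (planeCoord₂ ε) ((planeKoszul X Y).d 1) fun w => v w.1 - u w.2 := by
  simp only [sub_eq_add_neg]
  exact .fromBlocks_of_isEmpty (.diagonal hY.emptySumCoord)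
    (.neg (.fromRows_of_isEmpty (.diagonal hX)))

lemma quarterTurn_one_represents
    (hρ : ActsBy (pointCoord ε) (ρ : MonoidAlgebra k G) u)
    (hρY : ActsBy (pointCoord ε) (↑(ρ * Y⁻¹) : MonoidAlgebra k G) v) :
    Represents (planeCoord₁ ε) (planeCoord₁ ε) (quarterTurn X Y ρ 1) fun w => (-v w.2, u w.1) := by
  have hc {y : MonoidAlgebra k G} {F : W → W} (h : ActsBy (pointCoord ε) y F) :
      Represents (lineCoord ε) (pointCoord ε) (of fun _ _ => y) F := fun w => by
    funext i
    simp only [matrixAct_apply, Fintype.sum_sum_type, Fintype.sum_empty, zero_add]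
    refine (Fintype.sum_unique _).trans ?_
    change A.ρ.asAlgebraHom y (pointCoord ε w default) = _
    exact h w default
  have hb {y : MonoidAlgebra k G} {F : W → W} (h : ActsBy (pointCoord ε) y F) :
      Represents (pointCoord ε) (lineCoord ε) (of fun _ _ => -y) (-F) := fun w => by
    funext i
    rcases i with i | i
    · exact i.elim
    · rw [matrixAct_apply]
      refine (Fintype.sum_unique _).trans ?_
      change A.ρ.asAlgebraHom (-y) (pointCoord ε w default) = pointCoord ε (-F w) default
      rw [map_neg, LinearMap.neg_apply, h w default, map_neg]
      rfl
  intro w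
  refine (Represents.fromBlocks .zero (hb hρY) (hc hρ) .zero w).trans ?_
  simp only [Pi.zero_apply, zero_add, add_zero]
  rfl

lemma quarterTurn_two_represents
    (hρY : ActsBy (pointCoord ε) (↑(ρ * Y⁻¹) : MonoidAlgebra k G) v) :
    Represents (planeCoord₂ ε) (planeCoord₂ ε) (quarterTurn X Y ρ 2) v :=
  .diagonal hρY.emptySumCoord.emptySumCoord

end TurnCoordinates

section LatticeCoordinates

open MatrixComplex

variable {k G : Type} [CommRing k] [Group G] {A : Rep.{0} k G}

namespace Represents

section Complexes

variable {C : MatrixComplex (MonoidAlgebra k G)} {n : ℕ} {V X Y Z : Type}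
variable [AddCommGroup V] [AddCommGroup X] [AddCommGroup Y] [AddCommGroup Z]
variable {e : X ≃+ (C.ι n → A)} {e' : Y ≃+ (C.ι (n + 1) → A)} {e'' : Z ≃+ (C.ι (n + 2) → A)}

lemma cone_d_zero {e : X ≃+ (C.ι 0 → A)} {e' : Y ≃+ (C.ι 1 → A)} {y : MonoidAlgebra k G}
    {F : X → Y} {u : X → X} (h : Represents e e' (C.d 0) F) (hy : ActsBy e y u) :
    Represents (Y := Y × X) e (sumCoord e' e) ((C.cone y).d 0) fun w => (F w, u w) :=
  .fromRows h (.diagonal hy)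

lemma cone_d_succ {y : MonoidAlgebra k G} {F : Y → Z} {u : Y → Y} {F' : X → Y}
    (h : Represents e' e'' (C.d (n + 1)) F) (hy : ActsBy e' y u)
    (h' : Represents e e' (C.d n) F') :
    Represents (X := Y × X) (Y := Z × Y) (sumCoord e' e) (sumCoord e'' e') ((C.cone y).d (n + 1))
      fun w => (F w.1, u w.1 - F' w.2) := fun w =>
  (Represents.fromBlocks h .zero (.diagonal hy) h'.neg w).trans <| by
    simp only [Pi.zero_apply, add_zero, Pi.neg_apply, sub_eq_add_neg]

lemma cone_d_succ_of_isEmpty [IsEmpty (C.ι (n + 2))] {y : MonoidAlgebra k G} {u : Y → Y}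
    {F' : X → Y} (hy : ActsBy e' y u) (h' : Represents e e' (C.d n) F') :
    Represents (X := Y × X) (Y := Y) (sumCoord e' e) (emptySumCoord (ι := C.ι (n + 2)) e')
      ((C.cone y).d (n + 1)) fun w => u w.1 - F' w.2 := fun w =>
  (Represents.fromBlocks_of_isEmpty (.diagonal hy) h'.neg w).trans <| by
    simp only [Pi.neg_apply, sub_eq_add_neg]

lemma coneEnd_succ {y : MonoidAlgebra k G} {R S : ∀ n, Matrix (C.ι n) (C.ι n) (MonoidAlgebra k G)}
    {F : Y → Y} {F' : X → X} (h : Represents e' e' (R (n + 1)) F) (h' : Represents e e (S n) F') :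
    Represents (X := Y × X) (Y := Y × X) (sumCoord e' e) (sumCoord e' e) (coneEnd y R S (n + 1))
      (Prod.map F F') := fun w =>
  (Represents.fromBlocks h .zero .zero h' w).trans <| by
    simp only [Pi.zero_apply, add_zero, zero_add]
    rfl

lemma coneEnd_succ_of_isEmpty [IsEmpty (C.ι (n + 1))] {y : MonoidAlgebra k G}
    {R S : ∀ n, Matrix (C.ι n) (C.ι n) (MonoidAlgebra k G)} {F' : X → X}
    (h' : Represents e e (S n) F') :
    Represents (X := X) (Y := X) (emptySumCoord (ι := C.ι (n + 1)) e)
      (emptySumCoord (ι := C.ι (n + 1)) e) (coneEnd y R S (n + 1)) F' :=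
  .fromBlocks_of_isEmpty_of_isEmpty h'

lemma invTwist {y : (MonoidAlgebra k G)ˣ} {R : ∀ n, Matrix (C.ι n) (C.ι n) (MonoidAlgebra k G)}
    {F : X → X} (h : Represents e e (R n) F) (hy : ActsBy e (↑y⁻¹ : MonoidAlgebra k G) id) :
    Represents e e (invTwist y R n) (-F) :=
  .neg (.mul h (.diagonal hy))

variable {α β : ∀ n, Matrix (C.ι n) (C.ι n) (MonoidAlgebra k G)}

lemma totD_zero {e : X ≃+ (C.ι 0 → A)} {e' : Y ≃+ (C.ι 1 → A)} {F : X → Y} {a : X → X}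
    (h : Represents e e' (C.d 0) F) (hα : Represents e e (α 0) a) :
    Represents (Y := Y × X) e (sumCoord e' e) (totD α β 0) fun w => (F w, a w) :=
  .fromRows h hα

lemma totD_succ {f : V ≃+ (C.totι n → A)} {F : Y → Z} {a : Y → Y} {D : V → Y × V}
    (h : Represents e' e'' (C.d (n + 1)) F) (hα : Represents e' e' (α (n + 1)) a)
    (hD : Represents f (sumCoord e' f) (totD β α n) D) :
    Represents (X := Y × V) (Y := Z × Y × V) (sumCoord e' f) (sumCoord e'' (sumCoord e' f))
      (totD α β (n + 1)) fun w => (F w.1, (a w.1, 0) - D w.2) := fun w =>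
  (Represents.fromBlocks h .zero (.fromRows hα .zero) hD.neg w).trans <| by
    simp only [Pi.zero_apply, add_zero, Pi.neg_apply, sub_eq_add_neg]

lemma totD_succ_of_isEmpty [IsEmpty (C.ι (n + 2))] {f : V ≃+ (C.totι n → A)} {a : Y → Y}
    {D : V → Y × V} (hα : Represents e' e' (α (n + 1)) a)
    (hD : Represents f (sumCoord e' f) (totD β α n) D) :
    Represents (X := Y × V) (Y := Y × V) (sumCoord e' f)
      (emptySumCoord (ι := C.ι (n + 2)) (sumCoord e' f)) (totD α β (n + 1))
      fun w => (a w.1, 0) - D w.2 := fun w =>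
  (Represents.fromBlocks_of_isEmpty (.fromRows hα .zero) hD.neg w).trans <| by
    simp only [Pi.zero_apply, Pi.neg_apply, sub_eq_add_neg]

end Complexes

end Represents

noncomputable section TurnCochains

variable {W : Type} [AddCommGroup W] {x : Fin 4 → G} {ρ : G} {n : ℕ}

instance {X Y : (MonoidAlgebra k G)ˣ} : IsEmpty ((planeKoszul X Y).ι (n + 3)) :=
  inferInstanceAs (IsEmpty ((Empty ⊕ Empty) ⊕ (Empty ⊕ Empty)))

instance : IsEmpty ((space k x).ι (n + 4)) :=
  inferInstanceAs (IsEmpty ((plane k x).ι (n + 4) ⊕ (plane k x).ι (n + 3)))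

instance : IsEmpty ((lattice k x).ι (n + 5)) :=
  inferInstanceAs (IsEmpty ((space k x).ι (n + 5) ⊕ (space k x).ι (n + 4)))

/-- The cochains of degree one of the Koszul complex of three elements. -/
abbrev Space₁ (W : Type) : Type := (W × W) × W

/-- The cochains of degree two of the Koszul complex of three elements. -/
abbrev Space₂ (W : Type) : Type := W × W × W

/-- The cochains of degree three of `turnComplex`, sorted by the degree in the lattice. -/
abbrev Turn₃ (W : Type) : Type := (W × Space₂ W) × (Space₂ W × Space₁ W) × (Space₁ W × W) × W

section Definitions

variable (x ρ) (ε : W ≃+ A)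

/-- Coordinates on the cochains of `space k x` of degree zero. -/
def spaceCoord₀ : W ≃+ ((space k x).ι 0 → A) := pointCoord ε

/-- Coordinates on the cochains of `space k x` of degree one. -/
def spaceCoord₁ : Space₁ W ≃+ ((space k x).ι 1 → A) := sumCoord (planeCoord₁ ε) (planeCoord₀ ε)

/-- Coordinates on the cochains of `space k x` of degree two. -/
def spaceCoord₂ : Space₂ W ≃+ ((space k x).ι 2 → A) := sumCoord (planeCoord₂ ε) (planeCoord₁ ε)

/-- Coordinates on the cochains of `space k x` of degree three. -/
def spaceCoord₃ : W ≃+ ((space k x).ι 3 → A) :=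
  emptySumCoord (ι := (plane k x).ι 3) (planeCoord₂ ε)

/-- Coordinates on the cochains of `lattice k x` of degree zero. -/
def latticeCoord₀ : W ≃+ ((lattice k x).ι 0 → A) := pointCoord ε

/-- Coordinates on the cochains of `lattice k x` of degree one. -/
def latticeCoord₁ : Space₁ W × W ≃+ ((lattice k x).ι 1 → A) :=
  sumCoord (spaceCoord₁ x ε) (spaceCoord₀ x ε)

/-- Coordinates on the cochains of `lattice k x` of degree two. -/
def latticeCoord₂ : Space₂ W × Space₁ W ≃+ ((lattice k x).ι 2 → A) :=
  sumCoord (spaceCoord₂ x ε) (spaceCoord₁ x ε)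

/-- Coordinates on the cochains of `lattice k x` of degree three. -/
def latticeCoord₃ : W × Space₂ W ≃+ ((lattice k x).ι 3 → A) :=
  sumCoord (spaceCoord₃ x ε) (spaceCoord₂ x ε)

/-- Coordinates on the cochains of `lattice k x` of degree four. -/
def latticeCoord₄ : W ≃+ ((lattice k x).ι 4 → A) :=
  emptySumCoord (ι := (space k x).ι 4) (spaceCoord₃ x ε)

/-- Coordinates on the cochains of `turnComplex k x ρ` of degree three. -/
def turnCoord₃ : Turn₃ W ≃+ ((turnComplex k x ρ).ι 3 → A) :=
  sumCoord (latticeCoord₃ x ε)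
    (sumCoord (latticeCoord₂ x ε) (sumCoord (latticeCoord₁ x ε) (latticeCoord₀ x ε)))

/-- Coordinates on the cochains of `turnComplex k x ρ` of degree four. -/
def turnCoord₄ : W × Turn₃ W ≃+ ((turnComplex k x ρ).ι 4 → A) :=
  sumCoord (latticeCoord₄ x ε) (turnCoord₃ x ρ ε)

/-- Coordinates on the cochains of `turnComplex k x ρ` of degree five. -/
def turnCoord₅ : W × Turn₃ W ≃+ ((turnComplex k x ρ).ι 5 → A) :=
  emptySumCoord (ι := (lattice k x).ι 5) (turnCoord₄ x ρ ε)

end Definitions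

/-- The coordinates `ε` on `A` turn the action of `x 0`, `x 1` and `x 2` into the involution `t`,
and that of `x 3` and `ρ` into the identity. -/
structure IsInvolutionCoord (x : Fin 4 → G) (ρ : G) (t : W → W) (ε : W ≃+ A) : Prop where
  involutive : Function.Involutive t
  act_zero : ∀ w, A.ρ (x 0) (ε w) = ε (t w)
  act_one : ∀ w, A.ρ (x 1) (ε w) = ε (t w)
  act_two : ∀ w, A.ρ (x 2) (ε w) = ε (t w)
  act_three : ∀ w, A.ρ (x 3) (ε w) = ε w
  act_turn : ∀ w, A.ρ ρ (ε w) = ε w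

lemma actsBy_ofUnit_sub_one {g : G} {t : W → W} {ε : W ≃+ A} (h : ∀ w, A.ρ g (ε w) = ε (t w)) :
    ActsBy (pointCoord ε) (ofUnit k g - 1 : MonoidAlgebra k G) fun w => t w - w := fun w i => by
  change A.ρ.asAlgebraHom (MonoidAlgebra.of k G g - 1) (ε w) = ε (t w - w)
  rw [map_sub, map_one, Representation.asAlgebraHom_of, LinearMap.sub_apply, h, map_sub]
  rfl

lemma actsBy_ofUnit {g : G} {t : W → W} {ε : W ≃+ A} (h : ∀ w, A.ρ g (ε w) = ε (t w)) :
    ActsBy (pointCoord ε) (ofUnit k g : MonoidAlgebra k G) t := fun w i => by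
  change A.ρ.asAlgebraHom (MonoidAlgebra.of k G g) (ε w) = ε (t w)
  rw [Representation.asAlgebraHom_of, h]

/-- The differential of the Koszul complex of three elements acting alike, in degree zero. -/
def spaceDiff₀ (u : W → W) (a : W) : Space₁ W := ((u a, u a), u a)

/-- The differential of the Koszul complex of three elements acting alike, in degree one. -/
def spaceDiff₁ (u : W → W) (a : Space₁ W) : Space₂ W :=
  (u a.1.1 - u a.1.2, u a.1.1 - u a.2, u a.1.2 - u a.2)

/-- The differential of the Koszul complex of three elements acting alike, in degree two. -/
def spaceDiff₂ (u : W → W) (a : Space₂ W) : W := u a.1 - (u a.2.1 - u a.2.2)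

/-- The rotation of the Koszul complex of three elements, in degree one. -/
def spaceRot₁ (t : W → W) (a : Space₁ W) : Space₁ W := ((-t a.1.2, a.1.1), a.2)

/-- The rotation of the Koszul complex of three elements, in degree two. -/
def spaceRot₂ (t : W → W) (a : Space₂ W) : Space₂ W := (t a.1, -t a.2.2, a.2.1)

namespace IsInvolutionCoord

variable {t : W → W} {ε : W ≃+ A}

lemma plane_d_zero (h : IsInvolutionCoord x ρ t ε) :
    Represents (planeCoord₀ ε) (planeCoord₁ ε) ((plane k x).d 0) fun w => (t w - w, t w - w) :=
  planeKoszul_d_zero_represents (actsBy_ofUnit_sub_one h.act_zero)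
    (actsBy_ofUnit_sub_one h.act_one)

lemma plane_d_one (h : IsInvolutionCoord x ρ t ε) :
    Represents (planeCoord₁ ε) (planeCoord₂ ε) ((plane k x).d 1)
      fun w => (t w.1 - w.1) - (t w.2 - w.2) :=
  planeKoszul_d_one_represents (actsBy_ofUnit_sub_one h.act_zero)
    (actsBy_ofUnit_sub_one h.act_one)

lemma space_d_zero (h : IsInvolutionCoord x ρ t ε) :
    Represents (spaceCoord₀ x ε) (spaceCoord₁ x ε) ((space k x).d 0)
      (spaceDiff₀ fun w => t w - w) :=
  .cone_d_zero h.plane_d_zero (actsBy_ofUnit_sub_one h.act_two)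

lemma actsBy_planeCoord₁ (h : IsInvolutionCoord x ρ t ε) :
    ActsBy (planeCoord₁ (X := ofUnit k (x 0)) (Y := ofUnit k (x 1)) ε)
      (ofUnit k (x 2) - 1 : MonoidAlgebra k G)
      (Prod.map (fun w => t w - w) fun w => t w - w) :=
  have h₂ := actsBy_ofUnit_sub_one h.act_two
  h₂.emptySumCoord.sumCoord h₂

lemma space_d_one (h : IsInvolutionCoord x ρ t ε) :
    Represents (spaceCoord₁ x ε) (spaceCoord₂ x ε) ((space k x).d 1)
      (spaceDiff₁ fun w => t w - w) :=
  have hd : Represents (spaceCoord₁ x ε) (spaceCoord₂ x ε) ((space k x).d 1) _ :=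
    .cone_d_succ h.plane_d_one h.actsBy_planeCoord₁ h.plane_d_zero
  hd

lemma space_d_two (h : IsInvolutionCoord x ρ t ε) :
    Represents (spaceCoord₂ x ε) (spaceCoord₃ x ε) ((space k x).d 2)
      (spaceDiff₂ fun w => t w - w) :=
  have h₂ := actsBy_ofUnit_sub_one h.act_two
  have hd : Represents (spaceCoord₂ x ε) (spaceCoord₃ x ε) ((space k x).d 2) _ :=
    .cone_d_succ_of_isEmpty h₂.emptySumCoord.emptySumCoord h.plane_d_one
  hd

lemma actsBy_turn (h : IsInvolutionCoord x ρ t ε) :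
    ActsBy (pointCoord ε) (ofUnit k ρ : MonoidAlgebra k G) id :=
  actsBy_ofUnit h.act_turn

lemma actsBy_turn_mul_inv (h : IsInvolutionCoord x ρ t ε) :
    ActsBy (pointCoord ε) (↑(ofUnit k ρ * (ofUnit k (x 1))⁻¹) : MonoidAlgebra k G) t := by
  rw [← map_inv, ← map_mul]
  refine actsBy_ofUnit fun w => ?_
  rw [map_mul, Module.End.mul_apply, ← h.act_turn (t w), ← h.involutive w, ← h.act_one,
    Representation.inv_self_apply, h.involutive]

lemma planeTurn_zero (h : IsInvolutionCoord x ρ t ε) :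
    Represents (planeCoord₀ ε) (planeCoord₀ ε) (planeTurn k x ρ 0) id :=
  .diagonal h.actsBy_turn

lemma planeTurn_one (h : IsInvolutionCoord x ρ t ε) :
    Represents (planeCoord₁ ε) (planeCoord₁ ε) (planeTurn k x ρ 1) fun w => (-t w.2, w.1) :=
  quarterTurn_one_represents h.actsBy_turn h.actsBy_turn_mul_inv

lemma planeTurn_two (h : IsInvolutionCoord x ρ t ε) :
    Represents (planeCoord₂ ε) (planeCoord₂ ε) (planeTurn k x ρ 2) t :=
  quarterTurn_two_represents h.actsBy_turn_mul_inv

lemma spaceTurn_zero (h : IsInvolutionCoord x ρ t ε) :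
    Represents (spaceCoord₀ x ε) (spaceCoord₀ x ε) (spaceTurn k x ρ 0) id :=
  h.planeTurn_zero

lemma spaceTurn_one (h : IsInvolutionCoord x ρ t ε) :
    Represents (spaceCoord₁ x ε) (spaceCoord₁ x ε) (spaceTurn k x ρ 1) (spaceRot₁ t) :=
  have hd : Represents (spaceCoord₁ x ε) (spaceCoord₁ x ε) (spaceTurn k x ρ 1) _ :=
    .coneEnd_succ h.planeTurn_one h.planeTurn_zero
  hd

lemma spaceTurn_two (h : IsInvolutionCoord x ρ t ε) :
    Represents (spaceCoord₂ x ε) (spaceCoord₂ x ε) (spaceTurn k x ρ 2) (spaceRot₂ t) :=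
  have hd : Represents (spaceCoord₂ x ε) (spaceCoord₂ x ε) (spaceTurn k x ρ 2) _ :=
    .coneEnd_succ h.planeTurn_two h.planeTurn_one
  hd

lemma spaceTurn_three (h : IsInvolutionCoord x ρ t ε) :
    Represents (spaceCoord₃ x ε) (spaceCoord₃ x ε) (spaceTurn k x ρ 3) t :=
  .coneEnd_succ_of_isEmpty h.planeTurn_two

lemma asAlgebraHom_three_sub_one (h : IsInvolutionCoord x ρ t ε) :
    A.ρ.asAlgebraHom (ofUnit k (x 3) - 1 : MonoidAlgebra k G) = 0 := by
  ext a
  obtain ⟨w, rfl⟩ := ε.surjective a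
  change A.ρ.asAlgebraHom (MonoidAlgebra.of k G (x 3) - 1) (ε w) = 0
  rw [map_sub, map_one, Representation.asAlgebraHom_of, LinearMap.sub_apply, h.act_three,
    Module.End.one_apply, sub_self]

lemma asAlgebraHom_three_inv (h : IsInvolutionCoord x ρ t ε) :
    A.ρ.asAlgebraHom (↑(ofUnit k (x 3))⁻¹ : MonoidAlgebra k G) = 1 := by
  rw [← map_inv]
  ext a
  obtain ⟨w, rfl⟩ := ε.surjective a
  change A.ρ.asAlgebraHom (MonoidAlgebra.of k G (x 3)⁻¹) (ε w) = ε w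
  rw [Representation.asAlgebraHom_of, ← h.act_three w, Representation.inv_self_apply, h.act_three]

lemma lattice_d_zero (h : IsInvolutionCoord x ρ t ε) :
    Represents (latticeCoord₀ x ε) (latticeCoord₁ x ε) ((lattice k x).d 0)
      fun a => (spaceDiff₀ (fun w => t w - w) a, 0) :=
  .cone_d_zero h.space_d_zero (.zero h.asAlgebraHom_three_sub_one)

lemma lattice_d_one (h : IsInvolutionCoord x ρ t ε) :
    Represents (latticeCoord₁ x ε) (latticeCoord₂ x ε) ((lattice k x).d 1)
      (Prod.map (spaceDiff₁ fun w => t w - w) (-spaceDiff₀ fun w => t w - w)) := fun a =>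
  (Represents.cone_d_succ h.space_d_one (.zero h.asAlgebraHom_three_sub_one) h.space_d_zero
    a).trans <| by simp only [Pi.zero_apply, zero_sub]; rfl

lemma lattice_d_two (h : IsInvolutionCoord x ρ t ε) :
    Represents (latticeCoord₂ x ε) (latticeCoord₃ x ε) ((lattice k x).d 2)
      (Prod.map (spaceDiff₂ fun w => t w - w) (-spaceDiff₁ fun w => t w - w)) := fun a =>
  (Represents.cone_d_succ h.space_d_two (.zero h.asAlgebraHom_three_sub_one) h.space_d_one
    a).trans <| by simp only [Pi.zero_apply, zero_sub]; rfl

lemma lattice_d_three (h : IsInvolutionCoord x ρ t ε) :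
    Represents (latticeCoord₃ x ε) (latticeCoord₄ x ε) ((lattice k x).d 3)
      fun a => -spaceDiff₂ (fun w => t w - w) a.2 := fun a =>
  (Represents.cone_d_succ_of_isEmpty (.zero h.asAlgebraHom_three_sub_one) h.space_d_two
    a).trans <| by simp only [Pi.zero_apply, zero_sub]; rfl

lemma latticeTurn_zero (h : IsInvolutionCoord x ρ t ε) :
    Represents (latticeCoord₀ x ε) (latticeCoord₀ x ε) (latticeTurn k x ρ 0) id :=
  h.spaceTurn_zero

lemma latticeTurn_one (h : IsInvolutionCoord x ρ t ε) :
    Represents (latticeCoord₁ x ε) (latticeCoord₁ x ε) (latticeTurn k x ρ 1)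
      (Prod.map (spaceRot₁ t) (-id)) :=
  .coneEnd_succ h.spaceTurn_one (.invTwist h.spaceTurn_zero (.one h.asAlgebraHom_three_inv))

lemma latticeTurn_two (h : IsInvolutionCoord x ρ t ε) :
    Represents (latticeCoord₂ x ε) (latticeCoord₂ x ε) (latticeTurn k x ρ 2)
      (Prod.map (spaceRot₂ t) (-spaceRot₁ t)) :=
  .coneEnd_succ h.spaceTurn_two (.invTwist h.spaceTurn_one (.one h.asAlgebraHom_three_inv))

lemma latticeTurn_three (h : IsInvolutionCoord x ρ t ε) :
    Represents (latticeCoord₃ x ε) (latticeCoord₃ x ε) (latticeTurn k x ρ 3)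
      (Prod.map t (-spaceRot₂ t)) :=
  .coneEnd_succ h.spaceTurn_three (.invTwist h.spaceTurn_two (.one h.asAlgebraHom_three_inv))

lemma latticeTurn_four (h : IsInvolutionCoord x ρ t ε) :
    Represents (latticeCoord₄ x ε) (latticeCoord₄ x ε) (latticeTurn k x ρ 4) (-t) :=
  .coneEnd_succ_of_isEmpty (.invTwist h.spaceTurn_three (.one h.asAlgebraHom_three_inv))

end IsInvolutionCoord

/-- The sum of the first four iterates of `F`, the norm of an endomorphism of order four. -/
def norm₄ {X : Type} [AddCommGroup X] (F : X → X) (a : X) : X := a + F a + F (F a) + F (F (F a))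

lemma Represents.sum_pow_four {X κ : Type} [AddCommGroup X] [Fintype κ] [DecidableEq κ]
    {e : X ≃+ (κ → A)} {D : Matrix κ κ (MonoidAlgebra k G)} {F : X → X}
    (h : Represents e e D F) : Represents e e (∑ i ∈ Finset.range 4, D ^ i) (norm₄ F) := fun a =>
  (h.sum_pow 4 a).trans <| by
    simp only [Finset.sum_range_succ, Finset.sum_range_zero, zero_add]
    rfl

/-- The differential of `turnComplex` on cochains of degree three, when `x 0`, `x 1`, `x 2` act by
the involution `t`. The second components `c` belong to the copy of the cochains of `space` on which
the turn has the opposite sign. -/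
def turnDiff₃ (t : W → W) : Turn₃ W → W × Turn₃ W
  | ((a₃, c₂), (a₂, c₁), (a₁, c₀), a₀) =>
    let u w := t w - w
    (-spaceDiff₂ u c₂,
      (t a₃ - a₃ - spaceDiff₂ u a₂, -spaceRot₂ t c₂ - c₂ + spaceDiff₁ u c₁),
      (spaceDiff₁ u a₁ - norm₄ (spaceRot₂ t) a₂, -spaceDiff₀ u c₀ - norm₄ (-spaceRot₁ t) c₁),
      (spaceRot₁ t a₁ - a₁ - spaceDiff₀ u a₀, -c₀ - c₀),
      -norm₄ id a₀)

/-- The differential of `turnComplex` on cochains of degree four, when `x 0`, `x 1`, `x 2` act by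
the involution `t`. -/
def turnDiff₄ (t : W → W) : W × Turn₃ W → W × Turn₃ W
  | (c₃, (a₃, c₂), (a₂, c₁), (a₁, c₀), a₀) =>
    let u w := t w - w
    (-t c₃ - c₃ + spaceDiff₂ u c₂,
      (spaceDiff₂ u a₂ - norm₄ t a₃, -spaceDiff₁ u c₁ - norm₄ (-spaceRot₂ t) c₂),
      (spaceRot₂ t a₂ - a₂ - spaceDiff₁ u a₁, -spaceRot₁ t c₁ - c₁ + spaceDiff₀ u c₀),
      (spaceDiff₀ u a₀ - norm₄ (spaceRot₁ t) a₁, -norm₄ (-id) c₀),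
      0)

lemma norm₄_prodMap {X Y : Type} [AddCommGroup X] [AddCommGroup Y] (F : X → X) (F' : Y → Y)
    (a : X × Y) : norm₄ (Prod.map F F') a = (norm₄ F a.1, norm₄ F' a.2) := rfl

namespace IsInvolutionCoord

variable {t : W → W} {ε : W ≃+ A}

lemma turnComplex_d_three (h : IsInvolutionCoord x ρ t ε) :
    Represents (turnCoord₃ x ρ ε) (turnCoord₄ x ρ ε) ((turnComplex k x ρ).d 3) (turnDiff₃ t) := by
  have hd : Represents (turnCoord₃ x ρ ε) (turnCoord₄ x ρ ε) ((turnComplex k x ρ).d 3) _ :=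
    .totD_succ h.lattice_d_three (h.latticeTurn_three.sub .one)
      (.totD_succ h.lattice_d_two h.latticeTurn_two.sum_pow_four
        (.totD_succ h.lattice_d_one (h.latticeTurn_one.sub .one)
          (.totD_zero h.lattice_d_zero h.latticeTurn_zero.sum_pow_four)))
  rintro ⟨⟨a₃, c₂⟩, ⟨a₂, c₁⟩, ⟨a₁, c₀⟩, a₀⟩
  refine (hd _).trans (congrArg _ ?_)
  simp [turnDiff₃, norm₄_prodMap, sub_eq_add_neg]

lemma turnComplex_d_four (h : IsInvolutionCoord x ρ t ε) :
    Represents (turnCoord₄ x ρ ε) (turnCoord₅ x ρ ε) ((turnComplex k x ρ).d 4) (turnDiff₄ t) := by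
  have hd : Represents (turnCoord₄ x ρ ε) (turnCoord₅ x ρ ε) ((turnComplex k x ρ).d 4) _ :=
    .totD_succ_of_isEmpty (h.latticeTurn_four.sub .one)
      (.totD_succ h.lattice_d_three h.latticeTurn_three.sum_pow_four
        (.totD_succ h.lattice_d_two (h.latticeTurn_two.sub .one)
          (.totD_succ h.lattice_d_one h.latticeTurn_one.sum_pow_four
            (.totD_zero h.lattice_d_zero (h.latticeTurn_zero.sub .one)))))
  rintro ⟨c₃, ⟨a₃, c₂⟩, ⟨a₂, c₁⟩, ⟨a₁, c₀⟩, a₀⟩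
  refine (hd _).trans (congrArg _ ?_)
  simp [turnDiff₄, norm₄_prodMap, sub_eq_add_neg]

end IsInvolutionCoord
end TurnCochains
end LatticeCoordinates

section SwapCohomology

/-- The difference of a pair of integers and its reflection. -/
abbrev swapSub (w : ℤ × ℤ) : ℤ × ℤ := w.swap - w

lemma exists_turn_preimage {a₃ : ℤ × ℤ} {a₂ : Space₂ (ℤ × ℤ)} {a₁ : Space₁ (ℤ × ℤ)} {a₀ : ℤ × ℤ}
    (h₃ : spaceDiff₂ swapSub a₂ - norm₄ Prod.swap a₃ = 0)
    (h₂ : spaceRot₂ Prod.swap a₂ - a₂ - spaceDiff₁ swapSub a₁ = 0)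
    (h₁ : spaceDiff₀ swapSub a₀ - norm₄ (spaceRot₁ Prod.swap) a₁ = 0)
    (h₀ : 4 ∣ a₀.1) (hs : 2 ∣ a₂.1.1 + a₁.1.1.1 + a₁.1.1.2) :
    ∃ (b₃ : ℤ × ℤ) (b₂ : Space₂ (ℤ × ℤ)) (b₁ : Space₁ (ℤ × ℤ)) (b₀ : ℤ × ℤ),
      b₃.swap - b₃ - spaceDiff₂ swapSub b₂ = a₃ ∧
      spaceDiff₁ swapSub b₁ - norm₄ (spaceRot₂ Prod.swap) b₂ = a₂ ∧
      spaceRot₁ Prod.swap b₁ - b₁ - spaceDiff₀ swapSub b₀ = a₁ ∧ -norm₄ id b₀ = a₀ := by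
  obtain ⟨m, hm⟩ := h₀
  obtain ⟨l, hl⟩ := hs
  obtain ⟨s, p, q⟩ := a₂
  obtain ⟨⟨p', q'⟩, r⟩ := a₁
  let κ := -(p'.1 + q'.1 - 2 * r.1)
  let σ := -(l - p'.1 + r.1)
  refine ⟨(σ, a₃.1), ((σ, 0), 0, 0), (((κ + q'.1 - r.1, q'.2 + r.1), (κ, 0)), (0, -κ - q.1)),
    (-m, -m - r.1), ?_⟩
  simp only [spaceDiff₀, spaceDiff₁, spaceDiff₂, spaceRot₁, spaceRot₂, norm₄, Prod.ext_iff,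
    Prod.fst_sub, Prod.snd_sub, Prod.fst_add, Prod.snd_add, Prod.fst_neg, Prod.snd_neg,
    Prod.fst_swap, Prod.snd_swap, Prod.fst_zero, Prod.snd_zero, id, σ, κ] at *
  omega

lemma exists_negTurn_preimage {c₃ : ℤ × ℤ} {c₂ : Space₂ (ℤ × ℤ)} {c₁ : Space₁ (ℤ × ℤ)}
    {c₀ : ℤ × ℤ} (h₃ : -c₃.swap - c₃ + spaceDiff₂ swapSub c₂ = 0)
    (h₂ : -spaceDiff₁ swapSub c₁ - norm₄ (-spaceRot₂ Prod.swap) c₂ = 0)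
    (h₁ : -spaceRot₁ Prod.swap c₁ - c₁ + spaceDiff₀ swapSub c₀ = 0) (h₀ : 2 ∣ c₀.1)
    (hs : 2 ∣ c₃.1 + c₂.1.1 + c₂.2.1.1 + c₂.2.1.2 + c₁.1.1.1 + c₁.2.1) :
    ∃ (b₂ : Space₂ (ℤ × ℤ)) (b₁ : Space₁ (ℤ × ℤ)) (b₀ : ℤ × ℤ),
      -spaceDiff₂ swapSub b₂ = c₃ ∧ -spaceRot₂ Prod.swap b₂ - b₂ + spaceDiff₁ swapSub b₁ = c₂ ∧
      -spaceDiff₀ swapSub b₀ - norm₄ (-spaceRot₁ Prod.swap) b₁ = c₁ ∧ -b₀ - b₀ = c₀ := by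
  obtain ⟨m, hm⟩ := h₀
  obtain ⟨l, hl⟩ := hs
  obtain ⟨s, p, q⟩ := c₂
  obtain ⟨⟨p', q'⟩, r⟩ := c₁
  let e := r.1 - q'.1
  let f := p.1 - q.1 - e
  let i := (c₃.1 + e - s.1 + q.2 + f - q.1 + f) / 2
  refine ⟨((i, e - s.1 - i), (-q.1, -q.2 - f), (0, f)), (((0, e), 0), 0), (-m, -m - r.1), ?_⟩
  simp only [spaceDiff₀, spaceDiff₁, spaceDiff₂, spaceRot₁, spaceRot₂, norm₄, Prod.ext_iff,
    Prod.fst_sub, Prod.snd_sub, Prod.fst_add, Prod.snd_add, Prod.fst_neg, Prod.snd_neg,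
    Prod.fst_swap, Prod.snd_swap, Prod.fst_zero, Prod.snd_zero, Pi.neg_apply, i, f, e] at *
  omega

/-- The class of a cocycle of degree four of `turnComplex`, when `x 0`, `x 1`, `x 2` act by
exchanging two copies of `ℤ`. -/
def turnClass : (ℤ × ℤ) × Turn₃ (ℤ × ℤ) →+ ZMod 4 × (Fin 3 → ZMod 2) :=
  AddMonoidHom.mk'
    (fun (c₃, (_, c₂), (a₂, c₁), (a₁, c₀), a₀) =>
      (a₀.1, ![a₂.1.1 + a₁.1.1.1 + a₁.1.1.2, c₀.1,
        c₃.1 + c₂.1.1 + c₂.2.1.1 + c₂.2.1.2 + c₁.1.1.1 + c₁.2.1]))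
    fun a b => by
      ext i
      · simp
      · fin_cases i <;> simp <;> ring

lemma turnClass_eq_zero_iff {c₃ : ℤ × ℤ} {a₃ : ℤ × ℤ} {c₂ : Space₂ (ℤ × ℤ)} {a₂ : Space₂ (ℤ × ℤ)}
    {c₁ : Space₁ (ℤ × ℤ)} {a₁ : Space₁ (ℤ × ℤ)} {c₀ : ℤ × ℤ} {a₀ : ℤ × ℤ} :
    turnClass (c₃, (a₃, c₂), (a₂, c₁), (a₁, c₀), a₀) = 0 ↔
      4 ∣ a₀.1 ∧ 2 ∣ a₂.1.1 + a₁.1.1.1 + a₁.1.1.2 ∧ 2 ∣ c₀.1 ∧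
        2 ∣ c₃.1 + c₂.1.1 + c₂.2.1.1 + c₂.2.1.2 + c₁.1.1.1 + c₁.2.1 := by
  simp only [turnClass, AddMonoidHom.mk'_apply, Prod.ext_iff, funext_iff, Fin.forall_fin_succ,
    Prod.fst_zero, Prod.snd_zero, Pi.zero_apply, IsEmpty.forall_iff, and_true]
  simp only [← Int.cast_add]
  exact and_congr (ZMod.intCast_zmod_eq_zero_iff_dvd _ 4) <|
    and_congr (ZMod.intCast_zmod_eq_zero_iff_dvd _ 2) <|
    and_congr (ZMod.intCast_zmod_eq_zero_iff_dvd _ 2) (ZMod.intCast_zmod_eq_zero_iff_dvd _ 2)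

theorem isHomologyMap_turnClass :
    IsHomologyMap (turnDiff₃ Prod.swap) (turnDiff₄ Prod.swap) turnClass where
  map_boundary := by
    rintro ⟨⟨a₃, c₂⟩, ⟨a₂, c₁⟩, ⟨a₁, c₀⟩, a₀⟩
    rw [turnDiff₃, turnClass_eq_zero_iff]
    simp only [spaceDiff₀, spaceDiff₁, spaceDiff₂, spaceRot₁, spaceRot₂, norm₄, Pi.neg_apply,
      Prod.fst_sub, Prod.snd_sub, Prod.fst_add, Prod.snd_add, Prod.fst_neg, Prod.snd_neg,
      Prod.fst_swap, Prod.snd_swap, id]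
    omega
  surjective := by
    rintro ⟨n, m⟩
    obtain ⟨n, rfl⟩ := ZMod.intCast_surjective n
    choose i hi using fun j => ZMod.intCast_surjective (m j)
    refine ⟨((i 2, -i 2), (0, 0), (((i 0, i 0), 0, 0), 0), (0, (i 1, i 1)), (n, n)), ?_, ?_⟩
    · simp [turnDiff₄, spaceDiff₀, spaceDiff₁, spaceDiff₂, spaceRot₁, spaceRot₂, norm₄]
    · refine Prod.ext rfl (funext fun j => ?_)
      fin_cases j <;> simp [turnClass, ← hi]
  exact := by
    rintro ⟨c₃, ⟨a₃, c₂⟩, ⟨a₂, c₁⟩, ⟨a₁, c₀⟩, a₀⟩ hd hΦ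
    obtain ⟨ha₀, ha, hc₀, hc⟩ := turnClass_eq_zero_iff.1 hΦ
    simp only [turnDiff₄, Prod.mk_eq_zero] at hd
    obtain ⟨hc₃, ⟨ha₃, hc₂⟩, ⟨ha₂, hc₁⟩, ⟨ha₁, -⟩, -⟩ := hd
    obtain ⟨b₃, b₂, b₁, b₀, rfl, rfl, rfl, rfl⟩ := exists_turn_preimage ha₃ ha₂ ha₁ ha₀ ha
    obtain ⟨e₂, e₁, e₀, rfl, rfl, rfl, rfl⟩ := exists_negTurn_preimage hc₃ hc₂ hc₁ hc₀ hc
    exact ⟨((b₃, e₂), (b₂, e₁), (b₁, e₀), b₀), rfl⟩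

theorem IsQuarterTurnExtension.nonempty_groupCohomology_four_addEquiv {G : Type} [Group G]
    {x : Fin 4 → G} {ρ : G} {f : G →* Multiplicative (ZMod 4)} (hx : IsQuarterTurnExtension x ρ f)
    {A : Rep.{0} ℤ G} {ε : ℤ × ℤ ≃+ A}
    (hε : IsInvolutionCoord x ρ Prod.swap ε) :
    Nonempty (groupCohomology A 4 ≃+ ZMod 4 × (Fin 3 → ZMod 2)) := by
  have hC := hx.turnComplex_resolves (k := ℤ)
  rw [augIdeal_eq_ker_augmentation hx.closure_eq_top] at hC
  exact hC.nonempty_groupCohomology_addEquiv A 3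
    (isHomologyMap_turnClass.congr (turnCoord₃ x ρ ε).toEquiv (turnCoord₄ x ρ ε)
      (turnCoord₅ x ρ ε) hε.turnComplex_d_three hε.turnComplex_d_four)

end SwapCohomology

section SignCoinduction

variable {G : Type} [Group G] (χ : G →* ℤˣ)

/-- The representation of `G` coinduced from the trivial representation `ℤ` of `χ.ker`. -/
noncomputable abbrev signCoind : Rep ℤ G := Rep.coind χ.ker.subtype (Rep.trivial ℤ χ.ker ℤ)

variable {χ}

lemma signCoind_apply_eq (v : signCoind χ) {g h : G} (hgh : χ g = χ h) : v.1 g = v.1 h := by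
  have hmem : g * h⁻¹ ∈ χ.ker := by
    rw [MonoidHom.mem_ker, map_mul, map_inv, hgh, mul_inv_cancel]
  have hv := v.2 ⟨g * h⁻¹, hmem⟩ h
  rwa [Subgroup.subtype_apply, inv_mul_cancel_right] at hv

/-- An element of `signCoind χ` is determined by its values on the two fibres of `χ`. -/
noncomputable def signCoindEquiv {σ : G} (hσ : χ σ = -1) : ℤ × ℤ ≃+ signCoind χ :=
  AddEquiv.symm
    { toFun v := (v.1 1, v.1 σ)
      invFun w := ⟨fun g => if χ g = 1 then w.1 else w.2, fun s g => by
        change (if χ (s.1 * g) = 1 then w.1 else w.2) = if χ g = 1 then w.1 else w.2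
        rw [map_mul, show χ s.1 = 1 from s.2, one_mul]⟩
      left_inv v := Subtype.ext <| funext fun g => by
        rcases Int.units_eq_one_or (χ g) with hg | hg
        · exact (if_pos hg).trans (signCoind_apply_eq v (by rw [hg, map_one]))
        · exact (if_neg (by rw [hg]; decide)).trans (signCoind_apply_eq v (by rw [hg, hσ]))
      right_inv w := Prod.ext (if_pos (map_one χ)) (if_neg (by rw [hσ]; decide))
      map_add' _ _ := rfl }

lemma signCoind_ρ_of_eq_one {g : G} (hg : χ g = 1) (v : signCoind χ) :
    (signCoind χ).ρ g v = v :=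
  Subtype.ext <| funext fun h =>
    signCoind_apply_eq v (g := h * g) (h := h) (by rw [map_mul, hg, mul_one])

lemma signCoind_ρ_of_eq_neg_one {σ g : G} (hσ : χ σ = -1) (hg : χ g = -1) (w : ℤ × ℤ) :
    (signCoind χ).ρ g (signCoindEquiv hσ w) = signCoindEquiv hσ w.swap := by
  refine Subtype.ext <| funext fun h => ?_
  change (if χ (h * g) = 1 then w.1 else w.2) = if χ h = 1 then w.2 else w.1
  rw [map_mul, hg]
  rcases Int.units_eq_one_or (χ h) with hh | hh <;> simp [hh]

theorem isInvolutionCoord_signCoindEquiv {x : Fin 4 → G} {ρ : G} (h₀ : χ (x 0) = -1)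
    (h₁ : χ (x 1) = -1) (h₂ : χ (x 2) = -1) (h₃ : χ (x 3) = 1) (hρ : χ ρ = 1) :
    IsInvolutionCoord (A := signCoind χ) x ρ Prod.swap (signCoindEquiv h₀) where
  involutive := Prod.swap_swap
  act_zero := signCoind_ρ_of_eq_neg_one h₀ h₀
  act_one := signCoind_ρ_of_eq_neg_one h₀ h₁
  act_two := signCoind_ρ_of_eq_neg_one h₀ h₂
  act_three _ := signCoind_ρ_of_eq_one h₃ _
  act_turn _ := signCoind_ρ_of_eq_one hρ _

theorem nonempty_groupCohomology_signCoind_addEquiv {K : Type} [Group K] {j : K →* G}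
    (hj : Function.Injective j) (hrange : j.range = χ.ker) (n : ℕ) :
    Nonempty (groupCohomology (Rep.trivial ℤ K ℤ) n ≃+ groupCohomology (signCoind χ) n) :=
  let e : K ≃* χ.ker := (MonoidHom.ofInjective hj).trans (MulEquiv.subgroupCongr hrange)
  let shapiro := groupCohomology.coindIso (Rep.trivial ℤ χ.ker ℤ) n
  ⟨(groupCohomology.mapIso e (LinearEquiv.refl ℤ ℤ) (fun _ => rfl) n ≪≫
    shapiro.symm).toLinearEquiv.toAddEquiv⟩

end SignCoinduction

section CrystalGroups

open Crystal SemidirectProduct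

lemma IsLatticeBasis.map {G K : Type*} [Group G] [Group K] {n : ℕ} {x : Fin n → G}
    (hx : IsLatticeBasis x) {f : G →* K} (hf : Function.Injective f) :
    IsLatticeBasis fun i => f (x i) where
  commute i j := (hx.commute i j).map f
  eq_zero_of_pow_mem i m hm := by
    refine hx.eq_zero_of_pow_mem i m ?_
    rwa [← Set.image_image, ← MonoidHom.map_closure, ← map_pow, Subgroup.mem_map_iff_mem hf] at hm

/-- The standard basis of `ℤ^n`, in multiplicative notation. -/
def stdGen {n : ℕ} (i : Fin n) : Lat n := Multiplicative.ofAdd (Pi.single i 1)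

lemma isLatticeBasis_stdGen {n : ℕ} : IsLatticeBasis (stdGen (n := n)) where
  commute i j := Commute.all _ _
  eq_zero_of_pow_mem i m hm := by
    let coord : Lat n →* Multiplicative ℤ := (Pi.evalAddMonoidHom _ i).toMultiplicative
    have hker : Subgroup.closure (stdGen '' Set.Iio i) ≤ coord.ker := by
      rw [Subgroup.closure_le]
      rintro _ ⟨j, hj, rfl⟩
      exact congrArg Multiplicative.ofAdd (Pi.single_eq_of_ne hj.ne' 1)
    have hm : (m • Pi.single (M := fun _ : Fin n => ℤ) i 1) i = 0 := hker hm
    simpa using hm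

lemma closure_range_stdGen {n : ℕ} : Subgroup.closure (Set.range (stdGen (n := n))) = ⊤ := by
  refine (Subgroup.eq_top_iff' _).2 fun v => ?_
  have hv : v = ∏ i, stdGen i ^ v.toAdd i := Multiplicative.toAdd.injective <| by
    rw [toAdd_prod]
    exact pi_eq_sum_univ' v.toAdd
  rw [hv]
  exact prod_mem fun i _ => zpow_mem (Subgroup.subset_closure (Set.mem_range_self i)) _

variable {n q : ℕ} [NeZero q] {M : Matrix (Fin n) (Fin n) ℤ} {hq : M ^ q = 1}

lemma matAction_apply (g : Multiplicative (ZMod q)) (v : Lat n) :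
    matAction q M hq g v = Multiplicative.ofAdd ((M ^ g.toAdd.val) *ᵥ v.toAdd) := by
  change (glToAut n (matUnit M (q - 1) _) ^ g.toAdd.val) v = _
  rw [← map_pow]
  change Multiplicative.ofAdd ((matUnit M (q - 1) _ ^ g.toAdd.val).val *ᵥ v.toAdd) = _
  rw [Units.val_pow_eq_pow_val]
  rfl

lemma ker_rightHom_eq_closure :
    (rightHom : Crys q M hq →* _).ker = Subgroup.closure (Set.range fun i => inl (stdGen i)) := by
  rw [← range_inl_eq_ker_rightHom, MonoidHom.range_eq_map, ← closure_range_stdGen,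
    MonoidHom.map_closure, ← Set.range_comp]
  rfl

section CrysMap

variable {n' : ℕ} {M' : Matrix (Fin n') (Fin n') ℤ} {hq' : M' ^ q = 1}
  {J : Matrix (Fin n') (Fin n) ℤ}

/-- The homomorphism `ℤ^n ⋊ ℤ/q → ℤ^n' ⋊ ℤ/q` given by an intertwiner `J` of the two actions. -/
def crysMap (hJ : J * M = M' * J) : Crys q M hq →* Crys q M' hq' :=
  SemidirectProduct.map J.mulVecLin.toAddMonoidHom.toMultiplicative (MonoidHom.id _) fun g =>
    MonoidHom.ext fun v => by
      change Multiplicative.ofAdd (J *ᵥ (matAction q M hq g v).toAdd) =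
        matAction q M' hq' g (Multiplicative.ofAdd (J *ᵥ v.toAdd))
      rw [matAction_apply, matAction_apply, toAdd_ofAdd, toAdd_ofAdd, mulVec_mulVec, mulVec_mulVec,
        MatrixComplex.mul_pow_eq_pow_mul hJ]

lemma crysMap_injective (hJ : J * M = M' * J) (hinj : Function.Injective (J *ᵥ ·)) :
    Function.Injective (crysMap (hq := hq) (hq' := hq') hJ) := fun _ _ h =>
  SemidirectProduct.ext (hinj (SemidirectProduct.ext_iff.1 h).1) (SemidirectProduct.ext_iff.1 h).2

end CrysMap

lemma apply_matAction_of_forall_apply_mulVec {P : Type*} [Monoid P] {χ : Lat n →* P}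
    (hχ : ∀ v, χ (Multiplicative.ofAdd (M *ᵥ v)) = χ (Multiplicative.ofAdd v))
    (g : Multiplicative (ZMod q)) (v : Lat n) : χ (matAction q M hq g v) = χ v := by
  rw [matAction_apply]
  induction g.toAdd.val with
  | zero => rw [pow_zero, one_mulVec, ofAdd_toAdd]
  | succ m ih => rw [pow_succ', ← mulVec_mulVec, hχ, ih]

/-- The character of `ℤ^n ⋊ ℤ/q` given by an invariant character of `ℤ^n`. -/
def crysChar {P : Type*} [CommGroup P] (χ : Lat n →* P)
    (hχ : ∀ v, χ (Multiplicative.ofAdd (M *ᵥ v)) = χ (Multiplicative.ofAdd v)) :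
    Crys q M hq →* P :=
  SemidirectProduct.lift χ 1 fun g => MonoidHom.ext fun v => by
    rw [MonoidHom.one_apply, map_one]
    exact apply_matAction_of_forall_apply_mulVec hχ g v

end CrystalGroups

section QuarterTurnGroup

open Crystal SemidirectProduct

/-- The quarter turn of the first two coordinates, with the reflection of the last one. -/
def turnMatrix : Matrix (Fin 4) (Fin 4) ℤ := !![0, -1, 0, 0; 1, 0, 0, 0; 0, 0, 1, 0; 0, 0, 0, -1]

lemma turnMatrix_pow : turnMatrix ^ 4 = 1 := by decide

/-- A basis, in the coordinates of `turnMatrix`, of an invariant sublattice of index two on which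
`turnMatrix` acts by `holM`. -/
def evenBasis : Matrix (Fin 4) (Fin 4) ℤ := !![0, 1, 0, 1; 0, 0, 1, 0; 0, 1, 1, -1; 1, 0, 0, 0]

lemma evenBasis_mul_holM : evenBasis * holM = turnMatrix * evenBasis := by decide

lemma turnMatrix_mulVec (v : Fin 4 → ℤ) : turnMatrix *ᵥ v = ![-v 1, v 0, v 2, -v 3] := by
  funext i
  fin_cases i <;> simp [turnMatrix, mulVec, dotProduct, Fin.sum_univ_four]

lemma evenBasis_mulVec (v : Fin 4 → ℤ) :
    evenBasis *ᵥ v = ![v 1 + v 3, v 2, v 1 + v 2 - v 3, v 0] := by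
  funext i
  fin_cases i <;> simp [evenBasis, mulVec, dotProduct, Fin.sum_univ_four]
  ring

lemma evenBasis_mulVec_injective : Function.Injective (evenBasis *ᵥ ·) := fun v w h => by
  simp only [evenBasis_mulVec, funext_iff, Fin.forall_fin_succ] at h ⊢
  simp at h ⊢
  omega

lemma exists_evenBasis_mulVec_eq_iff {v : Fin 4 → ℤ} :
    (∃ w, evenBasis *ᵥ w = v) ↔ Even (v 0 + v 1 + v 2) := by
  simp only [evenBasis_mulVec]
  constructor
  · rintro ⟨w, rfl⟩
    exact ⟨w 1 + w 2, by simp; ring⟩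
  · rintro ⟨m, hm⟩
    refine ⟨![v 3, m - v 1, v 1, m - v 2], ?_⟩
    ext i
    fin_cases i <;> simp
    omega

/-- The sign given by the parity of the sum of the first three coordinates. -/
def paritySign : Lat 4 →* ℤˣ :=
  MonoidHom.mk' (fun v => (v.toAdd 0 + v.toAdd 1 + v.toAdd 2).negOnePow) fun v w => by
    rw [← Int.negOnePow_add]
    exact congrArg Int.negOnePow (by simp only [toAdd_mul, Pi.add_apply]; ring)

lemma paritySign_turnMatrix_mulVec (v : Fin 4 → ℤ) :
    paritySign (Multiplicative.ofAdd (turnMatrix *ᵥ v)) = paritySign (Multiplicative.ofAdd v) := by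
  rw [turnMatrix_mulVec]
  exact (Int.negOnePow_eq_iff _ _).2 ⟨-v 1, by simp; ring⟩

/-- The group `ℤ^4 ⋊ ℤ/4` containing `Γ` as a subgroup of index two. -/
abbrev TurnGroup : Type := Crys 4 turnMatrix turnMatrix_pow

/-- The character of `TurnGroup` with kernel `Γ`. -/
def turnSign : TurnGroup →* ℤˣ := crysChar paritySign paritySign_turnMatrix_mulVec

lemma turnSign_apply (g : TurnGroup) : turnSign g = paritySign g.left := mul_one _

lemma range_crysMap_eq_ker_turnSign :
    (crysMap (hq := holM_pow) (hq' := turnMatrix_pow) evenBasis_mul_holM).range = turnSign.ker := by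
  ext g
  rw [MonoidHom.mem_ker, turnSign_apply]
  refine Iff.trans ?_ (Int.negOnePow_eq_one_iff _).symm
  rw [← exists_evenBasis_mulVec_eq_iff]
  exact ⟨fun ⟨h, hh⟩ => ⟨h.left.toAdd, congrArg left hh⟩,
    fun ⟨w, hw⟩ => ⟨⟨Multiplicative.ofAdd w, g.right⟩, SemidirectProduct.ext hw rfl⟩⟩

lemma semiconjBy_inr_inl {v w : Fin 4 → ℤ} (h : turnMatrix *ᵥ v = w) :
    SemiconjBy (inr (Multiplicative.ofAdd 1) : TurnGroup) (inl (Multiplicative.ofAdd v))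
      (inl (Multiplicative.ofAdd w)) := by
  have haut : matAction 4 turnMatrix turnMatrix_pow (Multiplicative.ofAdd 1)
      (Multiplicative.ofAdd v) = Multiplicative.ofAdd w := by
    rw [matAction_apply, ← h, toAdd_ofAdd, toAdd_ofAdd]
    exact congrArg (fun A => Multiplicative.ofAdd (A *ᵥ v)) (pow_one turnMatrix)
  rw [← haut, inl_aut]
  simp [SemiconjBy]

lemma isQuarterTurnExtension_turnGroup :
    IsQuarterTurnExtension (fun i => (inl (stdGen i) : TurnGroup)) (inr (Multiplicative.ofAdd 1))
      rightHom where
  toIsLatticeBasis := isLatticeBasis_stdGen.map inl_injective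
  ker_eq := ker_rightHom_eq_closure
  map_eq := rightHom_inr _
  pow_four := by
    rw [← map_pow]
    exact map_one _
  semiconjBy_zero := semiconjBy_inr_inl (by decide)
  semiconjBy_one := semiconjBy_inr_inl (w := -Pi.single 0 1) (by decide)
  commute_two := semiconjBy_inr_inl (by decide)
  semiconjBy_three := semiconjBy_inr_inl (w := -Pi.single 3 1) (by decide)

theorem nonempty_H_four_addEquiv : Nonempty (H 4 ≃+ ZMod 4 × (Fin 3 → ZMod 2)) := by
  obtain ⟨shapiro⟩ := nonempty_groupCohomology_signCoind_addEquiv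
    (crysMap_injective evenBasis_mul_holM evenBasis_mulVec_injective)
    range_crysMap_eq_ker_turnSign 4
  have hx : IsInvolutionCoord (A := signCoind turnSign) (fun i => inl (stdGen i))
      (inr (Multiplicative.ofAdd 1)) Prod.swap (signCoindEquiv (turnSign_apply (inl (stdGen 0)))) :=
    isInvolutionCoord_signCoindEquiv _ (turnSign_apply _) (turnSign_apply _) (turnSign_apply _)
      (turnSign_apply _)
  obtain ⟨e⟩ := isQuarterTurnExtension_turnGroup.nonempty_groupCohomology_four_addEquiv hx
  exact ⟨shapiro.trans e⟩

end QuarterTurnGroup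

section KoszulCohomology

open Crystal CategoryTheory

namespace MatrixComplex

variable {Λ : Type*} [Ring Λ]

instance uniqueKoszulι : ∀ {n : ℕ} (y : Fin n → Λ), Unique ((koszul y).ι 0)
  | 0, _ => inferInstanceAs (Unique Unit)
  | _ + 1, y => uniqueKoszulι (Fin.init y)

lemma card_koszul_ι : ∀ {n : ℕ} (y : Fin n → Λ) (m : ℕ),
    Fintype.card ((koszul y).ι m) = n.choose m
  | _, y, 0 => by rw [Nat.choose_zero_right, Fintype.card_unique]
  | 0, _, _ + 1 => Fintype.card_eq_zero_iff.2 (inferInstanceAs (IsEmpty Empty))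
  | n + 1, y, m + 1 => by
    refine (Fintype.card_sum (α := (koszul (Fin.init y)).ι (m + 1))).trans ?_
    rw [card_koszul_ι, card_koszul_ι, Nat.choose_succ_succ, add_comm]

end MatrixComplex

open MatrixComplex

lemma matrixAct_eq_zero {k G ι κ : Type} [CommRing k] [Group G] [Fintype κ] {A : Rep.{0} k G}
    {D : Matrix ι κ (MonoidAlgebra k G)} (hD : ∀ i j, A.ρ.asAlgebraHom (D i j) = 0) :
    matrixAct A D = 0 := by
  ext a i
  exact Finset.sum_eq_zero fun j _ => by rw [hD, LinearMap.zero_apply]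

theorem nonempty_groupCohomology_trivial_lat_addEquiv (k : Type) [CommRing k] (n : ℕ) :
    ∀ m, Nonempty (groupCohomology (Rep.trivial k (Lat n) k) m ≃+ (Fin (n.choose m) → k))
  | 0 => by
    rw [Nat.choose_zero_right]
    exact ⟨(groupCohomology.H0IsoOfIsTrivial _).toLinearEquiv.toAddEquiv.trans
      (AddEquiv.piUnique fun _ : Fin 1 => k).symm⟩
  | m + 1 => by
    have hC := (isLatticeBasis_stdGen (n := n)).koszul_resolves (k := k)
    rw [augIdeal_eq_ker_augmentation closure_range_stdGen] at hC
    have hzero (m : ℕ) : matrixAct (Rep.trivial k (Lat n) k)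
        ((koszul fun i => MonoidAlgebra.of k (Lat n) (stdGen i) - 1).d m) = 0 :=
      matrixAct_eq_zero <| koszul_d_mem
        (S := (Rep.trivial k (Lat n) k).ρ.asAlgebraHom.toRingHom.toAddMonoidHom.ker)
        (fun i => by simp [Module.End.one_eq_id]) m
    have hid : IsHomologyMap (matrixAct (Rep.trivial k (Lat n) k) _) (matrixAct _ _)
        (AddMonoidHom.id _) :=
      { map_boundary := fun x => by rw [hzero m]; rfl
        surjective := fun t => ⟨t, by rw [hzero (m + 1)]; rfl, rfl⟩
        exact := fun y _ hy => ⟨0, (map_zero _).trans hy.symm⟩ }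
    obtain ⟨e⟩ := hC.nonempty_groupCohomology_addEquiv _ m hid
    exact ⟨e.trans (LinearEquiv.funCongrLeft k k
      (Fintype.equivFinOfCardEq (card_koszul_ι _ _)).symm).toAddEquiv⟩

end KoszulCohomology

section Alternation

open Equiv groupCohomology

variable {k : Type*} [CommRing k] {L : Type*} {n : ℕ}

variable (k L n) in
/-- Antisymmetrisation of functions of `n` variables. -/
def alternation : ((Fin n → L) → k) →ₗ[k] ((Fin n → L) → k) :=
  ∑ π : Perm (Fin n), (Perm.sign π : ℤ) • LinearMap.funLeft k k fun v => v ∘ π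

lemma alternation_apply (F : (Fin n → L) → k) (v : Fin n → L) :
    alternation k L n F v = ∑ π : Perm (Fin n), (Perm.sign π : ℤ) • F (v ∘ π) := by
  simp [alternation, LinearMap.sum_apply, Finset.sum_apply, LinearMap.funLeft_apply]

lemma alternation_comp_perm (F : (Fin n → L) → k) (σ : Perm (Fin n)) :
    alternation k L n (fun w => F (w ∘ σ)) = (Perm.sign σ : ℤ) • alternation k L n F := by
  ext v
  rw [Pi.smul_apply, alternation_apply, alternation_apply, Finset.smul_sum]
  refine Fintype.sum_equiv (Equiv.mulRight σ) _ _ fun π => ?_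
  simp only [Equiv.coe_mulRight, Perm.sign_mul, Units.val_mul, smul_smul, Perm.coe_mul,
    Function.comp_assoc]
  rw [mul_left_comm, Int.units_coe_mul_self, mul_one]

lemma alternation_eq_zero_of_swap {F : (Fin n → L) → k} {i j : Fin n} (hij : i ≠ j)
    (hF : ∀ w, F (w ∘ swap i j) = F w) : alternation k L n F = 0 := by
  ext v
  rw [alternation_apply]
  refine Finset.sum_involution (fun π _ => π * swap i j) (fun π _ => ?_) (fun π _ _ h => hij ?_)
    (fun π _ => Finset.mem_univ _) fun π _ => ?_
  · rw [Perm.coe_mul, ← Function.comp_assoc, hF, Perm.sign_mul, Perm.sign_swap hij]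
    simp
  · exact swap_eq_one_iff.1 (mul_eq_left.1 h)
  · rw [mul_assoc, Equiv.swap_mul_self, mul_one]

lemma contractNth_comp_swap [CommMonoid L] (j : Fin n) (w : Fin (n + 1) → L) :
    j.castSucc.contractNth (· * ·) (w ∘ swap j.castSucc j.succ) =
      j.castSucc.contractNth (· * ·) w := by
  ext i
  rcases lt_trichotomy (i : ℕ) j with h | h | h
  · rw [Fin.contractNth_apply_of_lt _ _ _ _ h, Fin.contractNth_apply_of_lt _ _ _ _ h,
      Function.comp_apply, swap_apply_of_ne_of_ne] <;> simp [Fin.ext_iff] <;> lia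
  · obtain rfl := Fin.ext h
    simp [Fin.contractNth_apply_of_eq, mul_comm]
  · rw [Fin.contractNth_apply_of_gt _ _ _ _ h, Fin.contractNth_apply_of_gt _ _ _ _ h,
      Function.comp_apply, swap_apply_of_ne_of_ne] <;> simp [Fin.ext_iff] <;> lia

lemma contractNth_last [Mul L] (w : Fin (n + 1) → L) :
    (Fin.last n).contractNth (· * ·) w = w ∘ Fin.castSucc :=
  funext fun i => Fin.contractNth_apply_of_lt _ _ _ _ i.is_lt

end Alternation

section AlternationCoboundary

open Equiv groupCohomology

variable {k L : Type} [CommRing k] [CommGroup L] {n : ℕ}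

/-- A face multiplying two neighbouring entries is symmetric in them, and the two outer faces differ
by a cyclic permutation. -/
theorem alternation_d (F : (Fin n → L) → k) :
    alternation k L (n + 1) ((inhomogeneousCochains.d (Rep.trivial k L k) n).hom F) = 0 := by
  have hd : (inhomogeneousCochains.d (Rep.trivial k L k) n).hom F = (fun w => F (w ∘ Fin.succ)) +
      ∑ j : Fin (n + 1), (-1 : k) ^ ((j : ℕ) + 1) • fun w => F (j.contractNth (· * ·) w) := by
    ext w
    rw [Pi.add_apply, Finset.sum_apply]
    exact inhomogeneousCochains.d_hom_apply (A := Rep.trivial k L k) n F w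
  have hinner (j : Fin n) :
      alternation k L (n + 1) (fun w => F (j.castSucc.contractNth (· * ·) w)) = 0 :=
    alternation_eq_zero_of_swap j.castSucc_lt_succ.ne fun w => by rw [contractNth_comp_swap]
  have houter : alternation k L (n + 1) (fun w => F (w ∘ Fin.succ)) =
      (-1 : k) ^ n • alternation k L (n + 1) fun w => F (w ∘ Fin.castSucc) := by
    have hrot : (finRotate (n + 1) ∘ Fin.castSucc) = Fin.succ :=
      funext fun i => by rw [Function.comp_apply, finRotate_apply, Fin.coeSucc_eq_succ]
    rw [← hrot]
    refine (alternation_comp_perm (fun w => F (w ∘ Fin.castSucc)) (finRotate (n + 1))).trans ?_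
    rw [sign_finRotate, ← Int.cast_smul_eq_zsmul k]
    simp
  rw [hd, map_add, map_sum, Fin.sum_univ_castSucc, houter]
  simp only [map_smul, hinner, smul_zero, Finset.sum_const_zero, zero_add, contractNth_last,
    Fin.val_last]
  rw [← add_smul, pow_succ, mul_neg_one, add_neg_cancel, zero_smul]

end AlternationCoboundary

section ProductCochains

open groupCohomology

variable {k : Type} [CommRing k]

lemma add_sum_neg_one_pow_mul_add : ∀ {n : ℕ} (t : Fin (n + 1) → k),
    t 0 + ∑ j : Fin n, (-1) ^ ((j : ℕ) + 1) * (t j.castSucc + t j.succ) =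
      (-1) ^ n * t (Fin.last n)
  | 0, t => by simp
  | n + 1, t => by
    rw [Fin.sum_univ_castSucc, ← add_assoc]
    have := add_sum_neg_one_pow_mul_add fun j : Fin (n + 1) => t j.castSucc
    simp only [Fin.castSucc_zero] at this
    simp only [Fin.val_castSucc, Fin.succ_castSucc, this, Fin.val_last, Fin.succ_last]
    ring

variable {L : Type} [Group L] {n : ℕ}

/-- The cup product of the degree-one cocycles `f i`, as a cochain. -/
def productCochain (f : Fin n → Additive L →+ k) (w : Fin n → L) : k :=
  ∏ i, f i (Additive.ofMul (w i))

lemma productCochain_contractNth (f : Fin n → Additive L →+ k) (w : Fin (n + 1) → L)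
    (j : Fin n) : productCochain f (j.castSucc.contractNth (· * ·) w) =
      productCochain f (w ∘ j.castSucc.succAbove) + productCochain f (w ∘ j.succ.succAbove) := by
  refine (Finset.prod_add_prod_eq (Finset.mem_univ j) ?_ (fun i _ hij => ?_)
    fun i _ hij => ?_).symm
  · rw [Fin.contractNth_apply_of_eq _ _ _ _ rfl, ofMul_mul, map_add, add_comm]
    simp
  all_goals
    rcases hij.lt_or_gt with h | h
    · rw [Fin.contractNth_apply_of_lt _ _ _ _ h, Function.comp_apply, Fin.succAbove_of_castSucc_lt]
      first | exact h | exact Nat.lt_succ_of_lt h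
    · rw [Fin.contractNth_apply_of_gt _ _ _ _ h, Function.comp_apply, Fin.succAbove_of_le_castSucc]
      first | exact h.le | exact h

theorem d_productCochain (f : Fin n → Additive L →+ k) :
    (inhomogeneousCochains.d (Rep.trivial k L k) n).hom (productCochain f) = 0 := by
  ext w
  rw [Pi.zero_apply]
  refine (inhomogeneousCochains.d_hom_apply (A := Rep.trivial k L k) n _ w).trans ?_
  change productCochain f (w ∘ Fin.succ) + ∑ j : Fin (n + 1), (-1 : k) ^ ((j : ℕ) + 1) *
    productCochain f (j.contractNth (· * ·) w) = 0
  have htel := add_sum_neg_one_pow_mul_add fun j => productCochain f (w ∘ j.succAbove)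
  rw [Fin.succAbove_zero, Fin.succAbove_last] at htel
  simp only [Fin.sum_univ_castSucc, ← add_assoc, productCochain_contractNth, Fin.val_castSucc, htel,
    contractNth_last, Fin.val_last]
  ring

lemma alternation_productCochain (f : Fin n → Additive L →+ k) (v : Fin n → L) :
    alternation k L n (productCochain f) v =
      (Matrix.of fun i j => f j (Additive.ofMul (v i))).det := by
  rw [alternation_apply, Matrix.det_apply]
  rfl

end ProductCochains

section Periods

open CategoryTheory Crystal groupCohomology

section Homology

variable {k : Type} [CommRing k] {K K' : CochainComplex (ModuleCat.{0} k) ℕ} {n : ℕ}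
  {Y : ModuleCat.{0} k}

/-- The map out of cohomology induced by a map that kills coboundaries. -/
noncomputable def homologyDesc (e : K.X n ⟶ Y) (he : ∀ m, K.d m n ≫ e = 0) : K.homology n ⟶ Y :=
  K.homologyι n ≫ K.descOpcycles e _ rfl (he _)

lemma homologyDesc_homologyMap_homologyπ (φ : K' ⟶ K) (e : K.X n ⟶ Y)
    (he : ∀ m, K.d m n ≫ e = 0) (z : K'.cycles n) :
    homologyDesc e he (HomologicalComplex.homologyMap φ n (K'.homologyπ n z)) =
      e (φ.f n (K'.iCycles n z)) := by
  have hφ : K'.homologyπ n ≫ HomologicalComplex.homologyMap φ n ≫ homologyDesc e he =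
      K'.iCycles n ≫ φ.f n ≫ e := by
    rw [homologyDesc, HomologicalComplex.homologyι_naturality_assoc,
      HomologicalComplex.homology_π_ι_assoc, HomologicalComplex.p_opcyclesMap_assoc,
      HomologicalComplex.p_descOpcycles]
  exact ConcreteCategory.congr_hom hφ z

end Homology

variable {k L : Type} [CommRing k] [CommGroup L] {n : ℕ} {B : Type}

/-- The cohomology class of `productCochain f`. -/
noncomputable def productClass (f : Fin n → Additive L →+ k) :
    groupCohomology (Rep.trivial k L k) n :=
  groupCohomology.π _ n (cocyclesMk (A := Rep.trivial k L k) (productCochain f)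
    (d_productCochain f))

/-- The values at the tuples `v b` of the antisymmetrisation of a cochain. -/
noncomputable def evalAlternation (v : B → Fin n → L) :
    (inhomogeneousCochains (Rep.trivial k L k)).X n ⟶ ModuleCat.of k (B → k) :=
  ModuleCat.ofHom ((LinearMap.funLeft k k v).comp (alternation k L n))

lemma d_comp_evalAlternation (v : B → Fin n → L) (m : ℕ) :
    (inhomogeneousCochains (Rep.trivial k L k)).d m n ≫ evalAlternation v = 0 := by
  by_cases hmn : m + 1 = n
  · subst hmn
    rw [inhomogeneousCochains.d_def]
    exact ModuleCat.hom_ext (LinearMap.ext fun F => congrArg (· ∘ v) (alternation_d (k := k) F))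
  · rw [(inhomogeneousCochains (Rep.trivial k L k)).shape _ _ hmn, Limits.zero_comp]

/-- The pairing of a cohomology class with the tori spanned by the tuples `v b`. -/
noncomputable def periods (v : B → Fin n → L) :
    groupCohomology (Rep.trivial k L k) n ⟶ ModuleCat.of k (B → k) :=
  homologyDesc (evalAlternation v) (d_comp_evalAlternation v)

lemma periods_homologyMap_productClass (v : B → Fin n → L)
    (φ : inhomogeneousCochains (Rep.trivial k L k) ⟶ inhomogeneousCochains (Rep.trivial k L k))
    (f : Fin n → Additive L →+ k) :
    periods v (HomologicalComplex.homologyMap φ n (productClass f)) =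
      evalAlternation v (φ.f n (productCochain f)) :=
  (homologyDesc_homologyMap_homologyπ φ _ (d_comp_evalAlternation v) _).trans <|
    congrArg (fun F => evalAlternation v (φ.f n F)) (iCocycles_mk (A := Rep.trivial k L k) _ _)

lemma periods_cochainsMap_productClass (v : B → Fin n → L) (φ : L →* L)
    (f : Fin n → Additive L →+ k) (b : B) :
    periods v (HomologicalComplex.homologyMap (cochainsMap (Rep.trivial k L k) (Rep.trivial k L k) φ
      LinearMap.id fun _ _ => rfl) n (productClass f)) b =
      (Matrix.of fun i j => f j (Additive.ofMul (φ (v b i)))).det :=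
  (congrFun (periods_homologyMap_productClass v _ f) b).trans
    (alternation_productCochain (fun i => (f i).comp (MonoidHom.toAdditive φ)) (v b))

lemma periods_productClass (v : B → Fin n → L) (f : Fin n → Additive L →+ k) (b : B) :
    periods v (productClass f) b = (Matrix.of fun i j => f j (Additive.ofMul (v b i))).det := by
  have h := periods_homologyMap_productClass v (𝟙 _) f
  rw [HomologicalComplex.homologyMap_id] at h
  exact (congrFun h b).trans (alternation_productCochain f (v b))

end Periods

section Compound

open CategoryTheory Crystal

variable {n j : ℕ} {B : Type}

/-- The minors of `N` with rows and columns in the given family `J` of index tuples. For the family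
of all increasing tuples this is a compound matrix. -/
def compound (J : B → Fin j → Fin n) (N : Matrix (Fin n) (Fin n) ℤ) :
    Matrix B B ℤ :=
  Matrix.of fun a b => (N.submatrix (J a) (J b)).det

/-- The coordinate homomorphisms of `ℤ^n`. -/
def latCoord (i : Fin n) : Additive (Lat n) →+ ℤ :=
  (Pi.evalAddMonoidHom (fun _ : Fin n => ℤ) i).comp
    (AddEquiv.additiveMultiplicative (Fin n → ℤ)).toAddMonoidHom

lemma det_latCoord_mulVec_stdGen {J : B → Fin j → Fin n} (N : Matrix (Fin n) (Fin n) ℤ) (a b : B) :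
    (Matrix.of fun i l => latCoord (J a l) (Additive.ofMul
      (Multiplicative.ofAdd (N *ᵥ (stdGen (J b i)).toAdd)))).det = compound J N a b := by
  rw [← det_transpose]
  refine congrArg det (Matrix.ext fun i l => ?_)
  change (N *ᵥ Pi.single (J b l) 1) (J a i) = N (J a i) (J b l)
  rw [mulVec_single_one, col_apply]

variable [Fintype B] [DecidableEq B]

lemma exists_addEquiv_mulVec {A : Type} [AddCommGroup A] (e₀ : A ≃+ (B → ℤ)) {c : A →+ (B → ℤ)}
    {x : B → A} (hx : ∀ b, c (x b) = Pi.single b 1) :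
    ∃ e : A ≃+ (B → ℤ), ∀ (σ : A →+ A) (P : Matrix B B ℤ), (∀ b, c (σ (x b)) = P b) →
      ∀ a, e (σ a) = Pᵀ *ᵥ e a := by
  have hc (t : B → ℤ) : c (∑ b, t b • x b) = t := by
    simp only [map_sum, map_zsmul, hx]
    exact (pi_eq_sum_univ' t).symm
  have hsurj : Function.Surjective c := fun t => ⟨_, hc t⟩
  have hinj : Function.Injective c := IsNoetherian.injective_of_surjective_of_injective
    e₀.toAddMonoidHom.toIntLinearMap c.toIntLinearMap e₀.injective hsurj
  refine ⟨AddEquiv.ofBijective c ⟨hinj, hsurj⟩, fun σ P hP a => ?_⟩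
  obtain ⟨t, rfl⟩ : ∃ t : B → ℤ, ∑ b, t b • x b = a := ⟨c a, hinj (hc _)⟩
  change c (σ _) = Pᵀ *ᵥ c _
  rw [hc, mulVec_transpose, vecMul_eq_sum, map_sum, map_sum]
  simp only [map_zsmul, hP]

variable {q : ℕ} [NeZero q] {M : Matrix (Fin n) (Fin n) ℤ} {hq : M ^ q = 1}

/-- `H^j(ℤ^n, ℤ)` is the `j`-th exterior power of the dual lattice. -/
theorem exists_cohRep_addEquiv_mulVec {J : B → Fin j → Fin n} (hB : Fintype.card B = n.choose j)
    (hJ : compound J 1 = 1) :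
    ∃ e : cohRep (matAction q M hq) (1 : Representation ℤ (Multiplicative (ZMod q)) ℤ) j ≃+
        (B → ℤ), ∀ g x, e ((cohRep (matAction q M hq) 1 j).ρ g x) =
      (compound J (M ^ (g⁻¹).toAdd.val))ᵀ *ᵥ e x := by
  obtain ⟨e₀⟩ := nonempty_groupCohomology_trivial_lat_addEquiv ℤ n j
  let e₁ := e₀.trans (LinearEquiv.funCongrLeft ℤ ℤ (Fintype.equivFinOfCardEq hB)).toAddEquiv
  obtain ⟨e, he⟩ := exists_addEquiv_mulVec e₁
    (c := (periods fun b i => stdGen (J b i)).hom.toAddMonoidHom)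
    (x := fun b => productClass fun i => latCoord (J b i)) fun a => funext fun b => by
      refine (periods_productClass _ _ b).trans ?_
      have hab := det_latCoord_mulVec_stdGen (J := J) 1 a b
      rw [hJ, one_apply, if_congr eq_comm rfl rfl, ← Pi.single_apply a (1 : ℤ) b] at hab
      simpa only [one_mulVec, ofAdd_toAdd] using hab
  refine ⟨e, fun g => he ((cohRep (matAction q M hq) 1 j).ρ g).toAddMonoidHom _ fun a =>
    funext fun b => ?_⟩
  refine (periods_cochainsMap_productClass _ _ _ b).trans ?_
  simp only [MulEquiv.coe_toMonoidHom, matAction_apply]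
  exact det_latCoord_mulVec_stdGen _ a b

end Compound

section CyclicCohomology

open CategoryTheory Rep.FiniteCyclicGroup

variable {k G B : Type} [CommRing k] [CommGroup G] [Fintype B] [DecidableEq B]
  {A : Rep.{0} k G} {g : G} {P : Matrix B B k} {e : A ≃+ (B → k)}

lemma apply_ρ_pow (he : ∀ x, e (A.ρ g x) = P *ᵥ e x) (l : ℕ) (x : A) :
    e (A.ρ (g ^ l) x) = P ^ l *ᵥ e x := by
  induction l with
  | zero => rw [pow_zero, pow_zero, map_one, one_mulVec]; rfl
  | succ l ih => rw [pow_succ', map_mul, pow_succ', ← mulVec_mulVec, ← ih]; exact he _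

lemma ρ_symm_sub_symm (he : ∀ x, e (A.ρ g x) = P *ᵥ e x) (y : B → k) :
    A.ρ g (e.symm y) - e.symm y = e.symm ((P - 1) *ᵥ y) :=
  e.injective <| by
    rw [map_sub, he, e.apply_symm_apply, e.apply_symm_apply, sub_mulVec, one_mulVec]

lemma ρ_norm_symm [Fintype G] (hg : ∀ x, x ∈ Subgroup.zpowers g)
    (he : ∀ x, e (A.ρ g x) = P *ᵥ e x) (y : B → k) :
    A.ρ.norm (e.symm y) = e.symm ((∑ l ∈ Finset.range (orderOf g), P ^ l) *ᵥ y) := by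
  classical
  rw [e.eq_symm_apply, Representation.norm, ← IsCyclic.image_range_orderOf hg,
    Finset.sum_image fun i hi j hj => pow_injOn_Iio_orderOf (by simpa using hi) (by simpa using hj),
    LinearMap.sum_apply, map_sum, sum_mulVec]
  refine Finset.sum_congr rfl fun l _ => ?_
  rw [apply_ρ_pow he, e.apply_symm_apply]

variable {T : Type} [AddCommGroup T] {Φ : (B → k) →+ T}

lemma nonempty_groupCohomology_addEquiv_of_odd [Finite G] (hg : ∀ x, x ∈ Subgroup.zpowers g)
    (he : ∀ x, e (A.ρ g x) = P *ᵥ e x) {i : ℕ} (hi : Odd i)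
    (hΦ : IsHomologyMap ((P - 1) *ᵥ ·) ((∑ l ∈ Finset.range (orderOf g), P ^ l) *ᵥ ·) Φ) :
    Nonempty (groupCohomology A i ≃+ T) := by
  cases nonempty_fintype G
  obtain ⟨e'⟩ := IsHomologyMap.nonempty_homology_addEquiv (subCompNormHom A g) <|
    hΦ.congr e.symm.toEquiv e.symm e.symm (ρ_symm_sub_symm he) (ρ_norm_symm hg he)
  exact ⟨(groupCohomologyIsoOdd A g hg i hi).toLinearEquiv.toAddEquiv.trans e'⟩

lemma nonempty_groupCohomology_addEquiv_of_even [Finite G] (hg : ∀ x, x ∈ Subgroup.zpowers g)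
    (he : ∀ x, e (A.ρ g x) = P *ᵥ e x) {i : ℕ} [NeZero i] (hi : Even i)
    (hΦ : IsHomologyMap ((∑ l ∈ Finset.range (orderOf g), P ^ l) *ᵥ ·) ((P - 1) *ᵥ ·) Φ) :
    Nonempty (groupCohomology A i ≃+ T) := by
  cases nonempty_fintype G
  obtain ⟨e'⟩ := IsHomologyMap.nonempty_homology_addEquiv (normHomCompSub A g) <|
    hΦ.congr e.symm.toEquiv e.symm e.symm (ρ_norm_symm hg he) (ρ_symm_sub_symm he)
  exact ⟨(groupCohomologyIsoEven A g hg i hi).toLinearEquiv.toAddEquiv.trans e'⟩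

end CyclicCohomology

lemma subsingleton_groupCohomology_zero {k G : Type} [CommRing k] [Group G] {A : Rep.{0} k G}
    (h : ∀ x : A, (∀ g, A.ρ g x = x) → x = 0) : Subsingleton (groupCohomology A 0) := by
  have : Subsingleton A.ρ.invariants :=
    ⟨fun x y => Subtype.ext ((h x.1 x.2).trans (h y.1 y.2).symm)⟩
  exact (groupCohomology.H0Iso A).toLinearEquiv.toEquiv.subsingleton

section HomologyOfMatrices

variable {A B C : Type} [Fintype A] [Fintype B] [Fintype C] {m : ℕ}

/-- The linear functional with coefficients `a`, reduced modulo `m`. -/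
def dotMod (m : ℕ) (a : B → ℤ) : (B → ℤ) →+ ZMod m :=
  AddMonoidHom.mk' (fun y => ((a ⬝ᵥ y : ℤ) : ZMod m)) fun x y => by
    rw [dotProduct_add, Int.cast_add]

lemma dotMod_eq_zero_iff {a y : B → ℤ} : dotMod m a y = 0 ↔ (m : ℤ) ∣ a ⬝ᵥ y :=
  ZMod.intCast_zmod_eq_zero_iff_dvd _ _

/-- `U` and `V / c` contract the complex `ℤ^A → ℤ^B → ℤ^C` up to the projection `a` to the line
spanned by the cycle `z`, of order `m` in homology. -/
theorem isHomologyMap_dotMod [DecidableEq B] {D : Matrix B A ℤ} {N : Matrix C B ℤ}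
    {a z : B → ℤ} {w : A → ℤ} (hD : ∀ l, (m : ℤ) ∣ (a ᵥ* D) l) (hz : N *ᵥ z = 0)
    (haz : a ⬝ᵥ z = 1) (hw : D *ᵥ w = (m : ℤ) • z)
    {U : Matrix A B ℤ} {V : Matrix B C ℤ} {c : ℤ} (hc : c ≠ 0)
    (hUV : c • (1 - D * U - vecMulVec z a) = V * N) :
    IsHomologyMap (D *ᵥ ·) (N *ᵥ ·) (dotMod m a) where
  map_boundary x := by
    rw [dotMod_eq_zero_iff, dotProduct_mulVec]
    exact Finset.dvd_sum fun l _ => (hD l).mul_right _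
  surjective t := by
    obtain ⟨l, rfl⟩ := ZMod.intCast_surjective t
    refine ⟨l • z, by simp only [mulVec_smul, hz, smul_zero], ?_⟩
    refine congrArg (Int.cast : ℤ → ZMod m) ?_
    rw [dotProduct_smul, haz, smul_eq_mul, mul_one]
  exact y hy hay := by
    obtain ⟨l, hl⟩ := dotMod_eq_zero_iff.1 hay
    have hy₀ : c • (y - D *ᵥ (U *ᵥ y) - (a ⬝ᵥ y) • z) = 0 := by
      have h := congrArg (· *ᵥ y) hUV
      simp only [smul_mulVec, sub_mulVec, one_mulVec, ← mulVec_mulVec, vecMulVec_mulVec,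
        op_smul_eq_smul] at h
      rw [hy, mulVec_zero] at h
      exact h
    refine ⟨U *ᵥ y + l • w, ?_⟩
    have h := sub_eq_zero.1 ((smul_eq_zero.1 hy₀).resolve_left hc)
    rw [mulVec_add, mulVec_smul, hw, smul_smul, mul_comm l, ← hl, ← h, add_sub_cancel]

end HomologyOfMatrices

section CohomologyOfCohomology

open Crystal

variable {n q i j : ℕ} [NeZero q] {M : Matrix (Fin n) (Fin n) ℤ} {hq : M ^ q = 1} {B : Type}
  [Fintype B] [DecidableEq B] {J : B → Fin j → Fin n} {P N : Matrix B B ℤ} {T : Type}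
  [AddCommGroup T] {Φ : (B → ℤ) →+ T}

lemma mem_zpowers_ofAdd_one (x : Multiplicative (ZMod q)) :
    x ∈ Subgroup.zpowers (Multiplicative.ofAdd (1 : ZMod q)) :=
  Subgroup.mem_zpowers_iff.2 ⟨x.toAdd.val, by
    rw [zpow_natCast, ← ofAdd_nsmul, nsmul_one, ZMod.natCast_zmod_val, ofAdd_toAdd]⟩

lemma orderOf_ofAdd_one (q : ℕ) : orderOf (Multiplicative.ofAdd (1 : ZMod q)) = q := by
  rw [orderOf_ofAdd_eq_addOrderOf, ZMod.addOrderOf_one]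

lemma exists_cohRep_addEquiv_generator (hB : Fintype.card B = n.choose j) (hJ : compound J 1 = 1)
    (hP : (compound J (M ^ (q - 1)))ᵀ = P) :
    ∃ e : cohRep (matAction q M hq) (1 : Representation ℤ (Multiplicative (ZMod q)) ℤ) j ≃+
        (B → ℤ), ∀ x, e ((cohRep (matAction q M hq) 1 j).ρ (Multiplicative.ofAdd 1) x) =
      P *ᵥ e x := by
  obtain ⟨e, he⟩ := exists_cohRep_addEquiv_mulVec (hq := hq) hB hJ
  refine ⟨e, fun x => (he _ x).trans ?_⟩
  obtain ⟨m, rfl⟩ := Nat.exists_eq_succ_of_ne_zero (NeZero.ne q)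
  rw [toAdd_inv, toAdd_ofAdd, ZMod.val_neg_one, ← hP, Nat.succ_sub_one]

lemma nonempty_cohOfCoh_addEquiv_of_odd (hi : Odd i) (hB : Fintype.card B = n.choose j)
    (hJ : compound J 1 = 1) (hP : (compound J (M ^ (q - 1)))ᵀ = P)
    (hΦ : IsHomologyMap ((P - 1) *ᵥ ·) ((∑ l ∈ Finset.range q, P ^ l) *ᵥ ·) Φ) :
    Nonempty (cohOfCoh q M hq i j ≃+ T) := by
  obtain ⟨e, he⟩ := exists_cohRep_addEquiv_generator (hq := hq) hB hJ hP
  exact nonempty_groupCohomology_addEquiv_of_odd (A := cohRep (matAction q M hq) 1 j)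
    (g := Multiplicative.ofAdd (1 : ZMod q)) mem_zpowers_ofAdd_one he hi
    (by rwa [orderOf_ofAdd_one q])

lemma nonempty_cohOfCoh_addEquiv_of_even [NeZero i] (hi : Even i)
    (hB : Fintype.card B = n.choose j) (hJ : compound J 1 = 1)
    (hP : (compound J (M ^ (q - 1)))ᵀ = P)
    (hΦ : IsHomologyMap ((∑ l ∈ Finset.range q, P ^ l) *ᵥ ·) ((P - 1) *ᵥ ·) Φ) :
    Nonempty (cohOfCoh q M hq i j ≃+ T) := by
  obtain ⟨e, he⟩ := exists_cohRep_addEquiv_generator (hq := hq) hB hJ hP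
  exact nonempty_groupCohomology_addEquiv_of_even (A := cohRep (matAction q M hq) 1 j)
    (g := Multiplicative.ofAdd (1 : ZMod q)) mem_zpowers_ofAdd_one he hi
    (by rwa [orderOf_ofAdd_one q])

lemma subsingleton_cohOfCoh_zero (hB : Fintype.card B = n.choose j)
    (hJ : compound J 1 = 1) (hP : (compound J (M ^ (q - 1)))ᵀ = P)
    (hfix : ∀ y, P *ᵥ y = y → y = 0) : Subsingleton (cohOfCoh q M hq 0 j) := by
  obtain ⟨e, he⟩ := exists_cohRep_addEquiv_generator (hq := hq) hB hJ hP
  refine subsingleton_groupCohomology_zero fun x hx => e.map_eq_zero_iff.1 (hfix _ ?_)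
  rw [← he, hx]

end CohomologyOfCohomology

section SecondPage

lemma subsingleton_Hc_zero_four : Subsingleton (Hc 0 4) := by
  have hdet : (holM ^ 3).det = -1 := by
    rw [det_pow]
    simp [holM, det_succ_row_zero, Fin.sum_univ_succ]
  refine subsingleton_cohOfCoh_zero (J := fun _ : Fin 1 => id) (P := -1) rfl ?_ ?_ fun y hy => ?_
  · ext i j
    rw [compound, of_apply, submatrix_id_id, det_one, Subsingleton.elim i j, one_apply_eq]
  · ext i j
    rw [transpose_apply, compound, of_apply, submatrix_id_id, hdet, Subsingleton.elim i j,
      neg_apply, one_apply_eq]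
  · simpa [neg_mulVec, neg_eq_self] using hy

lemma nonempty_Hc_one_three_addEquiv : Nonempty (Hc 1 3 ≃+ ZMod 4) :=
  nonempty_cohOfCoh_addEquiv_of_odd
    (J := ![![0, 1, 2], ![0, 1, 3], ![0, 2, 3], ![1, 2, 3]])
    (P := !![-1, -1, 0, 0; 1, 0, 1, 0; 1, 0, 0, 0; 0, 0, 0, 1])
    odd_one rfl (by simp only [compound, det_fin_three]; decide)
    (by simp only [compound, det_fin_three]; decide)
    (isHomologyMap_dotMod (a := ![-1, 1, 1, 0]) (z := ![0, 1, 0, 0]) (w := ![1, -2, 1, 0])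
      (U := !![0, 0, 0, 0; -1, 0, 0, 0; 0, 0, -1, 0; 0, 0, 0, 0]) (V := single 3 3 1) (c := 4)
      (by decide) (by decide) (by decide) (by decide) (by decide) (by decide))

lemma nonempty_Hc_two_two_addEquiv : Nonempty (Hc 2 2 ≃+ ZMod 2) :=
  nonempty_cohOfCoh_addEquiv_of_even
    (J := ![![0, 1], ![0, 2], ![0, 3], ![1, 2], ![1, 3], ![2, 3]])
    (P := !![-1, 1, 1, 0, 0, 0; -1, 0, 0, 0, 0, 0; 0, 1, 0, 0, 0, 0; 0, 0, 0, 1, 1, 0;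
      0, 0, 0, -1, 0, -1; 0, 0, 0, -1, 0, 0])
    even_two rfl (by simp only [compound, det_fin_two]; decide)
    (by simp only [compound, det_fin_two]; decide)
    (isHomologyMap_dotMod (a := Pi.single 3 1) (z := ![0, 0, 0, 1, 0, -1]) (w := Pi.single 3 1)
      (U := 0) (V := !![-1, -2, -1, 0, 0, 0; 1, -2, 1, 0, 0, 0; 1, -2, -3, 0, 0, 0;
        0, 0, 0, 0, 0, 0; 0, 0, 0, 4, 0, 0; 0, 0, 0, 0, 0, -4]) (c := 4)
      (by decide) (by decide) (by decide) (by decide) (by decide) (by decide))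

lemma nonempty_Hc_three_one_addEquiv : Nonempty (Hc 3 1 ≃+ ZMod 2) :=
  nonempty_cohOfCoh_addEquiv_of_odd
    (J := fun i => ![i])
    (P := !![-1, 0, 0, 0; 0, 1, -1, -1; 0, 1, 0, 0; 0, 0, -1, 0])
    (by decide) rfl (by simp only [compound, det_fin_one]; decide)
    (by simp only [compound, det_fin_one]; decide)
    (isHomologyMap_dotMod (a := Pi.single 0 1) (z := Pi.single 0 1) (w := Pi.single 0 (-1))
      (U := !![0, 0, 0, 0; 0, 0, 1, 0; 0, 0, 0, 0; 0, -1, 0, 0]) (V := single 3 1 (-1)) (c := 2)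
      (by decide) (by decide) (by decide) (by decide) (by decide) (by decide))

lemma nonempty_Hc_four_zero_addEquiv : Nonempty (Hc 4 0 ≃+ ZMod 4) :=
  nonempty_cohOfCoh_addEquiv_of_even (J := fun _ : Fin 1 => ![]) (P := 1) (by decide) rfl
    (by decide) (by decide)
    (isHomologyMap_dotMod (a := 1) (z := 1) (w := 1) (U := 0) (V := 0) (c := 1)
      (by decide) (by decide) (by decide) (by decide) (by decide) (by decide))

theorem nonempty_prod_Hc_addEquiv :
    Nonempty (Hc 0 4 × Hc 1 3 × Hc 2 2 × Hc 3 1 × Hc 4 0 ≃+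
      (Fin 2 → ZMod 4) × (Fin 2 → ZMod 2)) := by
  have : Unique (Hc 0 4) := @Unique.mk' _ ⟨0⟩ subsingleton_Hc_zero_four
  obtain ⟨e₁⟩ := nonempty_Hc_one_three_addEquiv
  obtain ⟨e₂⟩ := nonempty_Hc_two_two_addEquiv
  obtain ⟨e₃⟩ := nonempty_Hc_three_one_addEquiv
  obtain ⟨e₄⟩ := nonempty_Hc_four_zero_addEquiv
  let e₂₃₄ := AddEquiv.prodAssoc.symm.trans (((e₂.prodCongr e₃).prodCongr e₄).trans
    AddEquiv.prodComm)
  exact ⟨AddEquiv.uniqueProd.trans ((e₁.prodCongr e₂₃₄).trans (AddEquiv.prodAssoc.symm.trans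
    ((LinearEquiv.finTwoArrow ℤ (ZMod 4)).symm.toAddEquiv.prodCongr
      (LinearEquiv.finTwoArrow ℤ (ZMod 2)).symm.toAddEquiv)))⟩

end SecondPage

end CrystalCohomology

theorem first_counterexample_in_degree_four :
    Nonempty (H 4 ≃+ (ZMod 4 × (Fin 3 → ZMod 2))) ∧
    Nonempty ((Hc 0 4 × Hc 1 3 × Hc 2 2 × Hc 3 1 × Hc 4 0)
      ≃+ ((Fin 2 → ZMod 4) × (Fin 2 → ZMod 2))) ∧
    ¬ Nonempty (H 4 ≃+ (Hc 0 4 × Hc 1 3 × Hc 2 2 × Hc 3 1 × Hc 4 0)) := by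
  obtain ⟨e⟩ := CrystalCohomology.nonempty_H_four_addEquiv
  obtain ⟨e'⟩ := CrystalCohomology.nonempty_prod_Hc_addEquiv
  refine ⟨⟨e⟩, ⟨e'⟩, fun ⟨f⟩ => ?_⟩
  have hcard : Nat.card (ZMod 4 × (Fin 3 → ZMod 2)) =
      Nat.card ((Fin 2 → ZMod 4) × (Fin 2 → ZMod 2)) :=
    Nat.card_congr (e.symm.trans (f.trans e')).toEquiv
  simp [Nat.card_eq_fintype_card, ZMod.card] at hcard
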